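/- arXiv:1705.00807 — 4 statements merged into one kernel-verified Lean document; each statement's English description precedes it below -/
import Mathlib

section
/- For every constant A ≥ 1 there exist a constant C > 0 and an integer N₀ (depending only on A) such that for all integers S ≥ 2 and n with N₀ ≤ n ≤ S^A, there exists an estimator L̂ : ℕ^S × ℕ^S → ℝ such that, in the two-sample Poisson sampling model with sample size n, sup_{P,Q ∈ M_S} E (L̂(X,Y) − L_1(P,Q))² ≤ C·S/(n ln n). -/
open scoped BigOperators ENNReal

/-- The Poisson(lam) probability mass function on the nonnegative integers. -/
noncomputable def poissonPMF (lam : ℝ) (k : ℕ) : ℝ :=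
  Real.exp (-lam) * lam ^ k / (Nat.factorial k)

/-- `P` is a probability vector on `{1,…,S}` (an element of `M_S`). -/
def IsDist {S : ℕ} (p : Fin S → ℝ) : Prop :=
  (∀ i, 0 ≤ p i) ∧ ∑ i, p i = 1

/-- Joint pmf of `S` independent coordinates `X_i ~ Poisson(n p_i)`. -/
noncomputable def prodPMF {S : ℕ} (n : ℕ) (p : Fin S → ℝ) (x : Fin S → ℕ) : ℝ :=
  ∏ i, poissonPMF (n * p i) (x i)

/-- Joint pmf of the two-sample Poisson model: all of
`X_i ~ Poisson(n p_i)`, `Y_i ~ Poisson(n q_i)` mutually independent. -/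
noncomputable def prodPMF2 {S : ℕ} (n : ℕ) (p q : Fin S → ℝ)
    (xy : (Fin S → ℕ) × (Fin S → ℕ)) : ℝ :=
  prodPMF n p xy.1 * prodPMF n q xy.2

/-- The `L₁` distance between two vectors. -/
noncomputable def L1dist {S : ℕ} (p q : Fin S → ℝ) : ℝ :=
  ∑ i, |p i - q i|

/-- The mean squared error `E (est(X,Y) - L)²` in the two-sample Poisson sampling model. -/
noncomputable def risk2 {S : ℕ} (n : ℕ) (p q : Fin S → ℝ) (L : ℝ)
    (est : (Fin S → ℕ) × (Fin S → ℕ) → ℝ) : ℝ≥0∞ :=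
  ∑' xy : (Fin S → ℕ) × (Fin S → ℕ),
    ENNReal.ofReal (prodPMF2 n p q xy * (est xy - L) ^ 2)

/-! A Poisson count of rate `l` can be turned into the absolute value of an `N(√l, 1/2)` variable
by a randomization that does not depend on `l`: in the mixture `∑ₖ Poisson(l){k} κ(k)`, where
`κ(k)` has density proportional to `w ^ (2 * k) * exp (-w ^ 2)`, the cross term of the Gaussian
density appears as the even series `cosh (2 * √l * w)`. From a pair of counts with rates `l` and
`m` one thus gets `N(√l, 1/2) ⊗ N(√m, 1/2)` up to signs; its difference and sum are independent
Gaussians of unit variance, and the absolute values of their means `√l - √m` and `√l + √m`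
multiply to `|l - m|`.

It remains to estimate `|u|` from one Gaussian centred at `u`. Writing `|u|` as a multiple of
`∫ w in Ioi 0, (1 - cos (w * u)) / w ^ 2`, truncating at `w ≤ W` and replacing `cos (w * u)` by
its unbiased estimator `exp (w ^ 2 / 2) * cos (w * x)` yields bias `O(1 / W)` and variance
`exp (O(W ^ 2))`, uniformly in `u`. The product of two such estimators is invariant under the
unknown signs, and averaging it over the randomization only decreases its error. Summing over the
coordinates with `W ^ 2` a small multiple of `log n` gives the rate; when `n * log n < S` the rate
exceeds a constant and the zero estimator suffices.
-/

section AbsoluteDeviation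

open MeasureTheory ProbabilityTheory Set Filter
open scoped NNReal

/-! ### The band-limited absolute value -/

/-- The integrand of `|x| = absConst⁻¹ * ∫ w in Ioi 0, absKernel 0 x w`, with the cosine multiplied
by `exp (v * w ^ 2 / 2)`. Since `∫ cos (w * x) ∂N(u, v) = exp (-(v * w ^ 2 / 2)) * cos (w * u)`,
this factor undoes the smoothing by Gaussian noise of variance `v`. -/
noncomputable def absKernel (v : ℝ≥0) (x w : ℝ) : ℝ :=
  (1 - Real.exp (v * w ^ 2 / 2) * Real.cos (w * x)) / w ^ 2

lemma absKernel_zero (x w : ℝ) : absKernel 0 x w = (1 - Real.cos (w * x)) / w ^ 2 := by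
  simp [absKernel]

lemma absKernel_zero_nonneg (x w : ℝ) : 0 ≤ absKernel 0 x w := by
  rw [absKernel_zero]
  exact div_nonneg (sub_nonneg.2 (Real.cos_le_one _)) (sq_nonneg w)

lemma absKernel_zero_le_sq_div_two (x w : ℝ) : absKernel 0 x w ≤ x ^ 2 / 2 := by
  rw [absKernel_zero]
  rcases eq_or_ne w 0 with rfl | hw
  · simp only [zero_mul, Real.cos_zero, sub_self, zero_div]
    positivity
  · rw [div_le_iff₀ (by positivity)]
    linarith [Real.one_sub_sq_div_two_le_cos (x := w * x), mul_pow w x 2]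

lemma absKernel_zero_le_rpow (x : ℝ) {w : ℝ} (hw : 0 < w) :
    absKernel 0 x w ≤ 2 * w ^ (-2 : ℝ) := by
  rw [absKernel_zero, Real.rpow_neg hw.le, Real.rpow_two, ← div_eq_mul_inv]
  gcongr
  linarith [Real.neg_one_le_cos (w * x)]

lemma measurable_uncurry_absKernel (v : ℝ≥0) : Measurable (Function.uncurry (absKernel v)) := by
  unfold absKernel Function.uncurry
  fun_prop

lemma measurable_absKernel (v : ℝ≥0) (x : ℝ) : Measurable (absKernel v x) :=
  (measurable_uncurry_absKernel v).of_uncurry_left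

lemma abs_absKernel_sub_absKernel_zero_le (v : ℝ≥0) (x : ℝ) {W w : ℝ} (hw : w ∈ Ioc 0 W) :
    |absKernel v x w - absKernel 0 x w| ≤ v * Real.exp (v * W ^ 2 / 2) / 2 := by
  have hw0 : 0 < w := hw.1
  set y : ℝ := v * w ^ 2 / 2 with hy
  have hy0 : 0 ≤ Real.exp y - 1 := sub_nonneg.2 (Real.one_le_exp (by positivity))
  have hexp : Real.exp y - 1 ≤ y * Real.exp y := by
    have h : (1 - y) * Real.exp y ≤ Real.exp (-y) * Real.exp y := by
      gcongr
      exact Real.one_sub_le_exp_neg y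
    rw [← Real.exp_add, neg_add_cancel, Real.exp_zero] at h
    linarith
  calc |absKernel v x w - absKernel 0 x w|
      = (Real.exp y - 1) / w ^ 2 * |Real.cos (w * x)| := by
        rw [absKernel_zero, absKernel, ← hy, ← sub_div,
          show (1 - Real.exp y * Real.cos (w * x)) - (1 - Real.cos (w * x))
            = -((Real.exp y - 1) * Real.cos (w * x)) by ring,
          abs_div, abs_neg, abs_mul, abs_of_nonneg hy0, abs_of_nonneg (sq_nonneg w)]
        ring
    _ ≤ y * Real.exp y / w ^ 2 * 1 := by
        gcongr
        exact Real.abs_cos_le_one _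
    _ = v * Real.exp y / 2 := by
        rw [hy]
        field_simp
    _ ≤ v * Real.exp (v * W ^ 2 / 2) / 2 := by
        rw [hy]
        gcongr
        exact hw.2

lemma abs_absKernel_le (v : ℝ≥0) (x : ℝ) {W w : ℝ} (hw : w ∈ Ioc 0 W) :
    |absKernel v x w| ≤ x ^ 2 / 2 + v * Real.exp (v * W ^ 2 / 2) / 2 := by
  calc |absKernel v x w| = |absKernel 0 x w + (absKernel v x w - absKernel 0 x w)| := by
        rw [add_sub_cancel]
    _ ≤ |absKernel 0 x w| + |absKernel v x w - absKernel 0 x w| := abs_add_le _ _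
    _ ≤ x ^ 2 / 2 + v * Real.exp (v * W ^ 2 / 2) / 2 := by
        rw [abs_of_nonneg (absKernel_zero_nonneg x w)]
        exact add_le_add (absKernel_zero_le_sq_div_two x w)
          (abs_absKernel_sub_absKernel_zero_le v x hw)

lemma integrableOn_absKernel_Ioc (v : ℝ≥0) (x W : ℝ) :
    IntegrableOn (absKernel v x) (Ioc 0 W) := by
  refine Measure.integrableOn_of_bounded measure_Ioc_lt_top.ne
    (measurable_absKernel v x).aestronglyMeasurable
    (M := x ^ 2 / 2 + v * Real.exp (v * W ^ 2 / 2) / 2) ?_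
  filter_upwards [ae_restrict_mem measurableSet_Ioc] with w hw
  exact abs_absKernel_le v x hw

lemma integrableOn_two_mul_rpow_neg_two {W : ℝ} (hW : 0 < W) :
    IntegrableOn (fun w : ℝ => 2 * w ^ (-2 : ℝ)) (Ioi W) :=
  (integrableOn_Ioi_rpow_of_lt (by norm_num) hW).const_mul 2

lemma integrableOn_absKernel_zero_Ioi (x : ℝ) {W : ℝ} (hW : 0 < W) :
    IntegrableOn (absKernel 0 x) (Ioi W) := by
  refine (integrableOn_two_mul_rpow_neg_two hW).mono'
    (measurable_absKernel 0 x).aestronglyMeasurable ?_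
  filter_upwards [ae_restrict_mem measurableSet_Ioi] with w hw
  rw [Real.norm_of_nonneg (absKernel_zero_nonneg x w)]
  exact absKernel_zero_le_rpow x (hW.trans hw)

lemma integrableOn_absKernel_zero (x : ℝ) : IntegrableOn (absKernel 0 x) (Ioi 0) := by
  rw [← Ioc_union_Ioi_eq_Ioi zero_le_one]
  exact (integrableOn_absKernel_Ioc 0 x 1).union (integrableOn_absKernel_zero_Ioi x one_pos)

lemma setIntegral_Ioi_absKernel_zero_nonneg (x W : ℝ) : 0 ≤ ∫ w in Ioi W, absKernel 0 x w :=
  integral_nonneg fun w => absKernel_zero_nonneg x w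

lemma setIntegral_Ioi_absKernel_zero_le (x : ℝ) {W : ℝ} (hW : 0 < W) :
    ∫ w in Ioi W, absKernel 0 x w ≤ 2 / W := by
  calc ∫ w in Ioi W, absKernel 0 x w ≤ ∫ w in Ioi W, 2 * w ^ (-2 : ℝ) :=
        setIntegral_mono_on (integrableOn_absKernel_zero_Ioi x hW)
          (integrableOn_two_mul_rpow_neg_two hW) measurableSet_Ioi
          fun w hw => absKernel_zero_le_rpow x (hW.trans hw)
    _ = 2 / W := by
        rw [integral_const_mul, integral_Ioi_rpow_of_lt (by norm_num) hW]
        norm_num [Real.rpow_neg_one, div_eq_mul_inv]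

/-- The constant `∫ w in Ioi 0, (1 - cos w) / w ^ 2` normalizing the cosine representation of the
absolute value. Its value is `π / 2`, but only positivity matters here. -/
noncomputable def absConst : ℝ := ∫ w in Ioi (0 : ℝ), absKernel 0 1 w

lemma absConst_pos : 0 < absConst := by
  rw [absConst, setIntegral_pos_iff_support_of_nonneg_ae
    (Eventually.of_forall (absKernel_zero_nonneg 1)) (integrableOn_absKernel_zero 1)]
  have hsub : Ioo (0 : ℝ) 1 ⊆ Function.support (absKernel 0 1) ∩ Ioi 0 := by
    refine fun w hw => ⟨?_, hw.1⟩
    have hcos : Real.cos w < 1 := by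
      rw [← Real.cos_zero]
      exact Real.cos_lt_cos_of_nonneg_of_le_pi le_rfl (by linarith [hw.2, Real.pi_gt_three]) hw.1
    rw [Function.mem_support, absKernel_zero, mul_one]
    exact (div_pos (sub_pos.2 hcos) (pow_pos hw.1 2)).ne'
  exact (by simp : 0 < volume (Ioo (0 : ℝ) 1)).trans_le (measure_mono hsub)

lemma integral_absKernel_zero (x : ℝ) : ∫ w in Ioi (0 : ℝ), absKernel 0 x w = absConst * |x| := by
  rcases eq_or_ne x 0 with rfl | hx
  · simp [absKernel]
  have hx0 : 0 < |x| := abs_pos.mpr hx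
  have hscale (w : ℝ) : absKernel 0 x w = |x| ^ 2 * absKernel 0 1 (|x| * w) := by
    have hcos : Real.cos (|x| * w) = Real.cos (w * x) := by
      rw [← Real.cos_abs (w * x), ← Real.cos_abs (|x| * w), abs_mul, abs_mul, abs_abs, mul_comm]
    rw [absKernel_zero, absKernel_zero, mul_one, hcos, mul_pow, ← mul_div_assoc,
      mul_div_mul_left _ _ (by positivity)]
  simp_rw [hscale]
  rw [integral_const_mul, integral_comp_mul_left_Ioi (absKernel 0 1) 0 hx0, mul_zero, smul_eq_mul,
    absConst]
  field_simp

/-- The band-limited absolute value: the cosine representation truncated to frequencies `w ≤ W`,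
with Gaussian noise of variance `v` deconvolved, so that `bandAbs v W` is an unbiased estimator of
`bandAbs 0 W u` from an observation of law `N(u, v)`. -/
noncomputable def bandAbs (v : ℝ≥0) (W x : ℝ) : ℝ :=
  absConst⁻¹ * ∫ w in Ioc 0 W, absKernel v x w

/-- A bound for the uniform distance between `bandAbs v W` and the absolute value. -/
noncomputable def bandAbsError (v : ℝ≥0) (W : ℝ) : ℝ :=
  absConst⁻¹ * (v * W * Real.exp (v * W ^ 2 / 2) / 2 + 2 / W)

lemma bandAbsError_zero (W : ℝ) : bandAbsError 0 W = 2 * absConst⁻¹ / W := by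
  simp only [bandAbsError, NNReal.coe_zero]
  ring

lemma abs_bandAbs_sub_abs_le (v : ℝ≥0) (x : ℝ) {W : ℝ} (hW : 0 < W) :
    |(bandAbs v W x - |x|)| ≤ bandAbsError v W := by
  have hJ := absConst_pos
  have hsplit : absConst * |x|
      = (∫ w in Ioc 0 W, absKernel 0 x w) + ∫ w in Ioi W, absKernel 0 x w := by
    rw [← integral_absKernel_zero, ← Ioc_union_Ioi_eq_Ioi hW.le]
    exact setIntegral_union (Ioc_disjoint_Ioi le_rfl) measurableSet_Ioi
      (integrableOn_absKernel_Ioc 0 x W) (integrableOn_absKernel_zero_Ioi x hW)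
  have heq : bandAbs v W x - |x| = absConst⁻¹ *
      ((∫ w in Ioc 0 W, (absKernel v x w - absKernel 0 x w))
        - ∫ w in Ioi W, absKernel 0 x w) := by
    rw [integral_sub (integrableOn_absKernel_Ioc v x W) (integrableOn_absKernel_Ioc 0 x W),
      sub_sub, ← hsplit, bandAbs]
    field_simp
  have hcorr : |∫ w in Ioc 0 W, (absKernel v x w - absKernel 0 x w)|
      ≤ v * W * Real.exp (v * W ^ 2 / 2) / 2 := by
    have hbound (w : ℝ) (hw : w ∈ Ioc 0 W) :
        ‖absKernel v x w - absKernel 0 x w‖ ≤ v * Real.exp (v * W ^ 2 / 2) / 2 :=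
      abs_absKernel_sub_absKernel_zero_le v x hw
    refine (norm_setIntegral_le_of_norm_le_const measure_Ioc_lt_top hbound).trans_eq ?_
    rw [Real.volume_real_Ioc_of_le hW.le]
    ring
  rw [heq, abs_mul, abs_of_pos (inv_pos.mpr hJ), bandAbsError]
  gcongr
  refine (abs_sub _ _).trans (add_le_add hcorr ?_)
  rw [abs_of_nonneg (setIntegral_Ioi_absKernel_zero_nonneg x W)]
  exact setIntegral_Ioi_absKernel_zero_le x hW

lemma bandAbs_neg (v : ℝ≥0) (W x : ℝ) : bandAbs v W (-x) = bandAbs v W x := by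
  simp [bandAbs, absKernel]

@[fun_prop]
lemma measurable_bandAbs (v : ℝ≥0) (W : ℝ) : Measurable (bandAbs v W) :=
  ((measurable_uncurry_absKernel v).stronglyMeasurable.integral_prod_right').measurable.const_mul _

lemma integral_cos_gaussianReal (u w : ℝ) (v : ℝ≥0) :
    ∫ x, Real.cos (w * x) ∂gaussianReal u v = Real.exp (-(v * w ^ 2 / 2)) * Real.cos (w * u) := by
  have hcos (x : ℝ) : Real.cos (w * x) = (Complex.exp (w * x * Complex.I)).re := by
    rw [← Complex.ofReal_mul, Complex.exp_ofReal_mul_I_re]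
  have hint : Integrable (fun x : ℝ => Complex.exp (w * x * Complex.I)) (gaussianReal u v) := by
    refine (integrable_const (1 : ℝ)).mono' (by fun_prop) (Eventually.of_forall fun x => ?_)
    rw [← Complex.ofReal_mul, Complex.norm_exp_ofReal_mul_I]
  simp_rw [hcos]
  have hre := integral_re hint
  simp only [RCLike.re_eq_complex_re] at hre
  rw [hre, ← charFun_apply_real, charFun_gaussianReal, Complex.exp_re]
  norm_num [← Complex.ofReal_pow, ← Complex.ofReal_mul]

lemma integrable_absKernel_prod_gaussianReal (u W : ℝ) (v : ℝ≥0) :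
    Integrable (Function.uncurry (absKernel v))
      ((gaussianReal u v).prod (volume.restrict (Ioc 0 W))) := by
  have hsq : Integrable (fun x : ℝ => x ^ 2 / 2 + v * Real.exp (v * W ^ 2 / 2) / 2)
      (gaussianReal u v) :=
    ((memLp_id_gaussianReal 2).integrable_sq.div_const 2).add (integrable_const _)
  refine (hsq.comp_fst (volume.restrict (Ioc 0 W))).mono'
    (measurable_uncurry_absKernel v).aestronglyMeasurable ?_
  filter_upwards [Measure.quasiMeasurePreserving_snd.ae (ae_restrict_mem measurableSet_Ioc)]
    with z hz
  exact abs_absKernel_le v z.1 hz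

lemma integral_bandAbs_gaussianReal (u W : ℝ) (v : ℝ≥0) :
    ∫ x, bandAbs v W x ∂gaussianReal u v = bandAbs 0 W u := by
  have hcos (w : ℝ) : Integrable (fun x => Real.cos (w * x)) (gaussianReal u v) :=
    (integrable_const (1 : ℝ)).mono' (by fun_prop)
      (Eventually.of_forall fun x => Real.abs_cos_le_one _)
  have hkernel (w : ℝ) : ∫ x, absKernel v x w ∂gaussianReal u v = absKernel 0 u w := by
    simp only [absKernel]
    rw [integral_div, integral_sub (integrable_const _) ((hcos w).const_mul _), integral_const_mul,
      integral_cos_gaussianReal, ← mul_assoc, ← Real.exp_add]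
    simp
  simp only [bandAbs]
  rw [integral_const_mul, integral_integral_swap (integrable_absKernel_prod_gaussianReal u W v)]
  simp_rw [hkernel]

/-! ### Mean squared error -/

/-- The mean squared error of `f` as an estimator of the number `c` under the law `μ`; it is
`∞` when `f` is not square integrable. -/
noncomputable def mse {Ω : Type*} [MeasurableSpace Ω] (μ : Measure Ω) (f : Ω → ℝ) (c : ℝ) : ℝ≥0∞ :=
  ∫⁻ x, ENNReal.ofReal ((f x - c) ^ 2) ∂μ

variable {Ω Ω' : Type*} [MeasurableSpace Ω] [MeasurableSpace Ω'] {μ : Measure Ω} {f : Ω → ℝ}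

lemma mse_map {f : Ω' → ℝ} (hf : Measurable f) {g : Ω → Ω'} (hg : Measurable g) (c : ℝ) :
    mse (μ.map g) f c = mse μ (f ∘ g) c :=
  lintegral_map (by fun_prop) hg

lemma mse_const_mul (a c : ℝ) (hf : Measurable f) :
    mse μ (fun x => a * f x) (a * c) = ENNReal.ofReal (a ^ 2) * mse μ f c := by
  simp only [mse]
  rw [← lintegral_const_mul _ (by fun_prop)]
  simp_rw [← mul_sub, mul_pow, ENNReal.ofReal_mul (sq_nonneg a)]

lemma memLp_two_of_mse_ne_top [IsFiniteMeasure μ] (hf : AEStronglyMeasurable f μ) {c : ℝ}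
    (h : mse μ f c ≠ ∞) : MemLp f 2 μ := by
  have hsub : MemLp (fun x => f x - c) 2 μ := by
    rw [memLp_two_iff_integrable_sq (by fun_prop)]
    refine ⟨by fun_prop, ?_⟩
    rw [hasFiniteIntegral_iff_ofReal (Eventually.of_forall fun x => sq_nonneg _)]
    exact h.lt_top
  simpa only [Pi.add_def, sub_add_cancel] using hsub.add (memLp_const c)

lemma mse_eq_variance_add_sq [IsProbabilityMeasure μ] (hf : MemLp f 2 μ) (c : ℝ) :
    mse μ f c = ENNReal.ofReal (Var[f; μ] + (∫ x, f x ∂μ - c) ^ 2) := by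
  have hsub : MemLp (fun x => f x - c) 2 μ := hf.sub (memLp_const c)
  rw [mse, ← ofReal_integral_eq_lintegral_ofReal hsub.integrable_sq
    (Eventually.of_forall fun x => sq_nonneg _), ← variance_sub_const hf.aestronglyMeasurable c,
    variance_eq_sub hsub, integral_sub (hf.integrable one_le_two) (integrable_const c)]
  simp

lemma variance_le_of_mse_le [IsProbabilityMeasure μ] (hf : AEStronglyMeasurable f μ) {c v : ℝ}
    (hv : 0 ≤ v) (h : mse μ f c ≤ ENNReal.ofReal v) : Var[f; μ] ≤ v := by
  have hf2 := memLp_two_of_mse_ne_top hf (ne_top_of_le_ne_top ENNReal.ofReal_ne_top h)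
  rw [mse_eq_variance_add_sq hf2, ENNReal.ofReal_le_ofReal_iff hv] at h
  exact (le_add_of_nonneg_right (sq_nonneg _)).trans h

lemma ofReal_sq_integral_sub_le_mse [IsProbabilityMeasure μ] (hf : AEStronglyMeasurable f μ)
    (c : ℝ) : ENNReal.ofReal ((∫ x, f x ∂μ - c) ^ 2) ≤ mse μ f c := by
  by_cases h : mse μ f c = ∞
  · exact h ▸ le_top
  · rw [mse_eq_variance_add_sq (memLp_two_of_mse_ne_top hf h)]
    exact ENNReal.ofReal_le_ofReal (le_add_of_nonneg_left (variance_nonneg f μ))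

lemma mse_integral_kernel_le {κ : Kernel Ω Ω'} [IsMarkovKernel κ] {f : Ω' → ℝ} (hf : Measurable f)
    (c : ℝ) : mse μ (fun x => ∫ y, f y ∂κ x) c ≤ mse (κ ∘ₘ μ) f c := by
  rw [mse, mse, Measure.lintegral_bind κ.aemeasurable (by fun_prop)]
  exact lintegral_mono fun x => ofReal_sq_integral_sub_le_mse hf.aestronglyMeasurable c

lemma mse_le_of_abs_sub_le [IsProbabilityMeasure μ] {g : Ω → ℝ} (hg : Measurable g) {c d B : ℝ}
    (h : ∀ x, |f x - c| ≤ |g x - d| + B) :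
    mse μ f c ≤ 2 * mse μ g d + ENNReal.ofReal (2 * B ^ 2) := by
  have hsq (x : Ω) : (f x - c) ^ 2 ≤ 2 * (g x - d) ^ 2 + 2 * B ^ 2 := by
    have := pow_le_pow_left₀ (abs_nonneg _) (h x) 2
    rw [sq_abs] at this
    nlinarith [sq_nonneg (|g x - d| - B), sq_abs (g x - d)]
  calc mse μ f c ≤ ∫⁻ x, (2 * ENNReal.ofReal ((g x - d) ^ 2) + ENNReal.ofReal (2 * B ^ 2)) ∂μ := by
        refine lintegral_mono fun x => (ENNReal.ofReal_le_ofReal (hsq x)).trans_eq ?_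
        rw [ENNReal.ofReal_add (by positivity) (by positivity), ENNReal.ofReal_mul zero_le_two,
          ENNReal.ofReal_ofNat]
    _ = 2 * mse μ g d + ENNReal.ofReal (2 * B ^ 2) := by
        rw [lintegral_add_left (by fun_prop), lintegral_const_mul _ (by fun_prop),
          lintegral_const, measure_univ, mul_one, mse]

lemma sq_mul_sub_mul_le (x y c d : ℝ) :
    (x * y - c * d) ^ 2
      ≤ 3 * ((x - c) ^ 2 * (y - d) ^ 2 + c ^ 2 * (y - d) ^ 2 + d ^ 2 * (x - c) ^ 2) := by
  have hdecomp : x * y - c * d = (x - c) * (y - d) + c * (y - d) + d * (x - c) := by ring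
  rw [hdecomp, ← mul_pow, ← mul_pow, ← mul_pow]
  generalize (x - c) * (y - d) = r, c * (y - d) = s, d * (x - c) = t
  nlinarith [sq_nonneg (r - s), sq_nonneg (r - t), sq_nonneg (s - t)]

lemma mse_mul_prod_le [IsProbabilityMeasure μ] {ν : Measure Ω'} [IsProbabilityMeasure ν]
    (hf : Measurable f) {g : Ω' → ℝ} (hg : Measurable g) {c d D E : ℝ} (hD : 0 ≤ D) (hE : 0 ≤ E)
    (hfD : mse μ f c ≤ ENNReal.ofReal D) (hgE : mse ν g d ≤ ENNReal.ofReal E) :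
    mse (μ.prod ν) (fun z => f z.1 * g z.2) (c * d)
      ≤ ENNReal.ofReal (3 * (D * E + c ^ 2 * E + d ^ 2 * D)) := by
  let e (x : Ω) : ℝ≥0∞ := ENNReal.ofReal ((f x - c) ^ 2)
  let e' (y : Ω') : ℝ≥0∞ := ENNReal.ofReal ((g y - d) ^ 2)
  have he : Measurable e := by fun_prop
  have he' : Measurable e' := by fun_prop
  have hmul : ∫⁻ z, e z.1 * e' z.2 ∂μ.prod ν = mse μ f c * mse ν g d :=
    lintegral_prod_mul he.aemeasurable he'.aemeasurable
  have hfst : ∫⁻ z, e z.1 ∂μ.prod ν = mse μ f c :=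
    measurePreserving_fst.lintegral_comp he
  have hsnd : ∫⁻ z, e' z.2 ∂μ.prod ν = mse ν g d :=
    measurePreserving_snd.lintegral_comp he'
  calc mse (μ.prod ν) (fun z => f z.1 * g z.2) (c * d)
      ≤ ∫⁻ z, 3 * (e z.1 * e' z.2 + ENNReal.ofReal (c ^ 2) * e' z.2
          + ENNReal.ofReal (d ^ 2) * e z.1) ∂μ.prod ν := by
        refine lintegral_mono fun z =>
          (ENNReal.ofReal_le_ofReal (sq_mul_sub_mul_le (f z.1) (g z.2) c d)).trans_eq ?_
        rw [ENNReal.ofReal_mul zero_le_three, ENNReal.ofReal_add (by positivity) (by positivity),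
          ENNReal.ofReal_add (by positivity) (by positivity), ENNReal.ofReal_mul (by positivity),
          ENNReal.ofReal_mul (by positivity), ENNReal.ofReal_mul (by positivity),
          ENNReal.ofReal_ofNat]
    _ = 3 * (mse μ f c * mse ν g d + ENNReal.ofReal (c ^ 2) * mse ν g d
          + ENNReal.ofReal (d ^ 2) * mse μ f c) := by
        rw [lintegral_const_mul _ (by fun_prop), lintegral_add_left (by fun_prop),
          lintegral_add_left (by fun_prop), lintegral_const_mul _ (by fun_prop),
          lintegral_const_mul _ (by fun_prop), hmul, hfst, hsnd]
    _ ≤ 3 * (ENNReal.ofReal D * ENNReal.ofReal E + ENNReal.ofReal (c ^ 2) * ENNReal.ofReal E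
          + ENNReal.ofReal (d ^ 2) * ENNReal.ofReal D) := by gcongr
    _ = ENNReal.ofReal (3 * (D * E + c ^ 2 * E + d ^ 2 * D)) := by
        rw [ENNReal.ofReal_mul zero_le_three, ENNReal.ofReal_add (by positivity) (by positivity),
          ENNReal.ofReal_add (by positivity) (by positivity), ENNReal.ofReal_mul hD,
          ENNReal.ofReal_mul (by positivity), ENNReal.ofReal_mul (by positivity),
          ENNReal.ofReal_ofNat]

lemma mse_pi_sum_le {ι : Type*} [Fintype ι] {Ω : ι → Type*} [∀ i, MeasurableSpace (Ω i)]
    {μ : ∀ i, Measure (Ω i)} [∀ i, IsProbabilityMeasure (μ i)] {f : ∀ i, Ω i → ℝ}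
    (hf : ∀ i, AEStronglyMeasurable (f i) (μ i)) {c v b : ι → ℝ} (hv : ∀ i, 0 ≤ v i)
    (hmse : ∀ i, mse (μ i) (f i) (c i) ≤ ENNReal.ofReal (v i))
    (hbias : ∀ i, (∫ x, f i x ∂μ i - c i) ^ 2 ≤ b i) :
    mse (Measure.pi μ) (fun z => ∑ i, f i (z i)) (∑ i, c i)
      ≤ ENNReal.ofReal (∑ i, v i + Fintype.card ι * ∑ i, b i) := by
  have hL2 (i : ι) : MemLp (f i) 2 (μ i) :=
    memLp_two_of_mse_ne_top (hf i) (ne_top_of_le_ne_top ENNReal.ofReal_ne_top (hmse i))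
  have hL2pi (i : ι) : MemLp (fun z => f i (z i)) 2 (Measure.pi μ) :=
    (hL2 i).comp_measurePreserving (measurePreserving_eval μ i)
  have hmean : ∫ z, ∑ i, f i (z i) ∂Measure.pi μ = ∑ i, ∫ x, f i x ∂μ i := by
    rw [integral_finsetSum _ fun i _ => (hL2pi i).integrable one_le_two]
    exact Finset.sum_congr rfl fun i _ => integral_comp_eval (hf i)
  have hvar : Var[fun z => ∑ i, f i (z i); Measure.pi μ] = ∑ i, Var[f i; μ i] := by
    rw [← variance_sum_pi hL2]
    congr with z
    simp
  rw [mse_eq_variance_add_sq (memLp_finsetSum _ fun i _ => hL2pi i), hvar, hmean,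
    ← Finset.sum_sub_distrib]
  gcongr
  · exact variance_le_of_mse_le (hf _) (hv _) (hmse _)
  · refine sq_sum_le_card_mul_sum_sq.trans ?_
    rw [Finset.card_univ]
    gcongr
    exact hbias _

/-! ### Gaussianization of Poisson counts -/

/-- The density of the square root of a `Gamma (k + 1 / 2, 1)` variable with an independent uniform
random sign. -/
noncomputable def sqrtGammaPDFReal (k : ℕ) (w : ℝ) : ℝ :=
  w ^ (2 * k) * Real.exp (-w ^ 2) / Real.Gamma (k + 1 / 2)

lemma Gamma_nat_add_half_pos (k : ℕ) : 0 < Real.Gamma (k + 1 / 2) :=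
  Real.Gamma_pos_of_pos (by positivity)

@[fun_prop]
lemma measurable_sqrtGammaPDFReal (k : ℕ) : Measurable (sqrtGammaPDFReal k) := by
  unfold sqrtGammaPDFReal
  fun_prop

lemma sqrtGammaPDFReal_nonneg (k : ℕ) (w : ℝ) : 0 ≤ sqrtGammaPDFReal k w :=
  div_nonneg (mul_nonneg (Even.pow_nonneg (even_two_mul k) w) (Real.exp_nonneg _))
    (Gamma_nat_add_half_pos k).le

lemma integrable_sqrtGammaPDFReal (k : ℕ) : Integrable (sqrtGammaPDFReal k) := by
  have hk : (-1 : ℝ) < (2 * k : ℕ) := by linarith [Nat.cast_nonneg (α := ℝ) (2 * k)]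
  have h := integrable_rpow_mul_exp_neg_mul_sq one_pos hk
  simp only [Real.rpow_natCast, neg_mul, one_mul] at h
  exact h.div_const _

lemma integral_sqrtGammaPDFReal (k : ℕ) : ∫ w, sqrtGammaPDFReal k w = 1 := by
  have hk : (-1 : ℝ) < (2 * k : ℕ) := by linarith [Nat.cast_nonneg (α := ℝ) (2 * k)]
  have hhalf : ∫ w in Ioi (0 : ℝ), w ^ (2 * k) * Real.exp (-w ^ 2)
      = 1 / 2 * Real.Gamma (k + 1 / 2) := by
    have h := integral_rpow_mul_exp_neg_rpow two_pos hk
    simp only [Real.rpow_natCast, Real.rpow_two] at h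
    rw [h]
    push_cast
    ring_nf
  have heven (w : ℝ) : w ^ (2 * k) * Real.exp (-w ^ 2)
      = |w| ^ (2 * k) * Real.exp (-|w| ^ 2) := by
    rw [(even_two_mul k).pow_abs, sq_abs]
  simp only [sqrtGammaPDFReal]
  rw [integral_div, div_eq_one_iff_eq (Gamma_nat_add_half_pos k).ne']
  rw [integral_congr_ae (Eventually.of_forall heven),
    integral_comp_abs (f := fun w : ℝ => w ^ (2 * k) * Real.exp (-w ^ 2)), hhalf]
  ring

lemma factorial_mul_Gamma_nat_add_half (k : ℕ) :
    (k.factorial : ℝ) * Real.Gamma (k + 1 / 2) * 4 ^ k = (2 * k).factorial * √Real.pi := by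
  have hfact : ((2 * k).factorial : ℝ) = 2 ^ k * k.factorial * (2 * k - 1).doubleFactorial := by
    rcases k with _ | k
    · simp
    · rw [show 2 * (k + 1) = 2 * k + 1 + 1 by ring, Nat.factorial_eq_mul_doubleFactorial,
        show 2 * k + 1 + 1 = 2 * (k + 1) by ring, Nat.doubleFactorial_two_mul]
      push_cast
      rfl
  rw [Real.Gamma_nat_add_half, hfact, show (4 : ℝ) = 2 * 2 by norm_num, mul_pow]
  field_simp

/-- The randomization of a Poisson count that turns it into an even Gaussian mixture: the law of
rate `l` is sent to the equal mixture of `N(√l, 1/2)` and `N(-√l, 1/2)`. -/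
noncomputable def gaussianization : Kernel ℕ ℝ :=
  Kernel.ofFunOfCountable fun k => volume.withDensity fun w => ENNReal.ofReal (sqrtGammaPDFReal k w)

lemma gaussianization_apply (k : ℕ) :
    gaussianization k = volume.withDensity fun w => ENNReal.ofReal (sqrtGammaPDFReal k w) :=
  rfl

instance : IsMarkovKernel gaussianization where
  isProbabilityMeasure k := ⟨by
    rw [gaussianization_apply, withDensity_apply _ MeasurableSet.univ, setLIntegral_univ,
      ← ofReal_integral_eq_lintegral_ofReal (integrable_sqrtGammaPDFReal k)
        (Eventually.of_forall (sqrtGammaPDFReal_nonneg k)), integral_sqrtGammaPDFReal,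
      ENNReal.ofReal_one]⟩

lemma gaussianPDFReal_half (a w : ℝ) :
    gaussianPDFReal a (1 / 2) w
      = (√Real.pi)⁻¹ * (Real.exp (-a ^ 2) * Real.exp (-w ^ 2) * Real.exp (2 * a * w)) := by
  have hvar : 2 * Real.pi * ((1 / 2 : ℝ≥0) : ℝ) = Real.pi := by
    push_cast
    ring
  rw [gaussianPDFReal, hvar, ← Real.exp_add, ← Real.exp_add]
  congr 2
  push_cast
  ring

lemma hasSum_poisson_mul_sqrtGammaPDFReal (a w : ℝ) :
    HasSum (fun k : ℕ => Real.exp (-a ^ 2) * (a ^ 2) ^ k / k.factorial * sqrtGammaPDFReal k w)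
      (2⁻¹ * (gaussianPDFReal a (1 / 2) w + gaussianPDFReal (-a) (1 / 2) w)) := by
  have hsum := (Real.hasSum_cosh (2 * a * w)).mul_left
    (Real.exp (-a ^ 2) * Real.exp (-w ^ 2) / √Real.pi)
  have hlimit : Real.exp (-a ^ 2) * Real.exp (-w ^ 2) / √Real.pi * Real.cosh (2 * a * w)
      = 2⁻¹ * (gaussianPDFReal a (1 / 2) w + gaussianPDFReal (-a) (1 / 2) w) := by
    rw [Real.cosh_eq, gaussianPDFReal_half, gaussianPDFReal_half, neg_sq,
      show 2 * -a * w = -(2 * a * w) by ring]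
    ring
  rw [← hlimit]
  refine hsum.congr_fun fun k => ?_
  have := Gamma_nat_add_half_pos k
  have hpow : (2 * a * w) ^ (2 * k) = 4 ^ k * (a ^ 2) ^ k * w ^ (2 * k) := by
    rw [mul_pow, mul_pow, pow_mul 2, pow_mul a]
    norm_num
  rw [sqrtGammaPDFReal, hpow, div_mul_div_comm, div_mul_div_comm,
    div_eq_div_iff (by positivity) (by positivity)]
  linear_combination (-(Real.exp (-a ^ 2) * (a ^ 2) ^ k * w ^ (2 * k) * Real.exp (-w ^ 2))) *
    factorial_mul_Gamma_nat_add_half k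

lemma gaussianization_comp_poissonMeasure (l : ℝ≥0) :
    gaussianization ∘ₘ poissonMeasure l
      = (2⁻¹ : ℝ≥0∞) • (gaussianReal (√l) (1 / 2) + gaussianReal (-√l) (1 / 2)) := by
  have hl : (√(l : ℝ)) ^ 2 = l := Real.sq_sqrt l.coe_nonneg
  have hterm (k : ℕ) : poissonMeasure l {k} • gaussianization k = volume.withDensity fun w =>
      ENNReal.ofReal (Real.exp (-√l ^ 2) * (√l ^ 2) ^ k / k.factorial * sqrtGammaPDFReal k w) := by
    rw [gaussianization_apply, poissonMeasure_singleton, ← withDensity_smul _ (by fun_prop), hl]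
    congr with w
    rw [Pi.smul_apply, smul_eq_mul, ← ENNReal.ofReal_mul (by positivity)]
  have hdensity (w : ℝ) :
      ∑' k : ℕ, ENNReal.ofReal
        (Real.exp (-√l ^ 2) * (√l ^ 2) ^ k / k.factorial * sqrtGammaPDFReal k w)
      = 2⁻¹ * (gaussianPDF (√l) (1 / 2) w + gaussianPDF (-√l) (1 / 2) w) := by
    have hsum := hasSum_poisson_mul_sqrtGammaPDFReal (√l) w
    rw [← ENNReal.ofReal_tsum_of_nonneg (fun k => mul_nonneg (by positivity)
      (sqrtGammaPDFReal_nonneg k w)) hsum.summable, hsum.tsum_eq, ENNReal.ofReal_mul (by norm_num),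
      ENNReal.ofReal_inv_of_pos two_pos, ENNReal.ofReal_ofNat,
      ENNReal.ofReal_add (gaussianPDFReal_nonneg _ _ _) (gaussianPDFReal_nonneg _ _ _)]
    rfl
  have hv : (1 / 2 : ℝ≥0) ≠ 0 := by norm_num
  rw [Measure.comp_eq_sum_of_countable]
  simp_rw [hterm]
  rw [← withDensity_tsum fun k => by fun_prop, gaussianReal_of_var_ne_zero _ hv,
    gaussianReal_of_var_ne_zero _ hv, ← withDensity_add_left (by fun_prop),
    ← withDensity_smul _ (by fun_prop)]
  congr with w
  rw [tsum_apply (Pi.summable.2 fun _ => ENNReal.summable), hdensity]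
  rfl

lemma map_abs_gaussianReal_neg (a : ℝ) (v : ℝ≥0) :
    (gaussianReal (-a) v).map (|·|) = (gaussianReal a v).map (|·|) := by
  rw [← gaussianReal_map_neg, Measure.map_map (by fun_prop) (by fun_prop)]
  congr with x
  exact abs_neg x

lemma map_abs_gaussianization_comp_poissonMeasure (l : ℝ≥0) :
    (gaussianization ∘ₘ poissonMeasure l).map (|·|) = (gaussianReal (√l) (1 / 2)).map (|·|) := by
  rw [gaussianization_comp_poissonMeasure, Measure.map_smul, Measure.map_add _ _ (by fun_prop),
    map_abs_gaussianReal_neg, ← two_smul ℝ≥0∞, smul_smul,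
    ENNReal.inv_mul_cancel two_ne_zero ENNReal.ofNat_ne_top, one_smul]

lemma parallelComp_comp_prod {α β γ δ : Type*} [MeasurableSpace α] [MeasurableSpace β]
    [MeasurableSpace γ] [MeasurableSpace δ] (μ : Measure α) [SFinite μ] (ν : Measure β) [SFinite ν]
    (κ : Kernel α γ) [IsSFiniteKernel κ] (η : Kernel β δ) [IsSFiniteKernel η] :
    (κ ∥ₖ η) ∘ₘ μ.prod ν = (κ ∘ₘ μ).prod (η ∘ₘ ν) := by
  rw [Measure.prod_comp_right, Measure.prod_comp_left, Measure.comp_assoc,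
    Kernel.parallelComp_comp_parallelComp, Kernel.comp_id, Kernel.id_comp]

lemma map_gaussianization_prod_of_comp_abs {H : ℝ × ℝ → ℝ} (hH : Measurable H)
    (heven : ∀ z : ℝ × ℝ, H (|z.1|, |z.2|) = H z) (l m : ℝ≥0) :
    ((gaussianization ∥ₖ gaussianization) ∘ₘ (poissonMeasure l).prod (poissonMeasure m)).map H
      = ((gaussianReal (√l) (1 / 2)).prod (gaussianReal (√m) (1 / 2))).map H := by
  have hcomp : H ∘ Prod.map (|·|) (|·|) = H := funext heven
  rw [← hcomp, ← Measure.map_map hH (by fun_prop), ← Measure.map_map hH (by fun_prop),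
    parallelComp_comp_prod, ← Measure.map_prod_map _ _ (by fun_prop) (by fun_prop),
    ← Measure.map_prod_map _ _ (by fun_prop) (by fun_prop),
    map_abs_gaussianization_comp_poissonMeasure, map_abs_gaussianization_comp_poissonMeasure]

lemma charFunDual_gaussianReal (a : ℝ) (v : ℝ≥0) (L : StrongDual ℝ ℝ) :
    charFunDual (gaussianReal a v) L = Complex.exp (L 1 * a * Complex.I - v * L 1 ^ 2 / 2) := by
  have hL : L a = L 1 * a := by
    rw [← mul_one a, ← smul_eq_mul a 1, map_smul, smul_eq_mul, smul_eq_mul, mul_one, mul_comm]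
  rw [charFunDual_eq_charFun_map_one, gaussianReal_map_continuousLinearMap, charFun_gaussianReal,
    hL, NNReal.coe_mul, Real.coe_toNNReal _ (sq_nonneg _)]
  push_cast
  ring_nf

lemma map_sub_add_gaussianReal_prod (a b : ℝ) (v : ℝ≥0) :
    ((gaussianReal a v).prod (gaussianReal b v)).map (fun z => (z.1 - z.2, z.1 + z.2))
      = (gaussianReal (a - b) (2 * v)).prod (gaussianReal (a + b) (2 * v)) := by
  let R : ℝ × ℝ →L[ℝ] ℝ × ℝ :=
    (ContinuousLinearMap.fst ℝ ℝ ℝ - ContinuousLinearMap.snd ℝ ℝ ℝ).prod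
      (ContinuousLinearMap.fst ℝ ℝ ℝ + ContinuousLinearMap.snd ℝ ℝ ℝ)
  change ((gaussianReal a v).prod (gaussianReal b v)).map R = _
  have hR : Measurable R := by fun_prop
  have := Measure.isProbabilityMeasure_map (μ := (gaussianReal a v).prod (gaussianReal b v))
    hR.aemeasurable
  refine Measure.ext_of_charFunDual (funext fun L => ?_)
  have hinl : L (R (1, 0)) = L (1, 0) + L (0, 1) := by
    rw [← map_add]
    simp [R]
  have hinr : L (R (0, 1)) = L (0, 1) - L (1, 0) := by
    rw [← map_sub]
    simp [R]
  rw [charFunDual_map, charFunDual_prod, charFunDual_prod]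
  simp only [charFunDual_gaussianReal, ← Complex.exp_add, ContinuousLinearMap.comp_apply,
    ContinuousLinearMap.inl_apply, ContinuousLinearMap.inr_apply, hinl, hinr]
  push_cast
  ring_nf

/-! ### Two Poisson counts -/

lemma mse_id_gaussianReal (u : ℝ) (v : ℝ≥0) :
    mse (gaussianReal u v) id u = ENNReal.ofReal v := by
  rw [mse_eq_variance_add_sq (memLp_id_gaussianReal 2), variance_id_gaussianReal]
  simp

/-- The bound on the mean squared error of `bandAbs 1 W` under a Gaussian law of variance `1`. -/
noncomputable def bandAbsMSEBound (W : ℝ) : ℝ := 2 * (1 + bandAbsError 1 W ^ 2)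

lemma bandAbsMSEBound_nonneg (W : ℝ) : 0 ≤ bandAbsMSEBound W := by
  unfold bandAbsMSEBound
  positivity

lemma mse_bandAbs_gaussianReal_le (u : ℝ) (v : ℝ≥0) {W : ℝ} (hW : 0 < W) :
    mse (gaussianReal u v) (bandAbs v W) |u|
      ≤ ENNReal.ofReal (2 * (v + bandAbsError v W ^ 2)) := by
  have hclose (x : ℝ) : |bandAbs v W x - (|u|)| ≤ |id x - u| + bandAbsError v W := by
    calc |bandAbs v W x - (|u|)| ≤ |bandAbs v W x - (|x|)| + |(|x| - |u|)| := abs_sub_le _ _ _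
      _ ≤ bandAbsError v W + |x - u| :=
        add_le_add (abs_bandAbs_sub_abs_le v x hW) (abs_abs_sub_abs_le x u)
      _ = |id x - u| + bandAbsError v W := add_comm _ _
  refine (mse_le_of_abs_sub_le measurable_id hclose).trans_eq ?_
  rw [mse_id_gaussianReal, mul_add, ENNReal.ofReal_add (by positivity) (by positivity),
    ENNReal.ofReal_mul zero_le_two, ENNReal.ofReal_mul zero_le_two, ENNReal.ofReal_ofNat]

/-- The product of band-limited absolute values whose mean under `N(√l, 1/2) ⊗ N(√m, 1/2)` is close
to `|√l - √m| * |√l + √m| = |l - m|`. -/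
noncomputable def bandAbsProd (W : ℝ) (z : ℝ × ℝ) : ℝ :=
  bandAbs 1 W (z.1 - z.2) * bandAbs 1 W (z.1 + z.2)

@[fun_prop]
lemma measurable_bandAbsProd (W : ℝ) : Measurable (bandAbsProd W) := by
  unfold bandAbsProd
  fun_prop

lemma bandAbsProd_abs (W : ℝ) (z : ℝ × ℝ) : bandAbsProd W (|z.1|, |z.2|) = bandAbsProd W z := by
  have hfst (x y : ℝ) : bandAbsProd W (-x, y) = bandAbsProd W (x, y) := by
    rw [bandAbsProd, bandAbsProd, ← neg_add', bandAbs_neg, neg_add_eq_sub,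
      ← bandAbs_neg 1 W (y - x), neg_sub, mul_comm]
  have hsnd (x y : ℝ) : bandAbsProd W (x, -y) = bandAbsProd W (x, y) := by
    rw [bandAbsProd, bandAbsProd, sub_neg_eq_add, ← sub_eq_add_neg, mul_comm]
  rcases abs_choice z.1 with h1 | h1 <;> rcases abs_choice z.2 with h2 | h2 <;>
    simp only [h1, h2, hfst, hsnd]

/-- The law of a pair of independent Poisson counts with rates `l` and `m`. -/
noncomputable abbrev poissonPair (l m : ℝ≥0) : Measure (ℕ × ℕ) :=
  (poissonMeasure l).prod (poissonMeasure m)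

lemma map_bandAbsProd_gaussianization (W : ℝ) (l m : ℝ≥0) :
    ((gaussianization ∥ₖ gaussianization) ∘ₘ poissonPair l m).map (bandAbsProd W)
      = ((gaussianReal (√l - √m) 1).prod (gaussianReal (√l + √m) 1)).map
          (fun z => bandAbs 1 W z.1 * bandAbs 1 W z.2) := by
  have hrot := map_sub_add_gaussianReal_prod (√l) (√m) (1 / 2)
  rw [mul_one_div_cancel two_ne_zero] at hrot
  rw [map_gaussianization_prod_of_comp_abs (measurable_bandAbsProd W) (bandAbsProd_abs W),
    ← hrot, Measure.map_map (by fun_prop) (by fun_prop)]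
  rfl

/-- The estimator of `|l - m|` from a pair of Poisson counts with rates `l` and `m`: the conditional
mean of `bandAbsProd W` given the counts, over the gaussianized sample. -/
noncomputable def pairEstimator (W : ℝ) (xy : ℕ × ℕ) : ℝ :=
  ∫ z, bandAbsProd W z ∂(gaussianization ∥ₖ gaussianization) xy

lemma abs_sub_eq_abs_sqrt_sub_mul_abs_sqrt_add (l m : ℝ≥0) :
    |(l - m : ℝ)| = |√(l : ℝ) - √(m : ℝ)| * |√(l : ℝ) + √(m : ℝ)| := by
  rw [← abs_mul, mul_comm, ← sq_sub_sq, Real.sq_sqrt l.coe_nonneg, Real.sq_sqrt m.coe_nonneg]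

lemma sq_sqrt_sub_add_sq_sqrt_add (l m : ℝ≥0) :
    (√(l : ℝ) - √(m : ℝ)) ^ 2 + (√(l : ℝ) + √(m : ℝ)) ^ 2 = 2 * (l + m) := by
  rw [sub_sq, add_sq, Real.sq_sqrt l.coe_nonneg, Real.sq_sqrt m.coe_nonneg]
  ring

lemma mse_bandAbsProd_le {W : ℝ} (hW : 0 < W) (l m : ℝ≥0) :
    mse ((gaussianization ∥ₖ gaussianization) ∘ₘ poissonPair l m) (bandAbsProd W) |(l - m : ℝ)|
      ≤ ENNReal.ofReal (3 * (bandAbsMSEBound W ^ 2 + 2 * (l + m) * bandAbsMSEBound W)) := by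
  have hgauss (u : ℝ) :
      mse (gaussianReal u 1) (bandAbs 1 W) |u| ≤ ENNReal.ofReal (bandAbsMSEBound W) :=
    mse_bandAbs_gaussianReal_le u 1 hW
  have hmap : mse ((gaussianization ∥ₖ gaussianization) ∘ₘ poissonPair l m) (bandAbsProd W)
        |(l - m : ℝ)|
      = mse ((gaussianReal (√l - √m) 1).prod (gaussianReal (√l + √m) 1))
          (fun z => bandAbs 1 W z.1 * bandAbs 1 W z.2) |(l - m : ℝ)| := by
    rw [← Function.id_comp (bandAbsProd W), ← mse_map measurable_id (by fun_prop),
      map_bandAbsProd_gaussianization, mse_map measurable_id (by fun_prop), Function.id_comp]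
  rw [hmap, abs_sub_eq_abs_sqrt_sub_mul_abs_sqrt_add]
  refine (mse_mul_prod_le (measurable_bandAbs 1 W) (measurable_bandAbs 1 W)
    (bandAbsMSEBound_nonneg W) (bandAbsMSEBound_nonneg W) (hgauss _) (hgauss _)).trans_eq ?_
  rw [sq_abs, sq_abs, ← sq_sqrt_sub_add_sq_sqrt_add]
  ring_nf

lemma mse_pairEstimator_le {W : ℝ} (hW : 0 < W) (l m : ℝ≥0) :
    mse (poissonPair l m) (pairEstimator W) |(l - m : ℝ)|
      ≤ ENNReal.ofReal (3 * (bandAbsMSEBound W ^ 2 + 2 * (l + m) * bandAbsMSEBound W)) :=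
  (mse_integral_kernel_le (measurable_bandAbsProd W) _).trans (mse_bandAbsProd_le hW l m)

lemma integral_pairEstimator {W : ℝ} (hW : 0 < W) (l m : ℝ≥0) :
    ∫ xy, pairEstimator W xy ∂poissonPair l m
      = bandAbs 0 W (√l - √m) * bandAbs 0 W (√l + √m) := by
  have hint : Integrable (bandAbsProd W)
      ((gaussianization ∥ₖ gaussianization) ∘ₘ poissonPair l m) :=
    (memLp_two_of_mse_ne_top (measurable_bandAbsProd W).aestronglyMeasurable
      (ne_top_of_le_ne_top ENNReal.ofReal_ne_top (mse_bandAbsProd_le hW l m))).integrable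
      one_le_two
  calc ∫ xy, pairEstimator W xy ∂poissonPair l m
      = ∫ z, bandAbsProd W z ∂((gaussianization ∥ₖ gaussianization) ∘ₘ poissonPair l m) :=
        by
        rw [Measure.comp_eq_comp_const_apply] at hint ⊢
        rw [Kernel.integral_comp hint]
        rfl
    _ = ∫ t, t ∂((gaussianization ∥ₖ gaussianization) ∘ₘ poissonPair l m).map (bandAbsProd W) := by
        rw [integral_map (by fun_prop) (by fun_prop)]
    _ = bandAbs 0 W (√l - √m) * bandAbs 0 W (√l + √m) := by
        rw [map_bandAbsProd_gaussianization, integral_map (by fun_prop) (by fun_prop),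
          integral_prod_mul, integral_bandAbs_gaussianReal, integral_bandAbs_gaussianReal]

lemma sq_integral_pairEstimator_sub_le {W : ℝ} (hW : 0 < W) (l m : ℝ≥0) :
    (∫ xy, pairEstimator W xy ∂poissonPair l m - |(l - m : ℝ)|) ^ 2
      ≤ 3 * (bandAbsError 0 W ^ 4 + 2 * (l + m) * bandAbsError 0 W ^ 2) := by
  have hsq (u : ℝ) : (bandAbs 0 W u - |u|) ^ 2 ≤ bandAbsError 0 W ^ 2 :=
    sq_le_sq.2 ((abs_bandAbs_sub_abs_le 0 u hW).trans (le_abs_self _))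
  rw [integral_pairEstimator hW, abs_sub_eq_abs_sqrt_sub_mul_abs_sqrt_add]
  refine (sq_mul_sub_mul_le _ _ _ _).trans ?_
  calc _ ≤ 3 * (bandAbsError 0 W ^ 2 * bandAbsError 0 W ^ 2
          + |√(l : ℝ) - √(m : ℝ)| ^ 2 * bandAbsError 0 W ^ 2
          + |√(l : ℝ) + √(m : ℝ)| ^ 2 * bandAbsError 0 W ^ 2) := by
        refine mul_le_mul_of_nonneg_left (add_le_add_three ?_ ?_ ?_) zero_le_three
        · exact mul_le_mul (hsq _) (hsq _) (sq_nonneg _) (sq_nonneg _)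
        · exact mul_le_mul_of_nonneg_left (hsq _) (sq_nonneg _)
        · exact mul_le_mul_of_nonneg_left (hsq _) (sq_nonneg _)
    _ = 3 * (bandAbsError 0 W ^ 4 + 2 * (l + m) * bandAbsError 0 W ^ 2) := by
        rw [sq_abs, sq_abs, ← sq_sqrt_sub_add_sq_sqrt_add]
        ring

/-! ### The Poisson model -/

lemma poissonMeasure_singleton_eq_ofReal_poissonPMF {r : ℝ} (hr : 0 ≤ r) (k : ℕ) :
    poissonMeasure r.toNNReal {k} = ENNReal.ofReal (_root_.poissonPMF r k) := by
  rw [poissonMeasure_singleton, Real.coe_toNNReal r hr, _root_.poissonPMF]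

lemma poissonPMF_nonneg {r : ℝ} (hr : 0 ≤ r) (k : ℕ) : 0 ≤ _root_.poissonPMF r k := by
  unfold _root_.poissonPMF
  positivity

lemma risk2_eq_mse {S : ℕ} (n : ℕ) {p q : Fin S → ℝ} (hp : ∀ i, 0 ≤ p i) (hq : ∀ i, 0 ≤ q i)
    (L : ℝ) (est : (Fin S → ℕ) × (Fin S → ℕ) → ℝ) :
    risk2 n p q L est
      = mse (Measure.pi fun i => poissonPair (n * p i).toNNReal (n * q i).toNNReal)
          (fun z => est (fun i => (z i).1, fun i => (z i).2)) L := by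
  have hnp (i : Fin S) : 0 ≤ n * p i := mul_nonneg n.cast_nonneg (hp i)
  have hnq (i : Fin S) : 0 ≤ n * q i := mul_nonneg n.cast_nonneg (hq i)
  have hpair (i : Fin S) (z : ℕ × ℕ) : poissonPair (n * p i).toNNReal (n * q i).toNNReal {z}
      = ENNReal.ofReal (_root_.poissonPMF (n * p i) z.1 * _root_.poissonPMF (n * q i) z.2) := by
    rw [← Prod.mk.eta (p := z), ← singleton_prod_singleton, Measure.prod_prod,
      poissonMeasure_singleton_eq_ofReal_poissonPMF (hnp i),
      poissonMeasure_singleton_eq_ofReal_poissonPMF (hnq i),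
      ← ENNReal.ofReal_mul (poissonPMF_nonneg (hnp i) _)]
  have hnonneg (i : Fin S) (z : ℕ × ℕ) :
      0 ≤ _root_.poissonPMF (n * p i) z.1 * _root_.poissonPMF (n * q i) z.2 :=
    mul_nonneg (poissonPMF_nonneg (hnp i) _) (poissonPMF_nonneg (hnq i) _)
  rw [mse, lintegral_countable', risk2,
    ← (Equiv.arrowProdEquivProdArrow (Fin S) (fun _ => ℕ) (fun _ => ℕ)).tsum_eq]
  refine tsum_congr fun z => ?_
  simp only [Measure.pi_singleton, hpair]
  rw [← ENNReal.ofReal_prod_of_nonneg fun i _ => hnonneg i (z i), Finset.prod_mul_distrib,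
    ← ENNReal.ofReal_mul (sq_nonneg _), mul_comm]
  rfl

lemma L1dist_le_two {S : ℕ} {p q : Fin S → ℝ} (hp : IsDist p) (hq : IsDist q) :
    L1dist p q ≤ 2 := by
  calc L1dist p q ≤ ∑ i, (p i + q i) := Finset.sum_le_sum fun i _ =>
        (abs_sub (p i) (q i)).trans_eq (by rw [abs_of_nonneg (hp.1 i), abs_of_nonneg (hq.1 i)])
    _ = 2 := by
        rw [Finset.sum_add_distrib, hp.2, hq.2]
        norm_num

lemma risk2_zero_le {S : ℕ} (n : ℕ) {p q : Fin S → ℝ} (hp : IsDist p) (hq : IsDist q) :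
    risk2 n p q (L1dist p q) 0 ≤ ENNReal.ofReal 4 := by
  have hnonneg : 0 ≤ L1dist p q := Finset.sum_nonneg fun i _ => abs_nonneg _
  simp only [risk2_eq_mse n hp.1 hq.1, mse, Pi.zero_apply, zero_sub, neg_sq, lintegral_const,
    measure_univ, mul_one]
  refine ENNReal.ofReal_le_ofReal ?_
  exact (pow_le_pow_left₀ hnonneg (L1dist_le_two hp hq) 2).trans_eq (by norm_num)

/-- The estimator of the `L₁` distance: the normalized sum of the estimators of
`|n * p i - n * q i|`. -/
noncomputable def l1Estimator {S : ℕ} (n : ℕ) (W : ℝ) (xy : (Fin S → ℕ) × (Fin S → ℕ)) : ℝ :=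
  (n : ℝ)⁻¹ * ∑ i, pairEstimator W (xy.1 i, xy.2 i)

lemma L1dist_eq_inv_mul_sum {S n : ℕ} (hn : n ≠ 0) (p q : Fin S → ℝ) :
    L1dist p q = (n : ℝ)⁻¹ * ∑ i, |n * p i - n * q i| := by
  simp_rw [← mul_sub, abs_mul, ← Finset.mul_sum, Nat.abs_cast]
  rw [inv_mul_cancel_left₀ (Nat.cast_ne_zero.2 hn), L1dist]

lemma risk2_l1Estimator_le {S n : ℕ} (hn : n ≠ 0) {W : ℝ} (hW : 0 < W) {p q : Fin S → ℝ}
    (hp : IsDist p) (hq : IsDist q) :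
    risk2 n p q (L1dist p q) (l1Estimator n W)
      ≤ ENNReal.ofReal ((n : ℝ)⁻¹ ^ 2 *
          (3 * (S * bandAbsMSEBound W ^ 2 + 4 * n * bandAbsMSEBound W)
            + S * (3 * (S * bandAbsError 0 W ^ 4 + 4 * n * bandAbsError 0 W ^ 2)))) := by
  let l (i : Fin S) : ℝ≥0 := (n * p i).toNNReal
  let m (i : Fin S) : ℝ≥0 := (n * q i).toNNReal
  have hl (i : Fin S) : (l i : ℝ) = n * p i :=
    Real.coe_toNNReal _ (mul_nonneg n.cast_nonneg (hp.1 i))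
  have hm (i : Fin S) : (m i : ℝ) = n * q i :=
    Real.coe_toNNReal _ (mul_nonneg n.cast_nonneg (hq.1 i))
  have hsum (a b : ℝ) :
      ∑ i, 3 * (a + 2 * (l i + m i) * b) = 3 * (S * a + 4 * n * b) := by
    simp_rw [hl, hm]
    rw [← Finset.mul_sum, Finset.sum_add_distrib, ← Finset.sum_mul, ← Finset.mul_sum,
      Finset.sum_add_distrib, ← Finset.mul_sum, ← Finset.mul_sum, hp.2, hq.2, Finset.sum_const,
      Finset.card_univ, Fintype.card_fin, nsmul_eq_mul]
    ring
  have hnonneg (i : Fin S) :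
      0 ≤ 3 * (bandAbsMSEBound W ^ 2 + 2 * (l i + m i) * bandAbsMSEBound W) := by
    have := bandAbsMSEBound_nonneg W
    positivity
  have hpi := mse_pi_sum_le (μ := fun i => poissonPair (l i) (m i)) (f := fun _ => pairEstimator W)
    (fun _ => (measurable_of_countable _).aestronglyMeasurable) hnonneg
    (fun i => mse_pairEstimator_le hW (l i) (m i))
    (fun i => sq_integral_pairEstimator_sub_le hW (l i) (m i))
  rw [hsum, hsum, Fintype.card_fin] at hpi
  simp only [hl, hm] at hpi
  rw [risk2_eq_mse n hp.1 hq.1, L1dist_eq_inv_mul_sum hn, ENNReal.ofReal_mul (by positivity)]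
  exact (mse_const_mul _ _ (measurable_of_countable _)).trans_le (mul_le_mul_right hpi _)

lemma bandAbsError_one_le {W : ℝ} (hW : 1 ≤ W) :
    bandAbsError 1 W ≤ 3 * absConst⁻¹ * Real.exp (W ^ 2) := by
  have hJ := absConst_pos
  have hsplit : Real.exp (W ^ 2) = Real.exp (W ^ 2 / 2) * Real.exp (W ^ 2 / 2) := by
    rw [← Real.exp_add, add_halves]
  have hWexp : W ≤ Real.exp (W ^ 2 / 2) := by
    nlinarith [Real.add_one_le_exp (W ^ 2 / 2), sq_nonneg (W - 1)]
  have hmain : W * Real.exp (W ^ 2 / 2) ≤ Real.exp (W ^ 2) := by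
    rw [hsplit]
    gcongr
  have htail : 2 / W ≤ 2 * Real.exp (W ^ 2) :=
    (div_le_self zero_le_two hW).trans
      (le_mul_of_one_le_right zero_le_two (Real.one_le_exp (sq_nonneg W)))
  calc bandAbsError 1 W = absConst⁻¹ * (W * Real.exp (W ^ 2 / 2) / 2 + 2 / W) := by
        rw [bandAbsError, NNReal.coe_one, one_mul, one_mul]
    _ ≤ absConst⁻¹ * (3 * Real.exp (W ^ 2)) := by
        gcongr
        linarith [Real.exp_pos (W ^ 2)]
    _ = 3 * absConst⁻¹ * Real.exp (W ^ 2) := by ring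

lemma one_le_bandAbsMSEBound (W : ℝ) : 1 ≤ bandAbsMSEBound W := by
  rw [bandAbsMSEBound]
  linarith [sq_nonneg (bandAbsError 1 W)]

lemma bandAbsMSEBound_le {W : ℝ} (hW : 1 ≤ W) :
    bandAbsMSEBound W ≤ (2 + 18 * absConst⁻¹ ^ 2) * Real.exp (2 * W ^ 2) := by
  have hJ := absConst_pos
  have hexp : Real.exp (W ^ 2) ^ 2 = Real.exp (2 * W ^ 2) := by
    rw [← Real.exp_nat_mul, Nat.cast_ofNat]
  have hone : 1 ≤ Real.exp (2 * W ^ 2) := Real.one_le_exp (by positivity)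
  have herror : 0 ≤ bandAbsError 1 W := by
    have := zero_lt_one.trans_le hW
    unfold bandAbsError
    positivity
  calc bandAbsMSEBound W ≤ 2 * (1 + (3 * absConst⁻¹ * Real.exp (W ^ 2)) ^ 2) := by
        unfold bandAbsMSEBound
        gcongr
        exact bandAbsError_one_le hW
    _ = 2 + 18 * absConst⁻¹ ^ 2 * Real.exp (2 * W ^ 2) := by
        rw [mul_pow, mul_pow, hexp]
        ring
    _ ≤ (2 + 18 * absConst⁻¹ ^ 2) * Real.exp (2 * W ^ 2) := by linarith

/-- The band limit `W` of the estimator: the squared approximation error `≍ W⁻²` is of order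
`1 / log n`, while the squared variance bound `≍ exp (4 * W ^ 2)` is only `n ^ (2 * A)⁻¹`. -/
noncomputable def bandwidth (A n : ℝ) : ℝ := √(Real.log n / (8 * A))

lemma one_le_bandwidth {A n : ℝ} (hA : 0 < A) (hn : 8 * A ≤ Real.log n) : 1 ≤ bandwidth A n := by
  rw [bandwidth, Real.one_le_sqrt, one_le_div (by positivity)]
  exact hn

lemma sq_bandwidth {A n : ℝ} (hA : 0 < A) (hn : 1 ≤ n) :
    bandwidth A n ^ 2 = Real.log n / (8 * A) :=
  Real.sq_sqrt (div_nonneg (Real.log_nonneg hn) (by positivity))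

/-- The coefficient of `n ^ A⁻¹` in the bound for `log n` times the squared variance bound. -/
noncomputable def varianceConst (A : ℝ) : ℝ := 2 * A * (2 + 18 * absConst⁻¹ ^ 2) ^ 2

/-- The product of `log n` and the squared approximation error at `bandwidth A n`. -/
noncomputable def biasConst (A : ℝ) : ℝ := 32 * A * absConst⁻¹ ^ 2

lemma sq_bandAbsError_bandwidth {A n : ℝ} (hA : 0 < A) (hn : 1 < n) :
    bandAbsError 0 (bandwidth A n) ^ 2 = biasConst A / Real.log n := by
  have hlog := Real.log_pos hn
  rw [bandAbsError_zero, div_pow, sq_bandwidth hA hn.le, biasConst]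
  field_simp
  ring

lemma sq_bandAbsMSEBound_bandwidth_mul_log_le {A n : ℝ} (hA : 0 < A) (hn : 1 ≤ n)
    (hlog : 8 * A ≤ Real.log n) :
    bandAbsMSEBound (bandwidth A n) ^ 2 * Real.log n ≤ varianceConst A * n ^ A⁻¹ := by
  have hn0 : 0 < n := zero_lt_one.trans_le hn
  have hexp : Real.exp (2 * bandwidth A n ^ 2) ^ 2 = n ^ (2 * A)⁻¹ := by
    rw [← Real.exp_nat_mul, Real.rpow_def_of_pos hn0, sq_bandwidth hA hn]
    congr 1
    field_simp
    ring
  have hlogle : Real.log n ≤ 2 * A * n ^ (2 * A)⁻¹ := by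
    have := Real.log_le_rpow_div hn0.le (inv_pos.2 (by positivity : 0 < 2 * A))
    rwa [div_inv_eq_mul, mul_comm] at this
  calc bandAbsMSEBound (bandwidth A n) ^ 2 * Real.log n
      ≤ ((2 + 18 * absConst⁻¹ ^ 2) * Real.exp (2 * bandwidth A n ^ 2)) ^ 2
          * (2 * A * n ^ (2 * A)⁻¹) := by
        have := bandAbsMSEBound_nonneg (bandwidth A n)
        gcongr
        · exact Real.log_nonneg hn
        · exact bandAbsMSEBound_le (one_le_bandwidth hA hlog)
    _ = varianceConst A * (n ^ (2 * A)⁻¹ * n ^ (2 * A)⁻¹) := by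
        rw [mul_pow, hexp, varianceConst]
        ring
    _ = varianceConst A * n ^ A⁻¹ := by
        rw [← Real.rpow_add hn0]
        congr 2
        field_simp
        norm_num

lemma variance_terms_le {s n ℓ c D : ℝ} (hs : 0 ≤ s) (hn : 0 < n) (hℓ : 0 < ℓ) (hD : 1 ≤ D)
    (hDn : D ^ 2 * ℓ ≤ c * n) (hDs : D ^ 2 * ℓ ≤ c * s) :
    n⁻¹ ^ 2 * (3 * (s * D ^ 2 + 4 * n * D)) ≤ 15 * c * (s / (n * ℓ)) := by
  have hDD : D ≤ D ^ 2 := le_self_pow₀ hD two_ne_zero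
  calc n⁻¹ ^ 2 * (3 * (s * D ^ 2 + 4 * n * D))
      ≤ n⁻¹ ^ 2 * (3 * (s * D ^ 2 + 4 * n * D ^ 2)) := by gcongr
    _ = n⁻¹ ^ 2 * (3 * (s * (D ^ 2 * ℓ) + 4 * n * (D ^ 2 * ℓ))) / ℓ := by field_simp
    _ ≤ n⁻¹ ^ 2 * (3 * (s * (c * n) + 4 * n * (c * s))) / ℓ := by gcongr
    _ = 15 * c * (s / (n * ℓ)) := by
        field_simp
        ring

lemma bias_terms_le {s n ℓ G δ : ℝ} (hs : 0 ≤ s) (hn : 0 < n) (hℓ : 0 < ℓ)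
    (hδ : δ ^ 2 = G / ℓ) (hsn : s ≤ n * ℓ) :
    n⁻¹ ^ 2 * (s * (3 * (s * δ ^ 4 + 4 * n * δ ^ 2)))
      ≤ (12 * G + 3 * G ^ 2) * (s / (n * ℓ)) := by
  have hratio : s / (n * ℓ) ≤ 1 := div_le_one_of_le₀ hsn (by positivity)
  calc n⁻¹ ^ 2 * (s * (3 * (s * δ ^ 4 + 4 * n * δ ^ 2)))
      = 12 * G * (s / (n * ℓ)) + 3 * G ^ 2 * (s / (n * ℓ) * (s / (n * ℓ))) := by
        rw [show δ ^ 4 = (δ ^ 2) ^ 2 by ring, hδ]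
        field_simp
        ring
    _ ≤ 12 * G * (s / (n * ℓ)) + 3 * G ^ 2 * (s / (n * ℓ) * 1) := by gcongr
    _ = (12 * G + 3 * G ^ 2) * (s / (n * ℓ)) := by ring

/-- The constant in the risk bound; the summand `4` covers the zero estimator, which is used when
`n * log n < S`. -/
noncomputable def riskConst (A : ℝ) : ℝ :=
  15 * varianceConst A + (12 * biasConst A + 3 * biasConst A ^ 2) + 4

lemma four_le_riskConst {A : ℝ} (hA : 0 ≤ A) : 4 ≤ riskConst A := by
  have hJ := absConst_pos
  unfold riskConst varianceConst biasConst
  exact le_add_of_nonneg_left (by positivity)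

lemma risk2_l1Estimator_bandwidth_le {A : ℝ} (hA : 1 ≤ A) {S n : ℕ} (hn : 8 * A ≤ Real.log n)
    (hnS : (n : ℝ) ≤ (S : ℝ) ^ A) (hSn : (S : ℝ) ≤ n * Real.log n) {p q : Fin S → ℝ}
    (hp : IsDist p) (hq : IsDist q) :
    risk2 n p q (L1dist p q) (l1Estimator n (bandwidth A n))
      ≤ ENNReal.ofReal (riskConst A * S / (n * Real.log n)) := by
  have hA0 : 0 < A := zero_lt_one.trans_le hA
  have hlog : 0 < Real.log n := lt_of_lt_of_le (by positivity) hn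
  have hn1 : 1 < (n : ℝ) := (Real.log_pos_iff n.cast_nonneg).1 hlog
  have hn0 : 0 < (n : ℝ) := zero_lt_one.trans hn1
  have hW := zero_lt_one.trans_le (one_le_bandwidth hA0 hn)
  have hrootn : (n : ℝ) ^ A⁻¹ ≤ n := Real.rpow_le_self_of_one_le hn1.le (inv_le_one_of_one_le₀ hA)
  have hrootS : (n : ℝ) ^ A⁻¹ ≤ S :=
    (Real.rpow_inv_le_iff_of_pos n.cast_nonneg S.cast_nonneg hA0).2 hnS
  have hc : 0 ≤ varianceConst A := by
    unfold varianceConst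
    positivity
  have hD := sq_bandAbsMSEBound_bandwidth_mul_log_le hA0 hn1.le hn
  refine (risk2_l1Estimator_le (Nat.cast_pos.1 hn0).ne' hW hp hq).trans
    (ENNReal.ofReal_le_ofReal ?_)
  have hvar := variance_terms_le S.cast_nonneg hn0 hlog (one_le_bandAbsMSEBound _)
    (hD.trans (by gcongr)) (hD.trans (by gcongr))
  have hbias := bias_terms_le S.cast_nonneg hn0 hlog (sq_bandAbsError_bandwidth hA0 hn1) hSn
  rw [mul_add, mul_div_assoc, riskConst, add_mul, add_mul]
  exact (add_le_add hvar hbias).trans (le_add_of_nonneg_right (by positivity))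

lemma risk2_zero_le_of_lt {A : ℝ} (hA : 0 ≤ A) {S n : ℕ} (hn : 0 < n * Real.log n)
    (hSn : n * Real.log n < S) {p q : Fin S → ℝ} (hp : IsDist p) (hq : IsDist q) :
    risk2 n p q (L1dist p q) 0 ≤ ENNReal.ofReal (riskConst A * S / (n * Real.log n)) := by
  refine (risk2_zero_le n hp hq).trans (ENNReal.ofReal_le_ofReal ?_)
  rw [le_div_iff₀ hn]
  have hconst := four_le_riskConst hA
  exact mul_le_mul hconst hSn.le hn.le (zero_le_four.trans hconst)

end AbsoluteDeviation

/-- achievability in the unknown-`Q` case — an estimator with worst-case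
risk at most `C·S/(n ln n)` whenever `N₀ ≤ n ≤ S^A`. -/
theorem optimal_estimator_unknownQ (A : ℝ) (hA : 1 ≤ A) :
    ∃ C : ℝ, ∃ N₀ : ℕ, 0 < C ∧
      ∀ S n : ℕ, 2 ≤ S → N₀ ≤ n → (n : ℝ) ≤ (S : ℝ) ^ A →
        ∃ est : (Fin S → ℕ) × (Fin S → ℕ) → ℝ,
          ∀ p q : Fin S → ℝ, IsDist p → IsDist q →
            risk2 n p q (L1dist p q) est ≤ ENNReal.ofReal (C * S / (n * Real.log n)) := by
  have hA0 : 0 ≤ A := zero_le_one.trans hA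
  refine ⟨riskConst A, ⌈Real.exp (8 * A)⌉₊, four_pos.trans_le (four_le_riskConst hA0), ?_⟩
  intro S n _ hN hnS
  have hexp : Real.exp (8 * A) ≤ n := Nat.ceil_le.1 hN
  have hn : (0 : ℝ) < n := (Real.exp_pos _).trans_le hexp
  have hlog : 8 * A ≤ Real.log n := (Real.le_log_iff_exp_le hn).2 hexp
  rcases le_or_gt (S : ℝ) (n * Real.log n) with hSn | hSn
  · exact ⟨l1Estimator n (bandwidth A n), fun p q hp hq =>
      risk2_l1Estimator_bandwidth_le hA hlog hnS hSn hp hq⟩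
  · exact ⟨0, fun p q hp hq =>
      risk2_zero_le_of_lt hA0 (mul_pos hn (by linarith)) hSn hp hq⟩
end

section
/- There exists a universal constant M > 0 such that for every integer K ≥ 1 the following holds. Let u and v be real bivariate polynomials of degree at most K in each variable such that sup_{(x,y)∈[0,1]²} |u(x,y) − (√x + √y)| equals the infimum of sup_{(x,y)∈[0,1]²} |P(x,y) − (√x + √y)| over all bivariate polynomials P of degree at most K in each variable, and sup_{(x,y)∈[0,1]²} |v(x,y) − |√x − √y|| equals the corresponding infimum for the function |√x − √y|. Then for all (x,y) ∈ [0,1]²: |u(x,y)·v(x,y) − u(0,0)·v(0,0) − |x − y|| ≤ M·( (√x + √y)/K + 1/K² ). -/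
open scoped BigOperators

/-- A bivariate polynomial of degree at most `K` in each variable:
an element of the span of the monomials `x^i y^j` with `0 ≤ i, j ≤ K`. -/
def IsBivarPoly (K : ℕ) (u : ℝ → ℝ → ℝ) : Prop :=
  ∃ c : Fin (K + 1) → Fin (K + 1) → ℝ, ∀ x y : ℝ,
    u x y = ∑ i : Fin (K + 1), ∑ j : Fin (K + 1), c i j * x ^ (i : ℕ) * y ^ (j : ℕ)

/-- The uniform approximation error of `w` to `f` on the unit square `[0,1]²`. -/
noncomputable def sqErr (w f : ℝ → ℝ → ℝ) : ℝ :=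
  ⨆ z : (Set.Icc (0:ℝ) 1) × (Set.Icc (0:ℝ) 1), |w (z.1 : ℝ) (z.2 : ℝ) - f (z.1 : ℝ) (z.2 : ℝ)|

/-!
Write `√x = |cos (t / 2)|`. Averaging a function of `√x` against the Fejér–Korovkin kernel of
degree `K`, centred at `K + 2` equispaced angles, gives a polynomial of degree at most `K` in `x`
and moves `√x` by `O(1/K)` on average. Doing this in each variable approximates every Lipschitz
function of `(√x, √y)` uniformly with error `O(1/K)`, so `u` and `v` are within `O(1/K)` of
`f = √x + √y` and `g = |√x − √y|`. Since `f g = |x − y|` and `g ≤ f`, the product `u v` differs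
from `|x − y|` by `O(f / K + 1 / K²)`, and at the origin, where `f = g = 0`, only the
second-order term is left.
-/

open Finset Polynomial Real

theorem sum_cos_add_two_pi_mul_div_eq_zero {M : ℕ} {m : ℤ} (hm : ¬(M : ℤ) ∣ m) (ψ : ℝ) :
    ∑ i ∈ range M, cos (ψ + 2 * π * m * i / M) = 0 := by
  rcases eq_or_ne M 0 with rfl | hM
  · simp
  have hM' : (M : ℂ) ≠ 0 := by exact_mod_cast hM
  set ζ : ℂ := Complex.exp (2 * π * Complex.I / M) with hζ
  have hprim : IsPrimitiveRoot ζ M := Complex.isPrimitiveRoot_exp M hM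
  have hne : ζ ^ m ≠ 1 := fun h ↦ hm ((hprim.zpow_eq_one_iff_dvd m).1 h)
  have hpow : (ζ ^ m) ^ M = 1 := by
    rw [← zpow_natCast, ← zpow_mul, mul_comm, zpow_mul, zpow_natCast, hprim.pow_eq_one, one_zpow]
  have hgeom : ∑ i ∈ range M, (ζ ^ m) ^ i = 0 := by
    rw [geom_sum_eq hne, hpow, sub_self, zero_div]
  have hterm (i : ℕ) :
      cos (ψ + 2 * π * m * i / M) = (Complex.exp (ψ * Complex.I) * (ζ ^ m) ^ i).re := by
    rw [← Complex.exp_ofReal_mul_I_re, hζ, ← Complex.exp_int_mul, ← Complex.exp_nat_mul,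
      ← Complex.exp_add]
    congr 2
    push_cast
    field_simp
  simp only [hterm]
  rw [← Complex.re_sum, ← mul_sum, hgeom, mul_zero, Complex.zero_re]

/-- The nonnegative trigonometric polynomial `|∑_{k<n} a_k e^{ikt}|²`. -/
noncomputable def trigKernel (a : ℕ → ℝ) (n : ℕ) (t : ℝ) : ℝ :=
  ‖∑ k ∈ range n, (a k : ℂ) * Complex.exp (Complex.I * t) ^ k‖ ^ 2

theorem trigKernel_nonneg (a : ℕ → ℝ) (n : ℕ) (t : ℝ) : 0 ≤ trigKernel a n t := by
  unfold trigKernel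
  positivity

theorem trigKernel_eq_sum_cos (a : ℕ → ℝ) (n : ℕ) (t : ℝ) :
    trigKernel a n t = ∑ k ∈ range n, ∑ l ∈ range n, a k * a l * cos (((k : ℤ) - l : ℤ) * t) := by
  have hterm (k l : ℕ) :
      ((a k : ℂ) * Complex.exp (Complex.I * t) ^ k *
        starRingEnd ℂ ((a l : ℂ) * Complex.exp (Complex.I * t) ^ l)).re =
      a k * a l * cos (((k : ℤ) - l : ℤ) * t) := by
    rw [← Complex.exp_nat_mul, ← Complex.exp_nat_mul, map_mul, ← Complex.exp_conj,
      mul_mul_mul_comm, ← Complex.exp_add, Complex.conj_ofReal, ← Complex.ofReal_mul,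
      Complex.re_ofReal_mul, ← Complex.exp_ofReal_mul_I_re]
    congr 3
    simp only [map_mul, map_natCast, Complex.conj_I, Complex.conj_ofReal]
    push_cast
    ring
  rw [trigKernel, ← Complex.ofReal_re (‖_‖ ^ 2), Complex.ofReal_pow, ← Complex.mul_conj', map_sum,
    sum_mul_sum]
  simp only [Complex.re_sum, hterm]

theorem sum_trigKernel {n M : ℕ} (hn : n ≤ M) (a : ℕ → ℝ) (t : ℝ) :
    ∑ i ∈ range M, trigKernel a n (t + 2 * π * i / M) = M * ∑ k ∈ range n, a k ^ 2 := by
  have hcos {k l : ℕ} (hk : k ∈ range n) (hl : l ∈ range n) (hne : l ≠ k) :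
      ∑ i ∈ range M, cos (((k : ℤ) - l : ℤ) * (t + 2 * π * i / M)) = 0 := by
    rw [mem_range] at hk hl
    have hdvd : ¬(M : ℤ) ∣ (k : ℤ) - l := fun h ↦
      hne (by have := Int.eq_zero_of_abs_lt_dvd h (by rw [abs_lt]; omega); omega)
    rw [← sum_cos_add_two_pi_mul_div_eq_zero hdvd (((k : ℤ) - l : ℤ) * t)]
    exact sum_congr rfl fun i _ ↦ by ring_nf
  simp only [trigKernel_eq_sum_cos]
  rw [sum_comm, mul_sum]
  refine sum_congr rfl fun k hk ↦ ?_
  rw [sum_comm, sum_eq_single_of_mem k hk fun l hl hne ↦ by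
    rw [← mul_sum, hcos hk hl hne, mul_zero]]
  simp only [sub_self, Int.cast_zero, zero_mul, cos_zero, sum_const, card_range, nsmul_eq_mul]
  ring

theorem sub_one_mul_sum_range_mul_pow {R : Type*} [CommRing R] (s : ℕ → R) (n : ℕ) (z : R) :
    (z - 1) * ∑ k ∈ range n, s (k + 1) * z ^ k =
      s (n + 1) * z ^ n - s 0 - ∑ k ∈ range (n + 1), (s (k + 1) - s k) * z ^ k := by
  induction n with
  | zero => simp
  | succ n ih =>
    rw [sum_range_succ, mul_add, ih, sum_range_succ _ (n + 1)]
    ring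

theorem sum_range_sin_sq_mul_pi_div {M : ℕ} (hM : 2 ≤ M) :
    ∑ k ∈ range M, sin (k * π / M) ^ 2 = M / 2 := by
  have hcos := sum_cos_add_two_pi_mul_div_eq_zero (M := M) (m := 1)
    (fun h ↦ by have := Int.le_of_dvd one_pos h; omega) 0
  have hterm (k : ℕ) : sin (k * π / M) ^ 2 = 1 / 2 - cos (0 + 2 * π * (1 : ℤ) * k / M) / 2 := by
    rw [sin_sq_eq_half_sub]
    push_cast
    ring_nf
  simp only [hterm, sum_sub_distrib, ← sum_div, hcos, sum_const, card_range, nsmul_eq_mul]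
  ring

theorem sum_range_cos_sq_odd_mul_pi_div {M : ℕ} (hM : 2 ≤ M) :
    ∑ k ∈ range M, cos ((2 * k + 1) * (π / (2 * M))) ^ 2 = M / 2 := by
  have hcos := sum_cos_add_two_pi_mul_div_eq_zero (M := M) (m := 1)
    (fun h ↦ by have := Int.le_of_dvd one_pos h; omega) (π / M)
  have hterm (k : ℕ) : cos ((2 * k + 1) * (π / (2 * M))) ^ 2 =
      1 / 2 + cos (π / M + 2 * π * (1 : ℤ) * k / M) / 2 := by
    rw [cos_sq]
    push_cast
    ring_nf
  simp only [hterm, sum_add_distrib, ← sum_div, hcos, sum_const, card_range, nsmul_eq_mul]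
  ring

/-- The coefficients of the Fejér–Korovkin kernel of degree `K`: the half-period of the sine
sampled at its interior nodes, so that the sequence extends by `0` at both ends. -/
noncomputable def korovkinCoeff (K k : ℕ) : ℝ :=
  sin ((k + 1 : ℕ) * π / (K + 2 : ℕ))

/-- The Fejér–Korovkin kernel of degree `K`, left unnormalised. -/
noncomputable def korovkinKernel (K : ℕ) : ℝ → ℝ :=
  trigKernel (korovkinCoeff K) (K + 1)

/-- The equispaced angles at which the Fejér–Korovkin kernel is centred. -/
noncomputable def korovkinAngle (K i : ℕ) : ℝ :=
  2 * π * i / (K + 2 : ℕ)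

-- Multiplying `∑ s_k z^k` by `z - 1` takes differences of the coefficients, and the differences of
-- equispaced sines are equispaced cosines times a small constant.
theorem sin_sq_mul_korovkinKernel (K : ℕ) (t : ℝ) :
    sin (t / 2) ^ 2 * korovkinKernel K t =
      sin (π / (2 * (K + 2 : ℕ))) ^ 2 *
        trigKernel (fun k ↦ cos ((2 * k + 1) * (π / (2 * (K + 2 : ℕ))))) (K + 2) t := by
  set M : ℕ := K + 2
  have hM0 : (M : ℝ) ≠ 0 := by positivity
  set z : ℂ := Complex.exp (Complex.I * t) with hz
  let s (k : ℕ) : ℝ := sin (k * π / M)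
  have hdiff (k : ℕ) :
      s (k + 1) - s k = 2 * sin (π / (2 * M)) * cos ((2 * k + 1) * (π / (2 * M))) := by
    simp only [s]
    rw [sin_sub_sin]
    congr 3
    · push_cast; field_simp; ring
    · push_cast; field_simp; ring
  have hs0 : s 0 = 0 := by simp [s]
  have hsM : s M = 0 := by simp only [s]; rw [mul_div_cancel_left₀ _ hM0, sin_pi]
  have habel : (z - 1) * ∑ k ∈ range (K + 1), (s (k + 1) : ℂ) * z ^ k =
      (-(2 * sin (π / (2 * M))) : ℝ) *
        ∑ k ∈ range M, (cos ((2 * k + 1) * (π / (2 * M))) : ℂ) * z ^ k := by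
    rw [sub_one_mul_sum_range_mul_pow (fun k ↦ (s k : ℂ)), mul_sum, hs0,
      show K + 1 + 1 = M from rfl, hsM]
    simp only [← Complex.ofReal_sub, hdiff, Complex.ofReal_zero, zero_mul, sub_zero, zero_sub,
      ← sum_neg_distrib]
    exact sum_congr rfl fun k _ ↦ by push_cast; ring
  have hnorm := congrArg (fun w : ℂ ↦ ‖w‖ ^ 2 / 4) habel
  simp only [norm_mul, mul_pow, hz, Complex.norm_exp_I_mul_ofReal_sub_one, Complex.norm_real,
    norm_eq_abs, sq_abs] at hnorm
  simp only [korovkinKernel, korovkinCoeff, trigKernel]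
  linear_combination hnorm

theorem sum_korovkinKernel (K : ℕ) (t : ℝ) :
    ∑ i ∈ range (K + 2), korovkinKernel K (t + korovkinAngle K i) = (K + 2 : ℕ) ^ 2 / 2 := by
  have hsq : ∑ k ∈ range (K + 1), korovkinCoeff K k ^ 2 = (K + 2 : ℕ) / 2 := by
    rw [← sum_range_sin_sq_mul_pi_div (Nat.le_add_left 2 K), sum_range_succ' _ (K + 1)]
    simp [korovkinCoeff]
  simp only [korovkinKernel, korovkinAngle]
  rw [sum_trigKernel (Nat.le_succ _), hsq]
  ring

theorem sum_korovkinKernel_mul_sin_sq (K : ℕ) (t : ℝ) :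
    ∑ i ∈ range (K + 2), korovkinKernel K (t + korovkinAngle K i) *
        sin ((t + korovkinAngle K i) / 2) ^ 2 =
      (K + 2 : ℕ) ^ 2 / 2 * sin (π / (2 * (K + 2 : ℕ))) ^ 2 := by
  simp only [mul_comm (korovkinKernel K _), sin_sq_mul_korovkinKernel, korovkinAngle]
  rw [← mul_sum, sum_trigKernel le_rfl, sum_range_cos_sq_odd_mul_pi_div (Nat.le_add_left 2 K)]
  ring

/-- The algebraic polynomial in `x = cos² (t / 2)` that equals the even part of
`t ↦ trigKernel a n (t + β)`. -/
noncomputable def trigKernelPoly (a : ℕ → ℝ) (n : ℕ) (β : ℝ) : ℝ[X] :=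
  ∑ k ∈ range n, ∑ l ∈ range n,
    C (a k * a l * cos (((k : ℤ) - l : ℤ) * β)) *
      (Chebyshev.T ℝ ((k : ℤ) - l)).comp (C 2 * X - C 1)

theorem natDegree_trigKernelPoly_le (a : ℕ → ℝ) (n : ℕ) (β : ℝ) :
    (trigKernelPoly a n β).natDegree ≤ n - 1 := by
  refine natDegree_sum_le_of_forall_le _ _ fun k hk ↦ ?_
  refine natDegree_sum_le_of_forall_le _ _ fun l hl ↦ ?_
  have hlin : (C (2 : ℝ) * X - C 1).natDegree ≤ 1 := by compute_degree
  have hkl : ((k : ℤ) - l).natAbs ≤ n - 1 := by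
    rw [mem_range] at hk hl
    omega
  calc
    _ ≤ ((Chebyshev.T ℝ ((k : ℤ) - l)).comp (C 2 * X - C 1)).natDegree := natDegree_C_mul_le _ _
    _ ≤ ((k : ℤ) - l).natAbs * (C (2 : ℝ) * X - C 1).natDegree :=
      natDegree_comp_le.trans_eq (by rw [Chebyshev.natDegree_T])
    _ ≤ (n - 1) * 1 := Nat.mul_le_mul hkl hlin
    _ = n - 1 := mul_one _

theorem eval_trigKernelPoly_cos_sq (a : ℕ → ℝ) (n : ℕ) (β t : ℝ) :
    (trigKernelPoly a n β).eval (cos (t / 2) ^ 2) =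
      (trigKernel a n (t + β) + trigKernel a n (-t + β)) / 2 := by
  have hcos : 2 * cos (t / 2) ^ 2 - 1 = cos t := by
    rw [← cos_two_mul, mul_div_cancel₀ t two_ne_zero]
  simp only [trigKernel_eq_sum_cos, trigKernelPoly, eval_finsetSum, ← sum_add_distrib, sum_div]
  refine sum_congr rfl fun k _ ↦ sum_congr rfl fun l _ ↦ ?_
  simp only [eval_mul, eval_comp, eval_sub, eval_C, eval_X, hcos, Chebyshev.T_real_cos,
    mul_add, cos_add, mul_neg, cos_neg, sin_neg]
  ring

/-- The weights of the Fejér–Korovkin operator, which averages the values of a function at the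
points `cos² (korovkinAngle K i / 2)`; the scalar makes them sum to `1`. -/
noncomputable def korovkinWeight (K i : ℕ) : ℝ[X] :=
  C (2 / ((K + 2 : ℕ) : ℝ) ^ 2) * trigKernelPoly (korovkinCoeff K) (K + 1) (korovkinAngle K i)

theorem natDegree_korovkinWeight_le (K i : ℕ) : (korovkinWeight K i).natDegree ≤ K :=
  (natDegree_C_mul_le _ _).trans (natDegree_trigKernelPoly_le _ _ _)

theorem eval_korovkinWeight_cos_sq (K i : ℕ) (t : ℝ) :
    (korovkinWeight K i).eval (cos (t / 2) ^ 2) =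
      (korovkinKernel K (t + korovkinAngle K i) + korovkinKernel K (-t + korovkinAngle K i)) /
        (K + 2 : ℕ) ^ 2 := by
  rw [korovkinWeight, eval_mul, eval_C, eval_trigKernelPoly_cos_sq, korovkinKernel]
  ring

theorem exists_eq_cos_sq_half {x : ℝ} (hx : x ∈ Set.Icc 0 1) : ∃ t, x = cos (t / 2) ^ 2 := by
  refine ⟨2 * arccos √x, ?_⟩
  rw [mul_div_cancel_left₀ _ two_ne_zero,
    cos_arccos (by linarith [sqrt_nonneg x]) (sqrt_le_one.2 hx.2), sq_sqrt hx.1]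

theorem eval_korovkinWeight_nonneg (K i : ℕ) {x : ℝ} (hx : x ∈ Set.Icc 0 1) :
    0 ≤ (korovkinWeight K i).eval x := by
  obtain ⟨t, rfl⟩ := exists_eq_cos_sq_half hx
  rw [eval_korovkinWeight_cos_sq]
  exact div_nonneg (add_nonneg (trigKernel_nonneg _ _ _) (trigKernel_nonneg _ _ _)) (sq_nonneg _)

theorem sum_eval_korovkinWeight (K : ℕ) {x : ℝ} (hx : x ∈ Set.Icc 0 1) :
    ∑ i ∈ range (K + 2), (korovkinWeight K i).eval x = 1 := by
  obtain ⟨t, rfl⟩ := exists_eq_cos_sq_half hx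
  simp only [eval_korovkinWeight_cos_sq]
  rw [← sum_div, sum_add_distrib, sum_korovkinKernel, sum_korovkinKernel, add_halves,
    div_self (by positivity)]

theorem abs_abs_cos_sub_abs_cos_le (p q : ℝ) : |(|cos p| - |cos q|)| ≤ |sin (p - q)| := by
  have hle (p q : ℝ) : |cos p| ≤ |cos q| + |sin (p - q)| := by
    calc
      |cos p| = |cos q * cos (p - q) - sin q * sin (p - q)| := by
        rw [← cos_add, add_sub_cancel]
      _ ≤ |cos q| * |cos (p - q)| + |sin q| * |sin (p - q)| := by
        simpa only [abs_mul] using abs_sub (cos q * cos (p - q)) (sin q * sin (p - q))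
      _ ≤ |cos q| * 1 + 1 * |sin (p - q)| := by
        gcongr
        exacts [abs_cos_le_one _, abs_sin_le_one _]
      _ = |cos q| + |sin (p - q)| := by rw [mul_one, one_mul]
  have hpq := hle p q
  have hqp := hle q p
  rw [← neg_sub, sin_neg, abs_neg] at hqp
  exact abs_sub_le_iff.2 ⟨by linarith, by linarith⟩

theorem sum_eval_korovkinWeight_mul_sq_le (K : ℕ) {x : ℝ} (hx : x ∈ Set.Icc 0 1) :
    ∑ i ∈ range (K + 2), (korovkinWeight K i).eval x *
        |(|cos (korovkinAngle K i / 2)| - √x)| ^ 2 ≤ sin (π / (2 * (K + 2 : ℕ))) ^ 2 := by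
  obtain ⟨t, rfl⟩ := exists_eq_cos_sq_half hx
  have hterm (i : ℕ) : (korovkinWeight K i).eval (cos (t / 2) ^ 2) *
        |(|cos (korovkinAngle K i / 2)| - |cos (t / 2)|)| ^ 2 ≤
      (korovkinKernel K (t + korovkinAngle K i) * sin ((t + korovkinAngle K i) / 2) ^ 2 +
        korovkinKernel K (-t + korovkinAngle K i) * sin ((-t + korovkinAngle K i) / 2) ^ 2) /
        (K + 2 : ℕ) ^ 2 := by
    set β := korovkinAngle K i
    have hplus := abs_abs_cos_sub_abs_cos_le (β / 2) (-t / 2)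
    have hminus := abs_abs_cos_sub_abs_cos_le (β / 2) (t / 2)
    rw [neg_div, cos_neg, show β / 2 - -(t / 2) = (t + β) / 2 by ring] at hplus
    rw [show β / 2 - t / 2 = (-t + β) / 2 by ring] at hminus
    rw [eval_korovkinWeight_cos_sq, div_mul_eq_mul_div, add_mul, ← sq_abs (sin ((t + β) / 2)),
      ← sq_abs (sin ((-t + β) / 2))]
    have hnonneg := trigKernel_nonneg (korovkinCoeff K) (K + 1)
    gcongr
    exacts [hnonneg _, hnonneg _]
  rw [sqrt_sq_eq_abs]
  refine (sum_le_sum fun i _ ↦ hterm i).trans_eq ?_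
  rw [← sum_div, sum_add_distrib, sum_korovkinKernel_mul_sin_sq, sum_korovkinKernel_mul_sin_sq]
  field_simp
  ring

theorem sum_eval_korovkinWeight_mul_abs_le (K : ℕ) {x : ℝ} (hx : x ∈ Set.Icc 0 1) :
    ∑ i ∈ range (K + 2), (korovkinWeight K i).eval x * |(|cos (korovkinAngle K i / 2)| - √x)| ≤
      π / (2 * (K + 2 : ℕ)) := by
  refine le_of_abs_le (abs_le_of_sq_le_sq ?_ (by positivity))
  exact (pow_arith_mean_le_arith_mean_pow _ _ _ (fun i _ ↦ eval_korovkinWeight_nonneg K i hx)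
    (sum_eval_korovkinWeight K hx) (fun _ _ ↦ abs_nonneg _) 2).trans <|
    (sum_eval_korovkinWeight_mul_sq_le K hx).trans sin_sq_le_sq

theorem isBivarPoly_eval_mul_eval {K : ℕ} {p q : ℝ[X]} (hp : p.natDegree ≤ K)
    (hq : q.natDegree ≤ K) : IsBivarPoly K fun x y ↦ p.eval x * q.eval y := by
  refine ⟨fun i j ↦ p.coeff i * q.coeff j, fun x y ↦ ?_⟩
  beta_reduce
  rw [eval_eq_sum_range' (Nat.lt_succ_of_le hp), eval_eq_sum_range' (Nat.lt_succ_of_le hq),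
    ← Fin.sum_univ_eq_sum_range (fun i ↦ p.coeff i * x ^ i),
    ← Fin.sum_univ_eq_sum_range (fun j ↦ q.coeff j * y ^ j), sum_mul_sum]
  exact sum_congr rfl fun i _ ↦ sum_congr rfl fun j _ ↦ by ring

namespace IsBivarPoly

variable {K : ℕ}

theorem const_mul {u : ℝ → ℝ → ℝ} (hu : IsBivarPoly K u) (r : ℝ) :
    IsBivarPoly K fun x y ↦ r * u x y := by
  obtain ⟨c, hc⟩ := hu
  refine ⟨fun i j ↦ r * c i j, fun x y ↦ ?_⟩
  simp only [hc, mul_sum, mul_assoc]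

theorem sum {ι : Type*} (s : Finset ι) {u : ι → ℝ → ℝ → ℝ}
    (hu : ∀ i ∈ s, IsBivarPoly K (u i)) :
    IsBivarPoly K fun x y ↦ ∑ i ∈ s, u i x y := by
  choose! c hc using hu
  refine ⟨fun k l ↦ ∑ i ∈ s, c i k l, fun x y ↦ ?_⟩
  beta_reduce
  rw [sum_congr rfl fun i hi ↦ hc i hi x y, sum_comm]
  simp only [sum_mul]
  exact sum_congr rfl fun _ _ ↦ sum_comm

theorem continuous {u : ℝ → ℝ → ℝ} (hu : IsBivarPoly K u) :
    Continuous fun z : ℝ × ℝ ↦ u z.1 z.2 := by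
  obtain ⟨c, hc⟩ := hu
  simp only [hc]
  fun_prop

end IsBivarPoly

theorem abs_sum_sum_mul_sub_le_of_lipschitzWith {ι κ : Type*} {L : NNReal} {f : ℝ × ℝ → ℝ}
    (hf : LipschitzWith L f) {s : Finset ι} {t : Finset κ} {p a : ι → ℝ} {q b : κ → ℝ}
    (hp : ∀ i ∈ s, 0 ≤ p i) (hps : ∑ i ∈ s, p i = 1)
    (hq : ∀ j ∈ t, 0 ≤ q j) (hqs : ∑ j ∈ t, q j = 1) (x y : ℝ) :
    |∑ i ∈ s, ∑ j ∈ t, f (a i, b j) * (p i * q j) - f (x, y)| ≤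
      L * (∑ i ∈ s, p i * |a i - x| + ∑ j ∈ t, q j * |b j - y|) := by
  have hlip (i : ι) (j : κ) : |f (a i, b j) - f (x, y)| ≤ L * (|a i - x| + |b j - y|) := by
    refine (hf.dist_le_mul _ _).trans ?_
    gcongr
    exact max_le_add_of_nonneg (abs_nonneg _) (abs_nonneg _)
  have hconst : f (x, y) = ∑ i ∈ s, ∑ j ∈ t, f (x, y) * (p i * q j) := by
    simp only [← mul_sum, hqs, hps, mul_one]
  calc
    _ = |∑ i ∈ s, ∑ j ∈ t, (f (a i, b j) - f (x, y)) * (p i * q j)| := by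
      simp only [sub_mul, sum_sub_distrib, ← hconst]
    _ ≤ ∑ i ∈ s, ∑ j ∈ t, L * (|a i - x| + |b j - y|) * (p i * q j) := by
      refine (abs_sum_le_sum_abs _ _).trans (sum_le_sum fun i hi ↦ ?_)
      refine (abs_sum_le_sum_abs _ _).trans (sum_le_sum fun j hj ↦ ?_)
      have hpq := mul_nonneg (hp i hi) (hq j hj)
      rw [abs_mul, abs_of_nonneg hpq]
      exact mul_le_mul_of_nonneg_right (hlip i j) hpq
    _ = L * ∑ i ∈ s, ∑ j ∈ t, (p i * |a i - x| * q j + p i * (q j * |b j - y|)) := by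
      simp only [mul_sum]
      exact sum_congr rfl fun i _ ↦ sum_congr rfl fun j _ ↦ by ring
    _ = _ := by
      simp only [sum_add_distrib, ← mul_sum, ← sum_mul, hqs, hps, mul_one, one_mul]

theorem exists_isBivarPoly_abs_sub_sqrt_le {L : NNReal} {f : ℝ × ℝ → ℝ} (hf : LipschitzWith L f)
    (K : ℕ) : ∃ P, IsBivarPoly K P ∧ ∀ x ∈ Set.Icc (0 : ℝ) 1, ∀ y ∈ Set.Icc (0 : ℝ) 1,
      |P x y - f (√x, √y)| ≤ L * (π / (K + 2 : ℕ)) := by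
  let node (i : ℕ) : ℝ := |cos (korovkinAngle K i / 2)|
  refine ⟨fun x y ↦ ∑ i ∈ range (K + 2), ∑ j ∈ range (K + 2),
    f (node i, node j) * ((korovkinWeight K i).eval x * (korovkinWeight K j).eval y), ?_, ?_⟩
  · exact .sum _ fun i _ ↦ .sum _ fun j _ ↦ (isBivarPoly_eval_mul_eval
      (natDegree_korovkinWeight_le K i) (natDegree_korovkinWeight_le K j)).const_mul _
  intro x hx y hy
  refine (abs_sum_sum_mul_sub_le_of_lipschitzWith hf (fun i _ ↦ eval_korovkinWeight_nonneg K i hx)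
    (sum_eval_korovkinWeight K hx) (fun j _ ↦ eval_korovkinWeight_nonneg K j hy)
    (sum_eval_korovkinWeight K hy) _ _).trans ?_
  gcongr
  calc
    _ ≤ π / (2 * (K + 2 : ℕ)) + π / (2 * (K + 2 : ℕ)) :=
      add_le_add (sum_eval_korovkinWeight_mul_abs_le K hx) (sum_eval_korovkinWeight_mul_abs_le K hy)
    _ = π / (K + 2 : ℕ) := by ring

theorem abs_sub_le_sqErr {w f : ℝ → ℝ → ℝ} (hw : Continuous fun z : ℝ × ℝ ↦ w z.1 z.2)
    (hf : Continuous fun z : ℝ × ℝ ↦ f z.1 z.2) {x y : ℝ} (hx : x ∈ Set.Icc 0 1)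
    (hy : y ∈ Set.Icc 0 1) : |w x y - f x y| ≤ sqErr w f := by
  have hcont : Continuous fun z : Set.Icc (0 : ℝ) 1 × Set.Icc (0 : ℝ) 1 ↦
      |w z.1 z.2 - f z.1 z.2| :=
    ((hw.sub hf).comp (continuous_subtype_val.prodMap continuous_subtype_val)).abs
  exact le_ciSup (isCompact_range hcont).bddAbove (⟨x, hx⟩, ⟨y, hy⟩)

theorem abs_sub_sqrt_le_of_forall_sqErr_le {L : NNReal} {f : ℝ × ℝ → ℝ} (hf : LipschitzWith L f)
    {K : ℕ} {u : ℝ → ℝ → ℝ} (hu : IsBivarPoly K u)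
    (hbest : ∀ P, IsBivarPoly K P →
      sqErr u (fun x y ↦ f (√x, √y)) ≤ sqErr P (fun x y ↦ f (√x, √y))) :
    ∀ x ∈ Set.Icc (0 : ℝ) 1, ∀ y ∈ Set.Icc (0 : ℝ) 1,
      |u x y - f (√x, √y)| ≤ L * (π / (K + 2 : ℕ)) := by
  intro x hx y hy
  obtain ⟨P, hP, hPf⟩ := exists_isBivarPoly_abs_sub_sqrt_le hf K
  have hcont : Continuous fun z : ℝ × ℝ ↦ f (√z.1, √z.2) := hf.continuous.comp (by fun_prop)
  calc
    _ ≤ sqErr u fun x y ↦ f (√x, √y) := abs_sub_le_sqErr hu.continuous hcont hx hy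
    _ ≤ sqErr P fun x y ↦ f (√x, √y) := hbest P hP
    _ ≤ _ := ciSup_le fun z ↦ hPf _ z.1.2 _ z.2.2

theorem abs_mul_sub_mul_le {u v f g a b : ℝ} (hu : |u - f| ≤ a) (hv : |v - g| ≤ b) :
    |u * v - f * g| ≤ |f| * b + |g| * a + a * b := by
  have ha : 0 ≤ a := (abs_nonneg _).trans hu
  calc
    _ = |f * (v - g) + g * (u - f) + (u - f) * (v - g)| := by ring_nf
    _ ≤ |f * (v - g)| + |g * (u - f)| + |(u - f) * (v - g)| := abs_add_three _ _ _
    _ ≤ _ := by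
      simp only [abs_mul]
      gcongr

theorem sqrt_add_mul_abs_sqrt_sub {x y : ℝ} (hx : 0 ≤ x) (hy : 0 ≤ y) :
    (√x + √y) * |√x - √y| = |x - y| := by
  rw [← abs_of_nonneg (add_nonneg (sqrt_nonneg x) (sqrt_nonneg y)), ← abs_mul, ← sq_sub_sq,
    sq_sqrt hx, sq_sqrt hy]

theorem abs_mul_sub_mul_zero_sub_abs_le {u v : ℝ → ℝ → ℝ} {e : ℝ}
    (hu : ∀ x ∈ Set.Icc (0 : ℝ) 1, ∀ y ∈ Set.Icc (0 : ℝ) 1, |u x y - (√x + √y)| ≤ e)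
    (hv : ∀ x ∈ Set.Icc (0 : ℝ) 1, ∀ y ∈ Set.Icc (0 : ℝ) 1, |v x y - (|√x - √y|)| ≤ e)
    {x y : ℝ} (hx : x ∈ Set.Icc 0 1) (hy : y ∈ Set.Icc 0 1) :
    |u x y * v x y - u 0 0 * v 0 0 - (|x - y|)| ≤ 2 * (√x + √y) * e + 2 * e ^ 2 := by
  have he : 0 ≤ e := (abs_nonneg _).trans (hu x hx y hy)
  have hadd : |√x + √y| = √x + √y := abs_of_nonneg (by positivity)
  have hsub : |√x - √y| ≤ √x + √y :=
    abs_sub_le_iff.2 ⟨by linarith [sqrt_nonneg y], by linarith [sqrt_nonneg x]⟩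
  have hxy := abs_mul_sub_mul_le (hu x hx y hy) (hv x hx y hy)
  have h00 := abs_mul_sub_mul_le (hu 0 (by simp) 0 (by simp)) (hv 0 (by simp) 0 (by simp))
  simp only [sqrt_zero, add_zero, sub_zero, abs_zero, mul_zero, zero_mul, zero_add] at h00
  rw [sqrt_add_mul_abs_sqrt_sub hx.1 hy.1, hadd, abs_abs] at hxy
  calc
    _ = |u x y * v x y - |x - y| - u 0 0 * v 0 0| := by rw [sub_right_comm]
    _ ≤ |u x y * v x y - (|x - y|)| + |u 0 0 * v 0 0| := abs_sub _ _
    _ ≤ (√x + √y) * e + |√x - √y| * e + e * e + e * e := add_le_add hxy h00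
    _ ≤ (√x + √y) * e + (√x + √y) * e + e * e + e * e := by gcongr
    _ = _ := by ring

theorem lipschitzWith_two_fst_add_snd : LipschitzWith 2 fun z : ℝ × ℝ ↦ z.1 + z.2 := by
  simpa [one_add_one_eq_two] using LipschitzWith.prod_fst.add LipschitzWith.prod_snd

theorem lipschitzWith_two_abs_fst_sub_snd : LipschitzWith 2 fun z : ℝ × ℝ ↦ |z.1 - z.2| := by
  have hsub : LipschitzWith (1 + 1) fun z : ℝ × ℝ ↦ z.1 - z.2 :=
    LipschitzWith.prod_fst.sub LipschitzWith.prod_snd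
  simpa [Function.comp_def, one_add_one_eq_two] using lipschitzWith_one_norm.comp hsub

/-- the product of best polynomial approximations of `√x + √y` and
`|√x − √y|` gives a pointwise-accurate approximation of `|x − y|` on `[0,1]²`. -/
theorem product_approx_abs :
    ∃ M : ℝ, 0 < M ∧
      ∀ K : ℕ, 1 ≤ K →
        ∀ u v : ℝ → ℝ → ℝ, IsBivarPoly K u → IsBivarPoly K v →
          (∀ P : ℝ → ℝ → ℝ, IsBivarPoly K P →
            sqErr u (fun x y => Real.sqrt x + Real.sqrt y) ≤
              sqErr P (fun x y => Real.sqrt x + Real.sqrt y)) →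
          (∀ P : ℝ → ℝ → ℝ, IsBivarPoly K P →
            sqErr v (fun x y => |Real.sqrt x - Real.sqrt y|) ≤
              sqErr P (fun x y => |Real.sqrt x - Real.sqrt y|)) →
          ∀ x ∈ Set.Icc (0:ℝ) 1, ∀ y ∈ Set.Icc (0:ℝ) 1,
            abs (u x y * v x y - u 0 0 * v 0 0 - |x - y|) ≤
              M * ((Real.sqrt x + Real.sqrt y) / K + 1 / (K : ℝ) ^ 2) := by
  refine ⟨8 * π ^ 2, by positivity, fun K hK u v hu hv hub hvb x hx y hy ↦ ?_⟩
  have hK0 : (0 : ℝ) < K := by exact_mod_cast hK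
  have hu_le := abs_sub_sqrt_le_of_forall_sqErr_le lipschitzWith_two_fst_add_snd hu hub
  have hv_le := abs_sub_sqrt_le_of_forall_sqErr_le lipschitzWith_two_abs_fst_sub_snd hv hvb
  have hrate : π / (K + 2 : ℕ) ≤ π / K :=
    div_le_div_of_nonneg_left pi_nonneg hK0 (by push_cast; linarith)
  have hpi : π ≤ π ^ 2 := le_self_pow₀ (by linarith [pi_gt_three]) two_ne_zero
  calc
    _ ≤ 2 * (√x + √y) * (2 * (π / (K + 2 : ℕ))) + 2 * (2 * (π / (K + 2 : ℕ))) ^ 2 :=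
      abs_mul_sub_mul_zero_sub_abs_le hu_le hv_le hx hy
    _ ≤ 2 * (√x + √y) * (2 * (π / K)) + 2 * (2 * (π / K)) ^ 2 := by gcongr
    _ = 4 * π * ((√x + √y) / K) + 8 * π ^ 2 * (1 / K ^ 2) := by ring
    _ ≤ 8 * π ^ 2 * ((√x + √y) / K) + 8 * π ^ 2 * (1 / K ^ 2) := by
      gcongr
      linarith
    _ = 8 * π ^ 2 * ((√x + √y) / K + 1 / (K : ℝ) ^ 2) := by ring
end

section
/- There exist universal constants D > 1 and c > 0 such that for every positive integer L and every a ∈ (0, 1/2], with f(x;a) = (|x − a| − a)/x for x > 0: if 1/L² ≤ a ≤ 1/2 then E_L[f(·;a); [a/D, 1]] ≥ c/(L√a), and if 0 < a < 1/L² then E_L[f(·;a); [a/D, 1]] ≥ c. -/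
open scoped BigOperators

/-!
Multiplying by `x`, an approximation of `(|x - a| - a) / x` within `ε` becomes a polynomial
approximation of `|x - a|` with error at most `ε * x`. Substitute `x = b + q * (1 - cos θ)` so that
`a` corresponds to the angle `τ = π / (2 * j)` with `j ≈ 1 / √a`, and let `M = max L j`. Test the
error against a nonnegative kernel centred at `τ`, of degree less than `2 * M`, modulated by
`cos (6 * M * (θ - τ)) + cos ((6 * M + j) * (θ - τ))`. All frequencies then exceed the degree of the
polynomial, which drops out, while `|cos θ - cos τ|` contributes at least a multiple of
`sin τ / M ^ 2` times the squared sum of the kernel weights: shifting the frequency by `j` shifts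
the phase at `τ` by a quarter period, so the two modulations cannot both miss the kink. For
Fejér–Korovkin weights the kernel is so concentrated that the weight `x` integrates to a multiple
of `M * a`, although `x` is as large as `1` away from the kink. Comparison gives `ε ≳ j / M`.
-/

open Real

namespace KinkApprox

section Fourier

lemma integral_eq_zero_of_odd {f : ℝ → ℝ} (hf : Function.Odd f) (a : ℝ) :
    ∫ x in (-a)..a, f x = 0 := by
  have h := intervalIntegral.integral_comp_neg (a := -a) (b := a) f
  simp only [hf _, intervalIntegral.integral_neg, neg_neg] at h
  linarith

lemma integral_eq_two_mul_of_even {f : ℝ → ℝ} (hf : Function.Even f) {a : ℝ}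
    (hfi : IntervalIntegrable f MeasureTheory.volume (-a) a) :
    ∫ x in (-a)..a, f x = 2 * ∫ x in 0..a, f x := by
  have h0 : (0 : ℝ) ∈ Set.uIcc (-a) a := by
    rcases le_total 0 a with h | h
    · exact Set.mem_uIcc_of_le (by linarith) h
    · exact Set.mem_uIcc_of_ge h (by linarith)
  have hneg : ∫ x in (-a)..0, f x = ∫ x in 0..a, f x := by
    have h := intervalIntegral.integral_comp_neg (a := -a) (b := 0) f
    simpa only [hf _, neg_neg, neg_zero] using h
  rw [← intervalIntegral.integral_add_adjacent_intervals
    (hfi.mono_set (Set.uIcc_subset_uIcc_left h0))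
    (hfi.mono_set (Set.uIcc_subset_uIcc_right h0)), hneg, two_mul]

lemma integral_cos_int_mul_add (n : ℤ) (φ : ℝ) :
    ∫ θ in (-π)..π, cos (n * θ + φ) = if n = 0 then 2 * π * cos φ else 0 := by
  split_ifs with hn
  · simp only [hn, Int.cast_zero, zero_mul, zero_add, intervalIntegral.integral_const,
      smul_eq_mul]
    ring
  · have hperiod : (n : ℝ) * π + φ = n * -π + φ + n * (2 * π) := by ring
    rw [intervalIntegral.integral_comp_mul_add cos (Int.cast_ne_zero.2 hn), integral_cos, hperiod,
      sin_add_int_mul_two_pi, sub_self, smul_zero]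

lemma integral_cos_pow_mul_cos_eq_zero (φ : ℝ) {m : ℕ} {n : ℤ} (hn : (m : ℤ) < n) :
    ∫ θ in (-π)..π, cos θ ^ m * cos (n * θ + φ) = 0 := by
  induction m generalizing n with
  | zero =>
    simp only [pow_zero, one_mul, integral_cos_int_mul_add, if_neg (show n ≠ 0 by omega)]
  | succ m ih =>
    have product_to_sum (θ : ℝ) : cos θ ^ (m + 1) * cos (n * θ + φ) =
        1 / 2 * (cos θ ^ m * cos ((n + 1 : ℤ) * θ + φ)) +
          1 / 2 * (cos θ ^ m * cos ((n - 1 : ℤ) * θ + φ)) := by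
      rw [show ((n + 1 : ℤ) : ℝ) * θ + φ = n * θ + φ + θ by push_cast; ring,
        show ((n - 1 : ℤ) : ℝ) * θ + φ = n * θ + φ - θ by push_cast; ring,
        cos_add (n * θ + φ), cos_sub (n * θ + φ)]
      ring
    simp_rw [product_to_sum]
    rw [intervalIntegral.integral_add (Continuous.intervalIntegrable (by fun_prop) _ _)
      (Continuous.intervalIntegrable (by fun_prop) _ _), intervalIntegral.integral_const_mul,
      intervalIntegral.integral_const_mul, ih (by omega), ih (by omega)]
    ring

lemma integral_eval_cos_mul_cos_eq_zero (Q : Polynomial ℝ) {n : ℤ} (hn : (Q.natDegree : ℤ) < n)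
    (φ : ℝ) : ∫ θ in (-π)..π, Q.eval (cos θ) * cos (n * θ + φ) = 0 := by
  simp_rw [Polynomial.eval_eq_sum_range, Finset.sum_mul, mul_assoc]
  rw [intervalIntegral.integral_finsetSum
    fun _ _ => Continuous.intervalIntegrable (by fun_prop) _ _]
  refine Finset.sum_eq_zero fun m hm => ?_
  rw [intervalIntegral.integral_const_mul,
    integral_cos_pow_mul_cos_eq_zero φ (by have := Finset.mem_range.1 hm; omega), mul_zero]

lemma integral_mul_cos_sub_of_even {g : ℝ → ℝ} (hg : Continuous g) (hg_even : Function.Even g)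
    (n τ a : ℝ) :
    ∫ θ in (-a)..a, g θ * cos (n * (θ - τ)) =
      cos (n * τ) * ∫ θ in (-a)..a, g θ * cos (n * θ) := by
  have hodd : ∫ θ in (-a)..a, g θ * sin (n * θ) = 0 :=
    integral_eq_zero_of_odd (fun θ => by rw [hg_even, mul_neg, sin_neg, mul_neg]) a
  have expand (θ : ℝ) : g θ * cos (n * (θ - τ)) =
      cos (n * τ) * (g θ * cos (n * θ)) + sin (n * τ) * (g θ * sin (n * θ)) := by
    rw [mul_sub, cos_sub]
    ring
  simp_rw [expand]
  rw [intervalIntegral.integral_add (Continuous.intervalIntegrable (by fun_prop) _ _)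
    (Continuous.intervalIntegrable (by fun_prop) _ _), intervalIntegral.integral_const_mul,
    intervalIntegral.integral_const_mul, hodd, mul_zero, add_zero]

end Fourier

section Kink

lemma integral_cos_sub_mul_cos (κ : ℝ) {n : ℝ} (hn : n ≠ 0) (hn' : n ^ 2 - 1 ≠ 0) (x y : ℝ) :
    ∫ θ in x..y, (cos θ - κ) * cos (n * θ) =
      ((n * sin (n * y) * cos y - cos (n * y) * sin y) / (n ^ 2 - 1) - κ * sin (n * y) / n) -
      ((n * sin (n * x) * cos x - cos (n * x) * sin x) / (n ^ 2 - 1) - κ * sin (n * x) / n) := by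
  refine intervalIntegral.integral_eq_sub_of_hasDerivAt
    (f := fun θ => (n * sin (n * θ) * cos θ - cos (n * θ) * sin θ) / (n ^ 2 - 1) -
      κ * sin (n * θ) / n) (fun θ _ => ?_) (Continuous.intervalIntegrable (by fun_prop) _ _)
  have hlin : HasDerivAt (fun θ : ℝ => n * θ) n θ := by
    simpa only [mul_one, id] using (hasDerivAt_id θ).const_mul n
  refine (((((hlin.sin.const_mul n).mul (hasDerivAt_cos θ)).sub
    (hlin.cos.mul (hasDerivAt_sin θ))).div_const _).sub
    ((hlin.sin.const_mul κ).div_const n)).congr_deriv ?_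
  field_simp
  ring

lemma integral_abs_cos_sub_cos_mul_cos {τ : ℝ} (hτ₀ : 0 ≤ τ) (hτπ : τ ≤ π) {n : ℤ} (hn : 2 ≤ n) :
    ∫ θ in (-π)..π, |cos θ - cos τ| * cos (n * θ) =
      -(4 / ((n : ℝ) ^ 2 - 1) * (sin τ * cos (n * τ) - cos τ * sin (n * τ) / n)) := by
  have hnR : (2 : ℝ) ≤ n := by exact_mod_cast hn
  have hn₀ : (n : ℝ) ≠ 0 := by linarith
  have hn₁ : (n : ℝ) ^ 2 - 1 ≠ 0 := by nlinarith
  have hint (x y : ℝ) : IntervalIntegrable (fun θ => |cos θ - cos τ| * cos (n * θ))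
      MeasureTheory.volume x y := Continuous.intervalIntegrable (by fun_prop) _ _
  have inner_part : ∫ θ in 0..τ, |cos θ - cos τ| * cos (n * θ) =
      ∫ θ in 0..τ, (cos θ - cos τ) * cos (n * θ) := by
    refine intervalIntegral.integral_congr fun θ hθ => ?_
    rw [Set.uIcc_of_le hτ₀] at hθ
    have := cos_le_cos_of_nonneg_of_le_pi hθ.1 hτπ hθ.2
    simp only [abs_of_nonneg (sub_nonneg.2 this)]
  have outer_part : ∫ θ in τ..π, |cos θ - cos τ| * cos (n * θ) =
      -∫ θ in τ..π, (cos θ - cos τ) * cos (n * θ) := by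
    rw [← intervalIntegral.integral_neg]
    refine intervalIntegral.integral_congr fun θ hθ => ?_
    rw [Set.uIcc_of_le hτπ] at hθ
    have := cos_le_cos_of_nonneg_of_le_pi hτ₀ hθ.2 hθ.1
    simp only [abs_of_nonpos (sub_nonpos.2 this), neg_mul]
  rw [integral_eq_two_mul_of_even (fun θ => by rw [cos_neg, mul_neg, cos_neg]) (hint _ _),
    ← intervalIntegral.integral_add_adjacent_intervals (hint 0 τ) (hint τ π), inner_part,
    outer_part, integral_cos_sub_mul_cos _ hn₀ hn₁, integral_cos_sub_mul_cos _ hn₀ hn₁]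
  simp only [mul_zero, sin_zero, sin_pi, sin_int_mul_pi]
  field_simp
  ring

lemma integral_abs_cos_sub_cos_mul_cos_sub {τ : ℝ} (hτ₀ : 0 ≤ τ) (hτπ : τ ≤ π) {n : ℤ}
    (hn : 2 ≤ n) :
    ∫ θ in (-π)..π, |cos θ - cos τ| * cos (n * (θ - τ)) =
      -(4 / ((n : ℝ) ^ 2 - 1) *
        (sin τ * cos (n * τ) - cos τ * sin (n * τ) / n) * cos (n * τ)) := by
  rw [integral_mul_cos_sub_of_even (g := fun θ => |cos θ - cos τ|) (by fun_prop)
    (fun θ => by simp only [cos_neg]), integral_abs_cos_sub_cos_mul_cos hτ₀ hτπ hn]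
  ring

lemma abs_mul_mul_le_one_div_two {K s c : ℝ} (hK : |K| ≤ 1) (hsc : c ^ 2 + s ^ 2 = 1) :
    |K * s * c| ≤ 1 / 2 := by
  have hsc' : |s * c| ≤ 1 / 2 := abs_le.2 ⟨by nlinarith [sq_nonneg (s + c)],
    by nlinarith [sq_nonneg (s - c)]⟩
  rw [mul_assoc, abs_mul]
  nlinarith [abs_nonneg K, abs_nonneg (s * c)]

/-- With `S = sin τ`, `K = cos τ`, `c = cos (n τ)` and `s = sin (n τ)` the right-hand side is, up
to sign, the sum of the kink's coefficients at the frequencies `n` and `n + j`. Either one alone may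
vanish; when `j τ = π / 2` their leading factors `c ^ 2` and `s ^ 2` are complementary. -/
lemma div_sq_le_kink_coeff_add_kink_coeff {j M n S K s c : ℝ} (hM : 1 ≤ M) (hj : 0 ≤ j)
    (hjM : j ≤ M) (hn : 4 * M ≤ n) (hn' : n ≤ 8 * M) (hS : 1 / M ≤ S) (hK : |K| ≤ 1)
    (hsc : c ^ 2 + s ^ 2 = 1) :
    2 * S / (81 * M ^ 2) ≤ 4 / (n ^ 2 - 1) * (S * c ^ 2 - K * s * c / n) +
      4 / ((n + j) ^ 2 - 1) * (S * s ^ 2 + K * s * c / (n + j)) := by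
  have hn₀ : 0 < n := by linarith
  have hS₀ : 0 < S := lt_of_lt_of_le (by positivity) hS
  have hA : 0 < n ^ 2 - 1 := by nlinarith
  have hAB : n ^ 2 - 1 ≤ (n + j) ^ 2 - 1 := by nlinarith
  have hB : 0 < (n + j) ^ 2 - 1 := hA.trans_le hAB
  have hBM : (n + j) ^ 2 - 1 ≤ 81 * M ^ 2 := by nlinarith
  have hSn : 4 ≤ S * n := by
    have := mul_le_mul hS hn (by positivity) hS₀.le
    rwa [one_div, mul_comm, mul_inv_cancel_right₀ (by positivity)] at this
  set A := n ^ 2 - 1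
  set B := (n + j) ^ 2 - 1
  have hInv : 1 / (B * (n + j)) ≤ 1 / (A * n) :=
    one_div_le_one_div_of_le (by positivity) (mul_le_mul hAB (by linarith) hn₀.le hB.le)
  have kinks : 4 * S / B ≤ 4 / A * (S * c ^ 2) + 4 / B * (S * s ^ 2) := by
    have : 4 / B * (S * c ^ 2) ≤ 4 / A * (S * c ^ 2) := by gcongr
    calc 4 * S / B = 4 / B * (S * c ^ 2) + 4 / B * (S * s ^ 2) := by
          rw [← mul_add, ← mul_add, hsc]; ring
      _ ≤ _ := by linarith
  have remainder : 4 * (K * s * c) * (1 / (A * n) - 1 / (B * (n + j))) ≤ 2 * S / B := by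
    calc 4 * (K * s * c) * (1 / (A * n) - 1 / (B * (n + j)))
        ≤ 4 * (1 / 2) * (1 / (A * n) - 1 / (B * (n + j))) := by
          gcongr
          exact (abs_le.1 (abs_mul_mul_le_one_div_two hK hsc)).2
      _ ≤ 2 * (1 / (A * n)) := by
          have : 0 ≤ 1 / (B * (n + j)) := by positivity
          linarith
      _ ≤ 2 * S / B := by
          rw [mul_one_div, div_le_div_iff₀ (by positivity) hB]
          nlinarith
  calc 2 * S / (81 * M ^ 2) ≤ 2 * S / B := by gcongr
    _ = 4 * S / B - 2 * S / B := by ring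
    _ ≤ 4 / A * (S * c ^ 2) + 4 / B * (S * s ^ 2) -
          4 * (K * s * c) * (1 / (A * n) - 1 / (B * (n + j))) := by linarith
    _ = _ := by
        field_simp
        ring

lemma one_div_le_sin_pi_div_two_mul {j : ℝ} (hj : 1 ≤ j) : 1 / j ≤ sin (π / (2 * j)) := by
  have hπ := pi_pos
  calc 1 / j = 2 / π * (π / (2 * j)) := by field_simp
    _ ≤ sin (π / (2 * j)) := mul_le_sin (by positivity)
        (div_le_div_of_nonneg_left hπ.le two_pos (by linarith))

lemma integral_abs_cos_sub_cos_pair_le {j M : ℕ} (hj : 1 ≤ j) (hjM : j ≤ M) {n : ℤ}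
    (hn : 4 * (M : ℤ) ≤ n) (hn' : n ≤ 8 * M) {τ : ℝ} (hτ : τ = π / (2 * j)) :
    (∫ θ in (-π)..π, |cos θ - cos τ| * cos (n * (θ - τ))) +
      (∫ θ in (-π)..π, |cos θ - cos τ| * cos ((n + j : ℤ) * (θ - τ))) ≤
      -(2 * sin τ / (81 * (M : ℝ) ^ 2)) := by
  have hjR : (1 : ℝ) ≤ j := by exact_mod_cast hj
  have hjMR : (j : ℝ) ≤ M := by exact_mod_cast hjM
  have hτ₀ : 0 ≤ τ := by rw [hτ]; positivity
  have hτπ : τ ≤ π := by rw [hτ]; exact div_le_self pi_pos.le (by linarith)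
  have hsin : 1 / (M : ℝ) ≤ sin τ :=
    (one_div_le_one_div_of_le (by linarith) hjMR).trans (hτ ▸ one_div_le_sin_pi_div_two_mul hjR)
  have quarter_period : ((n + j : ℤ) : ℝ) * τ = n * τ + π / 2 := by
    push_cast
    rw [add_mul, hτ]
    field_simp
  rw [integral_abs_cos_sub_cos_mul_cos_sub hτ₀ hτπ (by omega),
    integral_abs_cos_sub_cos_mul_cos_sub hτ₀ hτπ (by omega), quarter_period,
    cos_add_pi_div_two, sin_add_pi_div_two]
  have key := div_sq_le_kink_coeff_add_kink_coeff (n := n) (hjR.trans hjMR) (by linarith) hjMR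
    (by exact_mod_cast hn) (by exact_mod_cast hn') hsin (abs_cos_le_one τ)
    (cos_sq_add_sin_sq (n * τ))
  push_cast
  linear_combination key

end Kink

section Kernel

/-- The nonnegative trigonometric polynomial `|∑ k < N, v k * exp (i k t)| ^ 2`, written out in
real form; it serves as a localizing kernel. -/
noncomputable def sqKernel (N : ℕ) (v : ℕ → ℝ) (t : ℝ) : ℝ :=
  (∑ k ∈ Finset.range N, v k * cos (k * t)) ^ 2 + (∑ k ∈ Finset.range N, v k * sin (k * t)) ^ 2

variable (N : ℕ) (v : ℕ → ℝ)

lemma sqKernel_nonneg (t : ℝ) : 0 ≤ sqKernel N v t := by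
  unfold sqKernel
  positivity

@[fun_prop]
lemma continuous_sqKernel : Continuous (sqKernel N v) := by
  unfold sqKernel
  fun_prop

lemma sqKernel_mul_cos_add (c : ℤ) (φ t : ℝ) :
    sqKernel N v t * cos (c * t + φ) = ∑ k ∈ Finset.range N, ∑ l ∈ Finset.range N,
      v k * v l * cos ((c + k - l : ℤ) * t + φ) := by
  have expand (k l : ℕ) : v k * v l * cos ((c + k - l : ℤ) * t + φ) =
      (v k * cos (k * t) * (v l * cos (l * t)) + v k * sin (k * t) * (v l * sin (l * t))) *
        cos (c * t + φ) -
      (v k * sin (k * t) * (v l * cos (l * t)) - v k * cos (k * t) * (v l * sin (l * t))) *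
        sin (c * t + φ) := by
    rw [show ((c + k - l : ℤ) : ℝ) * t + φ = c * t + φ + (k * t - l * t) by push_cast; ring,
      cos_add, cos_sub, sin_sub]
    ring
  simp_rw [expand, Finset.sum_sub_distrib, ← Finset.sum_mul, Finset.sum_add_distrib,
    Finset.sum_sub_distrib, ← Finset.sum_mul_sum]
  rw [sqKernel]
  ring

lemma integral_mul_sqKernel_mul_cos_add {e : ℝ → ℝ} (he : Continuous e) (c : ℤ) (φ τ : ℝ) :
    ∫ θ in (-π)..π, e θ * (sqKernel N v (θ - τ) * cos (c * (θ - τ) + φ)) =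
      ∑ k ∈ Finset.range N, ∑ l ∈ Finset.range N,
        v k * v l * ∫ θ in (-π)..π, e θ * cos ((c + k - l : ℤ) * (θ - τ) + φ) := by
  simp_rw [sqKernel_mul_cos_add, Finset.mul_sum, mul_left_comm (e _)]
  rw [intervalIntegral.integral_finsetSum
    fun _ _ => Continuous.intervalIntegrable (by fun_prop) _ _]
  refine Finset.sum_congr rfl fun k _ => ?_
  rw [intervalIntegral.integral_finsetSum
    fun _ _ => Continuous.intervalIntegrable (by fun_prop) _ _]
  simp_rw [intervalIntegral.integral_const_mul]

lemma integral_sqKernel_mul_cos_add (c : ℤ) (φ τ : ℝ) :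
    ∫ θ in (-π)..π, sqKernel N v (θ - τ) * cos (c * (θ - τ) + φ) =
      2 * π * cos φ * ∑ k ∈ Finset.range N, ∑ l ∈ Finset.range N,
        if (l : ℤ) = k + c then v k * v l else 0 := by
  have orthogonality (k l : ℕ) :
      ∫ θ in (-π)..π, 1 * cos ((c + k - l : ℤ) * (θ - τ) + φ) =
        if (l : ℤ) = k + c then 2 * π * cos φ else 0 := by
    have shift (θ : ℝ) : ((c + k - l : ℤ) : ℝ) * (θ - τ) + φ =
        (c + k - l : ℤ) * θ + (φ - (c + k - l : ℤ) * τ) := by ring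
    simp_rw [one_mul, shift, integral_cos_int_mul_add]
    split_ifs with h₀ h₁ h₁
    · rw [h₀, Int.cast_zero, zero_mul, sub_zero]
    · omega
    · omega
    · rfl
  have h := integral_mul_sqKernel_mul_cos_add N v (continuous_const (y := 1)) c φ τ
  simp only [one_mul] at h orthogonality
  simp_rw [h, orthogonality, Finset.mul_sum, mul_ite, mul_zero, mul_comm (v _ * v _)]

lemma integral_sqKernel (τ : ℝ) :
    ∫ θ in (-π)..π, sqKernel N v (θ - τ) = 2 * π * ∑ k ∈ Finset.range N, v k ^ 2 := by
  have h := integral_sqKernel_mul_cos_add N v 0 0 τ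
  simp only [Int.cast_zero, zero_mul, add_zero, cos_zero, mul_one, Nat.cast_inj] at h
  rw [h]
  congr 1
  refine Finset.sum_congr rfl fun k hk => ?_
  rw [Finset.sum_ite_eq', if_pos hk, sq]

lemma integral_sqKernel_mul_cos {N : ℕ} {v : ℕ → ℝ} (hvN : v N = 0) (τ : ℝ) :
    ∫ θ in (-π)..π, sqKernel N v (θ - τ) * cos θ =
      2 * π * cos τ * ∑ k ∈ Finset.range N, v k * v (k + 1) := by
  have h := integral_sqKernel_mul_cos_add N v 1 τ τ
  simp only [Int.cast_one, one_mul, sub_add_cancel] at h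
  rw [h]
  congr 1
  refine Finset.sum_congr rfl fun k hk => ?_
  simp only [← Nat.cast_succ, Nat.cast_inj, Finset.sum_ite_eq', Finset.mem_range,
    Nat.succ_eq_add_one]
  split_ifs with hk'
  · rfl
  · rw [show k + 1 = N by have := Finset.mem_range.1 hk; omega, hvN, mul_zero]

end Kernel

section Korovkin

/-- The Fejér–Korovkin weights `sin (k π / (2 M))`, `k < 2 M`. Among weights vanishing at `k = 0`
they make `sqKernel (2 * M)` concentrate best at `0`: the mean of `1 - cos` against it attains its
minimum `1 - cos (π / (2 M))`. -/
noncomputable def korovkinWeight (M k : ℕ) : ℝ := sin (k * (π / (2 * M)))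

variable {M : ℕ}

lemma korovkinWeight_nonneg {k : ℕ} (hk : k ≤ 2 * M) : 0 ≤ korovkinWeight M k := by
  have hkR : (k : ℝ) ≤ 2 * M := by exact_mod_cast hk
  refine sin_nonneg_of_nonneg_of_le_pi (by positivity) ?_
  rw [mul_div_left_comm]
  exact mul_le_of_le_one_right pi_pos.le (div_le_one_of_le₀ hkR (by positivity))

lemma korovkinWeight_two_mul (hM : M ≠ 0) : korovkinWeight M (2 * M) = 0 := by
  rw [korovkinWeight, show ((2 * M : ℕ) : ℝ) * (π / (2 * M)) = π by push_cast; field_simp, sin_pi]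

lemma add_mul_pi_div_two_mul (hM : M ≠ 0) (k : ℕ) :
    ((M + k : ℕ) : ℝ) * (π / (2 * M)) = k * (π / (2 * M)) + π / 2 := by
  push_cast
  field_simp
  ring

lemma sum_korovkinWeight_sq (hM : M ≠ 0) :
    ∑ k ∈ Finset.range (2 * M), korovkinWeight M k ^ 2 = M := by
  simp_rw [two_mul M, Finset.sum_range_add, korovkinWeight, add_mul_pi_div_two_mul hM,
    sin_add_pi_div_two]
  simp only [← Finset.sum_add_distrib, sin_sq_add_cos_sq, Finset.sum_const, Finset.card_range,
    nsmul_eq_mul, mul_one]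

lemma sum_korovkinWeight_mul_succ (hM : M ≠ 0) :
    ∑ k ∈ Finset.range (2 * M), korovkinWeight M k * korovkinWeight M (k + 1) =
      cos (π / (2 * M)) * M := by
  have sin_cos_cancel : ∑ k ∈ Finset.range (2 * M),
      sin (k * (π / (2 * M))) * cos (k * (π / (2 * M))) = 0 := by
    simp_rw [two_mul M, Finset.sum_range_add, add_mul_pi_div_two_mul hM,
      sin_add_pi_div_two, cos_add_pi_div_two, ← Finset.sum_add_distrib]
    exact Finset.sum_eq_zero fun k _ => by ring
  have addition (k : ℕ) : korovkinWeight M k * korovkinWeight M (k + 1) =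
      cos (π / (2 * M)) * korovkinWeight M k ^ 2 +
        sin (π / (2 * M)) * (sin (k * (π / (2 * M))) * cos (k * (π / (2 * M)))) := by
    simp only [korovkinWeight]
    rw [Nat.cast_succ, add_one_mul, sin_add]
    ring
  simp_rw [addition, Finset.sum_add_distrib, ← Finset.mul_sum, sin_cos_cancel,
    sum_korovkinWeight_sq hM, mul_zero, add_zero]

lemma le_sum_korovkinWeight (hM : M ≠ 0) :
    (M : ℝ) ≤ ∑ k ∈ Finset.range (2 * M), korovkinWeight M k := by
  rw [← sum_korovkinWeight_sq hM]
  refine Finset.sum_le_sum fun k hk => ?_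
  exact pow_le_of_le_one (korovkinWeight_nonneg (Finset.mem_range.1 hk).le) (sin_le_one _)
    two_ne_zero

lemma integral_add_one_sub_cos_mul_sqKernel (hM : M ≠ 0) (β τ : ℝ) :
    ∫ θ in (-π)..π, (β + 1 - cos θ) * sqKernel (2 * M) (korovkinWeight M) (θ - τ) =
      2 * π * M * (β + 1 - cos τ * cos (π / (2 * M))) := by
  have expand (θ : ℝ) : (β + 1 - cos θ) * sqKernel (2 * M) (korovkinWeight M) (θ - τ) =
      (β + 1) * sqKernel (2 * M) (korovkinWeight M) (θ - τ) -
        sqKernel (2 * M) (korovkinWeight M) (θ - τ) * cos θ := by ring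
  simp_rw [expand]
  rw [intervalIntegral.integral_sub (Continuous.intervalIntegrable (by fun_prop) _ _)
    (Continuous.intervalIntegrable (by fun_prop) _ _), intervalIntegral.integral_const_mul,
    integral_sqKernel, integral_sqKernel_mul_cos (korovkinWeight_two_mul hM),
    sum_korovkinWeight_sq hM, sum_korovkinWeight_mul_succ hM]
  ring

end Korovkin

section LowerBound

lemma integral_abs_cos_sub_cos_sub_eval_mul_cos {Q : Polynomial ℝ} {n : ℤ}
    (hn : (Q.natDegree : ℤ) < n) (τ : ℝ) :
    ∫ θ in (-π)..π, (|cos θ - cos τ| - Q.eval (cos θ)) * cos (n * (θ - τ)) =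
      ∫ θ in (-π)..π, |cos θ - cos τ| * cos (n * (θ - τ)) := by
  have annihilated : ∫ θ in (-π)..π, Q.eval (cos θ) * cos (n * (θ - τ)) = 0 := by
    simpa only [mul_sub, ← sub_eq_add_neg] using integral_eval_cos_mul_cos_eq_zero Q hn (-(n * τ))
  simp_rw [sub_mul]
  rw [intervalIntegral.integral_sub (Continuous.intervalIntegrable (by fun_prop) _ _)
    (Continuous.intervalIntegrable (by fun_prop) _ _), annihilated, sub_zero]

variable {j M : ℕ} {Q : Polynomial ℝ} {τ : ℝ}

lemma integral_error_mul_modulated_sqKernel_le (hj : 1 ≤ j) (hjM : j ≤ M)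
    (hQ : Q.natDegree ≤ M + 1) (hτ : τ = π / (2 * j)) {v : ℕ → ℝ} (hv : ∀ k < 2 * M, 0 ≤ v k) :
    ∫ θ in (-π)..π, (|cos θ - cos τ| - Q.eval (cos θ)) * (sqKernel (2 * M) v (θ - τ) *
        (cos ((6 * M : ℤ) * (θ - τ)) + cos ((6 * M + j : ℤ) * (θ - τ)))) ≤
      -(2 * sin τ / (81 * (M : ℝ) ^ 2)) * (∑ k ∈ Finset.range (2 * M), v k) ^ 2 := by
  set e : ℝ → ℝ := fun θ => |cos θ - cos τ| - Q.eval (cos θ)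
  have he : Continuous e := by fun_prop
  have hexpand (c : ℤ) := integral_mul_sqKernel_mul_cos_add (2 * M) v he c 0 τ
  simp only [add_zero] at hexpand
  simp_rw [mul_add]
  rw [intervalIntegral.integral_add (Continuous.intervalIntegrable (by fun_prop) _ _)
    (Continuous.intervalIntegrable (by fun_prop) _ _), hexpand, hexpand,
    sq (Finset.sum _ _), Finset.sum_mul_sum, Finset.mul_sum, ← Finset.sum_add_distrib]
  refine Finset.sum_le_sum fun k hk => ?_
  rw [Finset.mul_sum, ← Finset.sum_add_distrib]
  refine Finset.sum_le_sum fun l hl => ?_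
  rw [Finset.mem_range] at hk hl
  rw [← mul_add, mul_comm (-_)]
  refine mul_le_mul_of_nonneg_left ?_ (mul_nonneg (hv k hk) (hv l hl))
  rw [show (6 * M + j + k - l : ℤ) = 6 * M + k - l + j by ring,
    integral_abs_cos_sub_cos_sub_eval_mul_cos (by omega),
    integral_abs_cos_sub_cos_sub_eval_mul_cos (by omega)]
  exact integral_abs_cos_sub_cos_pair_le hj hjM (by omega) (by omega) hτ

lemma neg_le_integral_mul_mul_of_abs_le {e w F K : ℝ → ℝ} {a b ε B : ℝ} (hab : a ≤ b)
    (he : Continuous e) (hw : Continuous w) (hF : Continuous F) (hK : Continuous K)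
    (he_le : ∀ x, |e x| ≤ ε * w x) (hF₀ : ∀ x, 0 ≤ F x) (hK_le : ∀ x, |K x| ≤ B) :
    -(B * ε * ∫ x in a..b, w x * F x) ≤ ∫ x in a..b, e x * (F x * K x) := by
  rw [← intervalIntegral.integral_const_mul, ← intervalIntegral.integral_neg]
  refine intervalIntegral.integral_mono_on hab (Continuous.intervalIntegrable (by fun_prop) _ _)
    (Continuous.intervalIntegrable (by fun_prop) _ _) fun x _ => neg_le_of_abs_le ?_
  calc |e x * (F x * K x)| = |e x| * |K x| * F x := by
        rw [abs_mul, abs_mul, abs_of_nonneg (hF₀ x)]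
        ring
    _ ≤ ε * w x * B * F x := by
        have := hF₀ x
        have := (abs_nonneg _).trans (he_le x)
        gcongr
        exacts [he_le x, hK_le x]
    _ = B * ε * (w x * F x) := by ring

lemma neg_le_integral_error_mul_modulated_sqKernel (hM : M ≠ 0) {β ε κ : ℝ}
    (herr : ∀ y ∈ Set.Icc (-1 : ℝ) 1, |(|y - κ| - Q.eval y)| ≤ ε * (β + 1 - y)) (m n : ℤ) :
    -(2 * ε * (2 * π * M * (β + 1 - cos τ * cos (π / (2 * M))))) ≤
      ∫ θ in (-π)..π, (|cos θ - κ| - Q.eval (cos θ)) *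
        (sqKernel (2 * M) (korovkinWeight M) (θ - τ) *
          (cos (m * (θ - τ)) + cos (n * (θ - τ)))) := by
  have hcos (θ : ℝ) : |cos (m * (θ - τ)) + cos (n * (θ - τ))| ≤ 2 := by
    have hm := abs_cos_le_one (m * (θ - τ))
    have hn := abs_cos_le_one (n * (θ - τ))
    exact (abs_add_le _ _).trans (by linarith)
  rw [← integral_add_one_sub_cos_mul_sqKernel hM]
  exact neg_le_integral_mul_mul_of_abs_le (by linarith [pi_pos]) (by fun_prop)
    (by fun_prop) (by fun_prop) (by fun_prop) (fun θ => herr _ (cos_mem_Icc θ))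
    (fun θ => sqKernel_nonneg _ _ _) hcos

lemma sin_le_of_weighted_abs_sub_cos_sub_eval_le (hj : 1 ≤ j) (hjM : j ≤ M)
    (hQ : Q.natDegree ≤ M + 1) (hτ : τ = π / (2 * j)) {β ε : ℝ} (hε : 0 ≤ ε)
    (herr : ∀ y ∈ Set.Icc (-1 : ℝ) 1, |(|y - cos τ| - Q.eval y)| ≤ ε * (β + 1 - y)) :
    sin τ ≤ 162 * π * M * (ε * (β + 2 * (1 - cos τ))) := by
  have hπ := pi_pos
  have hM : M ≠ 0 := by omega
  have hjR : (1 : ℝ) ≤ j := by exact_mod_cast hj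
  have hsin : 0 ≤ sin τ :=
    (by positivity : 0 ≤ 1 / (j : ℝ)).trans (hτ ▸ one_div_le_sin_pi_div_two_mul hjR)
  have upper := integral_error_mul_modulated_sqKernel_le hj hjM hQ hτ
    fun k hk => korovkinWeight_nonneg (M := M) hk.le
  have lower := neg_le_integral_error_mul_modulated_sqKernel (τ := τ) hM herr (6 * M) (6 * M + j)
  -- The mean of the weight against the kernel is at most twice its value at the node `cos τ`.
  have localization : β + 1 - cos τ * cos (π / (2 * M)) ≤ β + 2 * (1 - cos τ) := by
    have hσ : cos τ ≤ cos (π / (2 * M)) := by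
      rw [hτ]
      exact cos_le_cos_of_nonneg_of_le_pi (by positivity) (div_le_self hπ.le (by linarith))
        (by gcongr)
    nlinarith [cos_le_one τ, cos_le_one (π / (2 * M))]
  have mass : (M : ℝ) ^ 2 ≤ (∑ k ∈ Finset.range (2 * M), korovkinWeight M k) ^ 2 := by
    gcongr
    exact le_sum_korovkinWeight hM
  have key : 2 * sin τ / 81 ≤ 2 * ε * (2 * π * M * (β + 2 * (1 - cos τ))) := by
    calc 2 * sin τ / 81 = 2 * sin τ / (81 * (M : ℝ) ^ 2) * (M : ℝ) ^ 2 := by field_simp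
      _ ≤ 2 * sin τ / (81 * (M : ℝ) ^ 2) *
          (∑ k ∈ Finset.range (2 * M), korovkinWeight M k) ^ 2 := by gcongr
      _ ≤ 2 * ε * (2 * π * M * (β + 1 - cos τ * cos (π / (2 * M)))) := by
          linarith [lower.trans upper]
      _ ≤ _ := by gcongr
  linarith

lemma mul_sin_le_of_abs_kink_sub_le {P : Polynomial ℝ} {a b q ε : ℝ} (hj : 1 ≤ j) (hjM : j ≤ M)
    (hP : P.natDegree ≤ M) (hτ : τ = π / (2 * j)) (hb : 0 ≤ b) (hq : 0 < q)
    (ha : b + q * (1 - cos τ) = a) (hε : 0 ≤ ε)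
    (herr : ∀ x ∈ Set.Icc b (b + 2 * q), |(|x - a| - a - x * P.eval x)| ≤ ε * x) :
    q * sin τ ≤ 324 * π * M * (ε * a) := by
  set Q : Polynomial ℝ := Polynomial.C q⁻¹ *
    (Polynomial.C a + Polynomial.X * P).comp (Polynomial.C (b + q) - Polynomial.C q * Polynomial.X)
    with hQ_def
  have hQ : Q.natDegree ≤ M + 1 := by
    refine (Polynomial.natDegree_C_mul_le _ _).trans (Polynomial.natDegree_comp_le.trans ?_)
    have outer : (Polynomial.C a + Polynomial.X * P).natDegree ≤ M + 1 := by compute_degree; omega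
    have inner : (Polynomial.C (b + q) - Polynomial.C q * Polynomial.X).natDegree ≤ 1 := by
      compute_degree
    simpa only [mul_one] using Nat.mul_le_mul outer inner
  have transferred (y : ℝ) (hy : y ∈ Set.Icc (-1 : ℝ) 1) :
      |(|y - cos τ| - Q.eval y)| ≤ ε * (b / q + 1 - y) := by
    set x := b + q - q * y with hx
    have hxI : x ∈ Set.Icc b (b + 2 * q) := ⟨by nlinarith [hy.2], by nlinarith [hy.1]⟩
    have hkink : |x - a| = q * |y - cos τ| := by
      rw [show x - a = -(q * (y - cos τ)) by rw [hx, ← ha]; ring, abs_neg, abs_mul,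
        abs_of_pos hq]
    have hQ_eval : q * Q.eval y = a + x * P.eval x := by
      simp only [hQ_def, Polynomial.eval_mul, Polynomial.eval_C, Polynomial.eval_comp,
        Polynomial.eval_add, Polynomial.eval_sub, Polynomial.eval_X, ← hx]
      field_simp
    refine le_of_mul_le_mul_left ?_ hq
    calc q * |(|y - cos τ| - Q.eval y)| = |(|x - a| - a - x * P.eval x)| := by
          rw [hkink, sub_sub, ← hQ_eval, ← mul_sub, abs_mul, abs_of_pos hq]
      _ ≤ ε * x := herr x hxI
      _ = q * (ε * (b / q + 1 - y)) := by
          rw [hx]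
          field_simp
  have key := sin_le_of_weighted_abs_sub_cos_sub_eval_le hj hjM hQ hτ hε transferred
  calc q * sin τ ≤ q * (162 * π * M * (ε * (b / q + 2 * (1 - cos τ)))) := by gcongr
    _ = 162 * π * M * (ε * (2 * a - b)) := by
        rw [← ha]
        field_simp
        ring
    _ ≤ 162 * π * M * (ε * (2 * a)) := by
        gcongr
        linarith
    _ = 324 * π * M * (ε * a) := by ring

lemma one_sub_cos_le_mul_sin (h₀ : 0 ≤ τ) (h₁ : τ ≤ π / 2) : 1 - cos τ ≤ τ * sin τ := by
  have hcos := cos_nonneg_of_mem_Icc (x := τ) ⟨by linarith, h₁⟩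
  have hsin := sin_nonneg_of_nonneg_of_le_pi h₀ (by linarith [pi_pos])
  calc 1 - cos τ ≤ (1 - cos τ) * (1 + cos τ) := by nlinarith [cos_le_one τ]
    _ = sin τ * sin τ := by linear_combination -(sin_sq_add_cos_sq τ)
    _ ≤ τ * sin τ := by gcongr; exact sin_le h₀

lemma mul_one_sub_cos_le_of_mul_sin_le {q C : ℝ} (h₀ : 0 ≤ τ) (h₁ : τ ≤ π / 2) (hq : 0 ≤ q)
    (h : q * sin τ ≤ C) : q * (1 - cos τ) ≤ τ * C := by
  calc q * (1 - cos τ) ≤ q * (τ * sin τ) := by gcongr; exact one_sub_cos_le_mul_sin h₀ h₁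
    _ = τ * (q * sin τ) := by ring
    _ ≤ τ * C := by gcongr

lemma one_div_two_mul_sq_le_one_sub_cos {j : ℝ} (hj : 1 ≤ j) :
    1 / (2 * j ^ 2) ≤ 1 - cos (π / (2 * j)) := by
  have hπ := pi_pos
  have hle : π / (2 * j) ≤ π := div_le_self hπ.le (by linarith)
  have h := cos_le_one_sub_mul_cos_sq (x := π / (2 * j))
    (by rwa [abs_of_nonneg (by positivity)])
  have : 2 / π ^ 2 * (π / (2 * j)) ^ 2 = 1 / (2 * j ^ 2) := by
    field_simp
  linarith

lemma mul_div_le_of_abs_kink_sub_le {P : Polynomial ℝ} {a ρ ε : ℝ} (hj : 1 ≤ j) (hjM : j ≤ M)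
    (hP : P.natDegree ≤ M) (ha : 0 < a) (haj : a * j ^ 2 ≤ 1) (hρ : 0 < ρ) (hρ₁ : ρ ≤ 1)
    (hε : 0 ≤ ε)
    (herr : ∀ x ∈ Set.Icc ((1 - ρ) * a) (a + 4 * ρ), |(|x - a| - a - x * P.eval x)| ≤ ε * x) :
    ρ * j / (1620 * M) ≤ ε := by
  obtain ⟨τ, hτ⟩ : ∃ τ : ℝ, τ = π / (2 * j) := ⟨_, rfl⟩
  have hπ := pi_pos
  have hjR : (1 : ℝ) ≤ j := by exact_mod_cast hj
  have hM : (0 : ℝ) < M := by exact_mod_cast hj.trans hjM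
  have hcos : 1 / (2 * (j : ℝ) ^ 2) ≤ 1 - cos τ := hτ ▸ one_div_two_mul_sq_le_one_sub_cos hjR
  have hcos₀ : 0 < 1 - cos τ := lt_of_lt_of_le (by positivity) hcos
  obtain ⟨q, hq_def⟩ : ∃ q : ℝ, q = ρ * a / (1 - cos τ) := ⟨_, rfl⟩
  have hq_mul : q * (1 - cos τ) = ρ * a := by rw [hq_def, div_mul_cancel₀ _ hcos₀.ne']
  have hq : 0 < q := by rw [hq_def]; positivity
  have hq_le : q ≤ 2 * ρ := by
    calc q ≤ ρ * a / (1 / (2 * (j : ℝ) ^ 2)) := by rw [hq_def]; gcongr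
      _ = 2 * ρ * (a * j ^ 2) := by field_simp
      _ ≤ 2 * ρ := mul_le_of_le_one_right (by positivity) haj
  have key := mul_sin_le_of_abs_kink_sub_le hj hjM hP hτ (b := (1 - ρ) * a)
    (mul_nonneg (by linarith) ha.le) hq (by rw [hq_mul]; ring) hε
    fun x hx => herr x ⟨hx.1, hx.2.trans (by nlinarith)⟩
  have hτ_le : τ ≤ π / 2 := by
    rw [hτ]
    exact div_le_div_of_nonneg_left hπ.le two_pos (by linarith)
  have at_kink := mul_one_sub_cos_le_of_mul_sin_le (by rw [hτ]; positivity) hτ_le hq.le key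
  have scaled : ρ * a * j ≤ 162 * π ^ 2 * M * (ε * a) := by
    calc ρ * a * j ≤ τ * (324 * π * M * (ε * a)) * j := by rw [← hq_mul]; gcongr
      _ = 162 * π ^ 2 * M * (ε * a) := by
          rw [hτ]
          field_simp
          ring
  have hπ_sq : π ^ 2 ≤ 10 := by nlinarith [pi_lt_d2]
  rw [div_le_iff₀ (by positivity)]
  refine le_of_mul_le_mul_right ?_ ha
  calc ρ * j * a ≤ 162 * π ^ 2 * M * (ε * a) := by linarith
    _ ≤ 162 * 10 * M * (ε * a) := by gcongr
    _ = ε * (1620 * M) * a := by ring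

end LowerBound

lemma abs_kink_sub_mul_eval_le_iSup_mul {D a : ℝ} (P : Polynomial ℝ) (hD : 0 < D) (ha : 0 < a)
    {x : ℝ} (hx : x ∈ Set.Icc (a / D) 1) :
    |(|x - a| - a - x * P.eval x)| ≤
      (⨆ x : Set.Icc (a / D) (1 : ℝ), |(|(x : ℝ) - a| - a) / (x : ℝ) - P.eval (x : ℝ)|) * x := by
  have hpos (x : Set.Icc (a / D) (1 : ℝ)) : 0 < (x : ℝ) := (div_pos ha hD).trans_le x.2.1
  have hbdd : BddAbove (Set.range fun x : Set.Icc (a / D) (1 : ℝ) =>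
      |(|(x : ℝ) - a| - a) / (x : ℝ) - P.eval (x : ℝ)|) := by
    refine (isCompact_range ?_).bddAbove
    fun_prop (disch := exact fun x => (hpos x).ne')
  have hx₀ : 0 < x := hpos ⟨x, hx⟩
  calc |(|x - a| - a - x * P.eval x)| = |(|x - a| - a) / x - P.eval x| * x := by
        rw [← abs_of_pos hx₀, ← abs_mul, abs_of_pos hx₀, sub_mul, div_mul_cancel₀ _ hx₀.ne',
          mul_comm x]
    _ ≤ _ := mul_le_mul_of_nonneg_right (le_ciSup hbdd ⟨x, hx⟩) hx₀.le

lemma exists_nat_near_one_div_sqrt {a : ℝ} (ha : 0 < a) (ha₁ : a ≤ 1) :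
    ∃ j : ℕ, 1 ≤ j ∧ j * √a ≤ 1 ∧ 1 ≤ 2 * (j * √a) := by
  have hs : 0 < √a := sqrt_pos.2 ha
  have hle : (1 : ℝ) ≤ 1 / √a := (one_le_div hs).2 (sqrt_le_one.2 ha₁)
  have hj : 1 ≤ ⌊1 / √a⌋₊ := Nat.le_floor (by exact_mod_cast hle)
  have hjR : (1 : ℝ) ≤ ⌊1 / √a⌋₊ := by exact_mod_cast hj
  refine ⟨⌊1 / √a⌋₊, hj, (le_div_iff₀ hs).1 (Nat.floor_le (by positivity)), ?_⟩
  have := (div_lt_iff₀ hs).1 (Nat.lt_floor_add_one (1 / √a))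
  nlinarith

lemma one_div_max_one_mul_le {L j s : ℝ} (hs : 0 < s) (hjs : j * s ≤ 1)
    (hjs' : 1 ≤ 2 * (j * s)) : 1 / max 1 (L * s) ≤ 2 * j / max L j := by
  have hj : 0 < j := pos_of_mul_pos_left (by linarith) hs.le
  have hmax : max L j * s ≤ max 1 (L * s) := by
    rw [max_mul_of_nonneg _ _ hs.le, max_comm]
    exact max_le_max_right _ hjs
  calc 1 / max 1 (L * s) ≤ 1 / (max L j * s) := by gcongr
    _ ≤ 2 * (j * s) / (max L j * s) := by gcongr
    _ = 2 * j / max L j := by field_simp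

lemma one_le_mul_sqrt_of_one_div_sq_le {L a : ℝ} (hL : 0 < L) (h : 1 / L ^ 2 ≤ a) :
    1 ≤ L * √a := by
  rw [← div_le_iff₀' hL]
  exact le_sqrt_of_sq_le (by rwa [one_div_pow])

lemma mul_sqrt_le_one_of_lt_one_div_sq {L a : ℝ} (hL : 0 < L) (h : a < 1 / L ^ 2) :
    L * √a ≤ 1 := by
  rw [← le_div_iff₀' hL]
  exact sqrt_le_iff.2 ⟨by positivity, by rw [one_div_pow]; exact h.le⟩

end KinkApprox

open KinkApprox in
theorem approx_lower_bound_fxa_general {D A : ℝ} (hD : 1 < D) (hA : A < 1) :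
    ∃ c : ℝ, 0 < c ∧ ∀ L : ℕ, ∀ a : ℝ, 0 < a → a ≤ A →
      ∀ P : Polynomial ℝ, P.natDegree ≤ L → c / max 1 (L * √a) ≤
        ⨆ x : Set.Icc (a / D) (1 : ℝ), |(|(x : ℝ) - a| - a) / (x : ℝ) - P.eval (x : ℝ)| := by
  obtain ⟨ρ, hρ_def⟩ : ∃ ρ : ℝ, ρ = min (1 - 1 / D) ((1 - A) / 4) := ⟨_, rfl⟩
  have hD_inv : 1 / D < 1 := (div_lt_one (by linarith)).2 hD
  have hρ : 0 < ρ := by rw [hρ_def]; exact lt_min (by linarith) (by linarith)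
  have hρD : ρ ≤ 1 - 1 / D := hρ_def ▸ min_le_left _ _
  have hρA : ρ ≤ (1 - A) / 4 := hρ_def ▸ min_le_right _ _
  refine ⟨ρ / 3240, by positivity, fun L a ha haA P hP => ?_⟩
  obtain ⟨j, hj, hja, hja'⟩ := exists_nat_near_one_div_sqrt ha (haA.trans hA.le)
  have haj : a * j ^ 2 ≤ 1 := by
    calc a * j ^ 2 = (j * √a) ^ 2 := by rw [mul_pow, sq_sqrt ha.le]; ring
      _ ≤ 1 := pow_le_one₀ (by positivity) hja
  have bound := mul_div_le_of_abs_kink_sub_le (ε := ⨆ x : Set.Icc (a / D) (1 : ℝ),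
      |(|(x : ℝ) - a| - a) / (x : ℝ) - P.eval (x : ℝ)|) hj (le_max_right L j)
    (hP.trans (le_max_left L j)) ha haj hρ (by linarith) (Real.iSup_nonneg fun _ => abs_nonneg _)
    fun x hx => abs_kink_sub_mul_eval_le_iSup_mul P (by linarith) ha
      ⟨le_trans (by rw [div_eq_mul_one_div, mul_comm]; gcongr; linarith) hx.1,
        hx.2.trans (by linarith)⟩
  have scale := one_div_max_one_mul_le (L := L) (sqrt_pos.2 ha) hja hja'
  calc ρ / 3240 / max 1 (L * √a) = ρ / 3240 * (1 / max 1 (L * √a)) := by ring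
    _ ≤ ρ / 3240 * (2 * j / max (L : ℝ) j) := by gcongr
    _ = ρ * j / (1620 * (max L j : ℕ)) := by
        rw [Nat.cast_max]
        ring
    _ ≤ _ := bound

/-- lower bound on the best polynomial approximation error
`E_L[f(·;a); [a/D, 1]]` of `f(x;a) = (|x−a|−a)/x`. Since `E_L` is an infimum over
polynomials of degree at most `L`, a lower bound on it is expressed as the same lower
bound on the uniform error of every such polynomial. -/
theorem approx_lower_bound_fxa :
    ∃ D c : ℝ, 1 < D ∧ 0 < c ∧
      ∀ L : ℕ, 1 ≤ L → ∀ a : ℝ, 0 < a → a ≤ 1 / 2 →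
        ∀ P : Polynomial ℝ, P.natDegree ≤ L →
          ((1 / (L : ℝ) ^ 2 ≤ a →
            c / (L * Real.sqrt a) ≤
              ⨆ x : Set.Icc (a / D) (1 : ℝ),
                |(|(x : ℝ) - a| - a) / (x : ℝ) - P.eval (x : ℝ)|) ∧
          (a < 1 / (L : ℝ) ^ 2 →
            c ≤ ⨆ x : Set.Icc (a / D) (1 : ℝ),
                |(|(x : ℝ) - a| - a) / (x : ℝ) - P.eval (x : ℝ)|)) := by
  obtain ⟨c, hc, bound⟩ := approx_lower_bound_fxa_general one_lt_two one_half_lt_one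
  refine ⟨2, c, one_lt_two, hc, fun L hL a ha ha' P hP => ⟨fun hLa => ?_, fun hLa => ?_⟩⟩
  · simpa only [max_eq_right (KinkApprox.one_le_mul_sqrt_of_one_div_sq_le (by positivity) hLa)]
      using bound L a ha ha' P hP
  · simpa only [max_eq_left (KinkApprox.mul_sqrt_le_one_of_lt_one_div_sq (by positivity) hLa),
      div_one] using bound L a ha ha' P hP
end

section
/- Let a > 0 and 0 ≤ M ≤ a, let L be a nonnegative integer, and let U₀, U₁ be random variables supported on [a − M, a + M] with E[U₀^j] = E[U₁^j] for all 0 ≤ j ≤ L. For i = 0,1, let F_i be the distribution on the nonnegative integers of X, where conditionally on λ ~ U_i one has X ~ Poisson(λ) (i.e., F_i is the Poisson mixture with mixing distribution U_i). If L + 1 ≥ (2eM)²/a, then the total variation distance satisfies V(F₀, F₁) ≤ 2·( eM/√(a(L+1)) )^{L+1}. -/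
open scoped BigOperators
open MeasureTheory

/-!
Over a reference rate `a`, the pairing `∑ₖ pₓ(k) p_y(k) / pₐ(k)` of Poisson mass functions equals
`exp ((x - a) (y - a) / a) = ∑ⱼ (x - a)ʲ (y - a)ʲ / (j! aʲ)`. Integrating both expansions against
the signed measure `U₀ - U₁` in each variable gives the identity
`∑ₖ (F₀(k) - F₁(k))² / pₐ(k) = ∑ⱼ (E (U₀ - a)ʲ - E (U₁ - a)ʲ)² / (j! aʲ)`.
Matching moments remove the terms with `j ≤ L`, so the right-hand side is at most `4` times the tail
from `n = L + 1` of the exponential series at `M² / a`. Writing `M² / a = t n`, a tail with `t ≤ 1`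
is at most `tⁿ eⁿ`, and the Cauchy–Schwarz inequality then bounds the total variation distance by
`(e M² / (a n)) ^ (n / 2)`. When `t > 1` this quantity exceeds `1`, so the bound is trivial.
-/

/-! ### Exponential series and weighted sums -/

section Series

variable {ι : Type*}

theorem hasSum_pow_div_factorial (x : ℝ) :
    HasSum (fun k : ℕ => x ^ k / k.factorial) (Real.exp x) := by
  rw [Real.exp_eq_exp_ℝ]
  exact NormedSpace.expSeries_div_hasSum_exp x

theorem hasSum_pow_mul_pow_div_factorial_mul_pow (x y a : ℝ) :
    HasSum (fun k : ℕ => x ^ k * y ^ k / (k.factorial * a ^ k)) (Real.exp (x * y / a)) := by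
  convert! hasSum_pow_div_factorial (x * y / a) using 2 with k
  rw [div_pow, mul_pow, div_div, mul_comm (a ^ k)]

theorem tsum_nat_add_mul_pow_div_factorial_le {t y : ℝ} (ht₀ : 0 ≤ t) (ht₁ : t ≤ 1) (hy : 0 ≤ y)
    (n : ℕ) :
    ∑' j : ℕ, (t * y) ^ (j + n) / (j + n).factorial ≤ t ^ n * Real.exp y := by
  have hexp := hasSum_pow_div_factorial y
  have hshift : Summable fun j : ℕ => y ^ (j + n) / (j + n).factorial :=
    (summable_nat_add_iff n).2 hexp.summable
  have hterm (j : ℕ) : (t * y) ^ (j + n) / (j + n).factorial ≤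
      t ^ n * (y ^ (j + n) / (j + n).factorial) := by
    rw [mul_pow, mul_div_assoc]
    gcongr ?_ * _
    exact pow_le_pow_of_le_one ht₀ ht₁ (Nat.le_add_left n j)
  calc ∑' j : ℕ, (t * y) ^ (j + n) / (j + n).factorial
      ≤ ∑' j : ℕ, t ^ n * (y ^ (j + n) / (j + n).factorial) :=
        ((summable_nat_add_iff n).2 (hasSum_pow_div_factorial (t * y)).summable).tsum_le_tsum
          hterm (hshift.mul_left _)
    _ = t ^ n * ∑' j : ℕ, y ^ (j + n) / (j + n).factorial := tsum_mul_left
    _ ≤ t ^ n * Real.exp y := by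
        gcongr
        rw [← hexp.tsum_eq, ← hexp.summable.sum_add_tsum_nat_add n]
        exact le_add_of_nonneg_left (Finset.sum_nonneg fun k _ => by positivity)

theorem tsum_abs_le_sqrt_mul_of_hasSum {d p : ι → ℝ} {P J : ℝ} (hp : ∀ k, 0 < p k)
    (hP : HasSum p P) (hJ : HasSum (fun k => d k ^ 2 / p k) J) :
    ∑' k, |d k| ≤ √(P * J) := by
  have hterm (k : ι) : 0 ≤ d k ^ 2 / p k := div_nonneg (sq_nonneg _) (hp k).le
  refine Real.tsum_le_of_sum_le (fun k => abs_nonneg (d k)) fun s => Real.le_sqrt_of_sq_le ?_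
  calc (∑ k ∈ s, |d k|) ^ 2
      ≤ (∑ k ∈ s, p k) * ∑ k ∈ s, d k ^ 2 / p k :=
        Finset.sum_sq_le_sum_mul_sum_of_sq_le_mul s (fun k _ => (hp k).le) (fun k _ => hterm k)
          fun k _ => by rw [sq_abs, mul_div_cancel₀ _ (hp k).ne']
    _ ≤ P * J := by
        gcongr
        · exact Finset.sum_nonneg fun k _ => hterm k
        · exact hP.nonneg fun k => (hp k).le
        · exact sum_le_hasSum s (fun k _ => (hp k).le) hP
        · exact sum_le_hasSum s (fun k _ => hterm k) hJ

theorem tsum_abs_sub_le_add {p q : ι → ℝ} {P Q : ℝ} (hp₀ : ∀ k, 0 ≤ p k) (hq₀ : ∀ k, 0 ≤ q k)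
    (hp : HasSum p P) (hq : HasSum q Q) : ∑' k, |p k - q k| ≤ P + Q := by
  have hterm (k : ι) : |p k - q k| ≤ p k + q k := by
    simpa only [abs_of_nonneg (hp₀ k), abs_of_nonneg (hq₀ k)] using abs_sub (p k) (q k)
  have hsum := hp.add hq
  calc ∑' k, |p k - q k| ≤ ∑' k, (p k + q k) :=
        (Summable.of_nonneg_of_le (fun k => abs_nonneg _) hterm hsum.summable).tsum_le_tsum
          hterm hsum.summable
    _ = P + Q := hsum.tsum_eq

end Series

/-! ### Kernel expansions and mean discrepancy -/

section Kernel

variable {ι X Y : Type*} [Countable ι] [MeasurableSpace X] [MeasurableSpace Y]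

theorem hasSum_integral_mul_integral {μ : Measure X} {ν : Measure Y} [IsFiniteMeasure μ]
    [IsFiniteMeasure ν] {K : X → Y → ℝ} {f : ι → X → ℝ} {g : ι → Y → ℝ} {b c : ι → ℝ}
    (hf : ∀ k, AEStronglyMeasurable (f k) μ) (hg : ∀ k, AEStronglyMeasurable (g k) ν)
    (hfb : ∀ k, ∀ᵐ x ∂μ, |f k x| ≤ b k) (hgc : ∀ k, ∀ᵐ y ∂ν, |g k y| ≤ c k)
    (hbc : Summable fun k => b k * c k) (hK : ∀ x y, HasSum (fun k => f k x * g k y) (K x y)) :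
    HasSum (fun k => (∫ x, f k x ∂μ) * ∫ y, g k y ∂ν) (∫ z, K z.1 z.2 ∂μ.prod ν) := by
  have hbound (k : ι) : ∀ᵐ z ∂μ.prod ν, ‖f k z.1 * g k z.2‖ ≤ b k * c k := by
    filter_upwards [Measure.quasiMeasurePreserving_fst.ae (hfb k),
      Measure.quasiMeasurePreserving_snd.ae (hgc k)] with z hz₁ hz₂
    rw [Real.norm_eq_abs, abs_mul]
    exact mul_le_mul hz₁ hz₂ (abs_nonneg _) ((abs_nonneg _).trans hz₁)
  simpa only [Pi.mul_apply, integral_prod_mul] using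
    hasSum_integral_of_dominated_convergence (fun k _ => b k * c k)
      (fun k => (hf k).comp_fst.mul (hg k).comp_snd) hbound
      (Filter.Eventually.of_forall fun _ => hbc) (integrable_const _)
      (Filter.Eventually.of_forall fun z => hK z.1 z.2)

/-- The squared maximum mean discrepancy between `μ` and `ν` for the kernel `K`, that is, the
integral of `K` against `μ - ν` in each variable. Since `K` need not be symmetric, the two cross
terms are kept apart. -/
noncomputable def mmdSq (K : X → X → ℝ) (μ ν : Measure X) : ℝ :=
  ∫ z, K z.1 z.2 ∂μ.prod μ - ∫ z, K z.1 z.2 ∂μ.prod ν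
    - ∫ z, K z.1 z.2 ∂ν.prod μ + ∫ z, K z.1 z.2 ∂ν.prod ν

theorem hasSum_sq_integral_sub_div_mmdSq {μ ν : Measure X} [IsFiniteMeasure μ] [IsFiniteMeasure ν]
    {K : X → X → ℝ} {f : ι → X → ℝ} {b w : ι → ℝ} (hw : ∀ k, 0 ≤ w k)
    (hfμ : ∀ k, AEStronglyMeasurable (f k) μ) (hfν : ∀ k, AEStronglyMeasurable (f k) ν)
    (hbμ : ∀ k, ∀ᵐ x ∂μ, |f k x| ≤ b k) (hbν : ∀ k, ∀ᵐ x ∂ν, |f k x| ≤ b k)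
    (hb : Summable fun k => b k * b k / w k)
    (hK : ∀ x y, HasSum (fun k => f k x * f k y / w k) (K x y)) :
    HasSum (fun k => (∫ x, f k x ∂μ - ∫ x, f k x ∂ν) ^ 2 / w k) (mmdSq K μ ν) := by
  have expand (ρ σ : Measure X) [IsFiniteMeasure ρ] [IsFiniteMeasure σ]
      (hfρ : ∀ k, AEStronglyMeasurable (f k) ρ) (hfσ : ∀ k, AEStronglyMeasurable (f k) σ)
      (hbρ : ∀ k, ∀ᵐ x ∂ρ, |f k x| ≤ b k) (hbσ : ∀ k, ∀ᵐ x ∂σ, |f k x| ≤ b k) :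
      HasSum (fun k => (∫ x, f k x ∂ρ) * (∫ x, f k x ∂σ) / w k)
        (∫ z, K z.1 z.2 ∂ρ.prod σ) := by
    have hbw (k : ι) : ∀ᵐ x ∂σ, |f k x / w k| ≤ b k / w k := by
      filter_upwards [hbσ k] with x hx
      rw [abs_div, abs_of_nonneg (hw k)]
      exact div_le_div_of_nonneg_right hx (hw k)
    simpa only [integral_div, mul_div_assoc] using
      hasSum_integral_mul_integral (g := fun k x => f k x / w k) hfρ
        (fun k => (hfσ k).div₀ aestronglyMeasurable_const) hbρ hbw
        (by simpa only [mul_div_assoc] using hb) (by simpa only [mul_div_assoc] using hK)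
  convert! (((expand μ μ hfμ hfμ hbμ hbμ).sub (expand μ ν hfμ hfν hbμ hbν)).sub
    (expand ν μ hfν hfμ hbν hbμ)).add (expand ν ν hfν hfν hbν hbν) using 2 with k
  ring

end Kernel

/-! ### Moments -/

section Moments

variable {μ ν : Measure ℝ}

theorem integrable_pow_of_ae_abs_sub_le [IsFiniteMeasure μ] {a M : ℝ}
    (h : ∀ᵐ x ∂μ, |x - a| ≤ M) (j : ℕ) : Integrable (fun x => x ^ j) μ := by
  refine .of_bound (C := (M + |a|) ^ j) (by fun_prop) ?_
  filter_upwards [h] with x hx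
  rw [Real.norm_eq_abs, abs_pow]
  gcongr
  linarith [abs_sub_abs_le_abs_sub x a]

theorem integral_eval_eq_of_integral_pow_eq {n : ℕ}
    (hμ : ∀ j ≤ n, Integrable (fun x => x ^ j) μ) (hν : ∀ j ≤ n, Integrable (fun x => x ^ j) ν)
    (h : ∀ j ≤ n, ∫ x, x ^ j ∂μ = ∫ x, x ^ j ∂ν) {p : Polynomial ℝ} (hp : p.natDegree ≤ n) :
    ∫ x, p.eval x ∂μ = ∫ x, p.eval x ∂ν := by
  have hle {j : ℕ} (hj : j ∈ Finset.range (n + 1)) : j ≤ n := Finset.mem_range_succ_iff.1 hj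
  simp_rw [Polynomial.eval_eq_sum_range' (Nat.lt_succ_of_le hp)]
  rw [integral_finsetSum _ fun j hj => (hμ j (hle hj)).const_mul _,
    integral_finsetSum _ fun j hj => (hν j (hle hj)).const_mul _]
  refine Finset.sum_congr rfl fun j hj => ?_
  rw [integral_const_mul, integral_const_mul, h j (hle hj)]

theorem integral_sub_pow_eq_of_integral_pow_eq {n : ℕ}
    (hμ : ∀ j ≤ n, Integrable (fun x => x ^ j) μ) (hν : ∀ j ≤ n, Integrable (fun x => x ^ j) ν)
    (h : ∀ j ≤ n, ∫ x, x ^ j ∂μ = ∫ x, x ^ j ∂ν) (a : ℝ) {j : ℕ} (hj : j ≤ n) :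
    ∫ x, (x - a) ^ j ∂μ = ∫ x, (x - a) ^ j ∂ν := by
  have hdeg : ((Polynomial.X - Polynomial.C a) ^ j).natDegree ≤ n := by simpa using hj
  simpa using integral_eval_eq_of_integral_pow_eq hμ hν h hdeg

theorem abs_integral_sub_pow_le [IsProbabilityMeasure μ] {a M : ℝ} (h : ∀ᵐ x ∂μ, |x - a| ≤ M)
    (j : ℕ) : |∫ x, (x - a) ^ j ∂μ| ≤ M ^ j := by
  have hbound : ∀ᵐ x ∂μ, ‖(x - a) ^ j‖ ≤ M ^ j := by
    filter_upwards [h] with x hx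
    rw [Real.norm_eq_abs, abs_pow]
    gcongr
  simpa using norm_integral_le_of_norm_le_const hbound

theorem sq_integral_sub_pow_sub_le [IsProbabilityMeasure μ] [IsProbabilityMeasure ν] {a M : ℝ}
    (hμ : ∀ᵐ x ∂μ, |x - a| ≤ M) (hν : ∀ᵐ x ∂ν, |x - a| ≤ M) (j : ℕ) :
    (∫ x, (x - a) ^ j ∂μ - ∫ x, (x - a) ^ j ∂ν) ^ 2 ≤ 4 * (M ^ 2) ^ j := by
  have hμj := abs_le.1 (abs_integral_sub_pow_le hμ j)
  have hνj := abs_le.1 (abs_integral_sub_pow_le hν j)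
  calc (∫ x, (x - a) ^ j ∂μ - ∫ x, (x - a) ^ j ∂ν) ^ 2 ≤ (2 * M ^ j) ^ 2 :=
        sq_le_sq' (by linarith) (by linarith)
    _ = 4 * (M ^ 2) ^ j := by ring

end Moments

/-! ### Poisson mixtures -/

section Poisson

variable {μ ν : Measure ℝ} {a M R : ℝ}

theorem poissonPMF_pos (ha : 0 < a) (k : ℕ) : 0 < poissonPMF a k := by
  unfold poissonPMF
  positivity

theorem poissonPMF_nonneg_s15 (ha : 0 ≤ a) (k : ℕ) : 0 ≤ poissonPMF a k := by
  unfold poissonPMF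
  positivity

theorem continuous_poissonPMF (k : ℕ) : Continuous fun lam => poissonPMF lam k := by
  unfold poissonPMF
  fun_prop

theorem hasSum_poissonPMF (lam : ℝ) : HasSum (poissonPMF lam) 1 := by
  convert! (hasSum_pow_div_factorial lam).mul_left (Real.exp (-lam)) using 1
  · exact funext fun k => mul_div_assoc _ _ _
  · rw [← Real.exp_add, neg_add_cancel, Real.exp_zero]

theorem poissonPMF_le_exp_mul_poissonPMF {lam : ℝ} (h₀ : 0 ≤ lam) (hR : lam ≤ R) (k : ℕ) :
    poissonPMF lam k ≤ Real.exp R * poissonPMF R k := by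
  calc poissonPMF lam k ≤ 1 * R ^ k / k.factorial := by
        unfold poissonPMF
        gcongr
        exact Real.exp_le_one_iff.2 (neg_nonpos.2 h₀)
    _ = Real.exp R * poissonPMF R k := by
        rw [poissonPMF, mul_div_assoc, mul_div_assoc, ← mul_assoc, ← Real.exp_add, add_neg_cancel,
          Real.exp_zero]

/-- The kernel `exp ((x - a) (y - a) / a)` on Poisson rates, whose squared maximum mean discrepancy
is the chi-squared discrepancy of Poisson mixtures relative to Poisson(`a`). -/
noncomputable def poissonChiSqKernel (a x y : ℝ) : ℝ :=
  Real.exp ((x - a) * (y - a) / a)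

theorem hasSum_poissonPMF_mul_poissonPMF_div (ha : a ≠ 0) (x y : ℝ) :
    HasSum (fun k => poissonPMF x k * poissonPMF y k / poissonPMF a k)
      (poissonChiSqKernel a x y) := by
  convert! (hasSum_pow_div_factorial (x * y / a)).mul_left (Real.exp (a - x - y)) using 1
  · funext k
    unfold poissonPMF
    rw [div_pow, mul_pow, sub_sub, sub_eq_add_neg, neg_add, Real.exp_add, Real.exp_add,
      Real.exp_neg a]
    field_simp
  · rw [poissonChiSqKernel, ← Real.exp_add]
    congr 1
    field_simp
    ring

/-- The mass function of the Poisson mixture with mixing distribution `μ`. -/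
noncomputable def poissonMixture (μ : Measure ℝ) (k : ℕ) : ℝ :=
  ∫ lam, poissonPMF lam k ∂μ

theorem poissonMixture_nonneg (hμ : ∀ᵐ x ∂μ, 0 ≤ x) (k : ℕ) : 0 ≤ poissonMixture μ k :=
  integral_nonneg_of_ae (hμ.mono fun _ hx => poissonPMF_nonneg_s15 hx k)

theorem hasSum_poissonMixture [IsProbabilityMeasure μ] (hμ : ∀ᵐ x ∂μ, 0 ≤ x) :
    HasSum (poissonMixture μ) 1 := by
  have hsum : HasSum (poissonMixture μ) (∫ _, 1 ∂μ) :=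
    hasSum_integral_of_dominated_convergence (fun k x => poissonPMF x k)
      (fun k => (continuous_poissonPMF k).aestronglyMeasurable)
      (fun k => hμ.mono fun x hx => (Real.norm_of_nonneg (poissonPMF_nonneg_s15 hx k)).le)
      (Filter.Eventually.of_forall fun x => (hasSum_poissonPMF x).summable)
      (by simp only [fun x => (hasSum_poissonPMF x).tsum_eq, integrable_const])
      (Filter.Eventually.of_forall hasSum_poissonPMF)
  simpa using hsum

theorem half_tsum_abs_poissonMixture_sub_le_one [IsProbabilityMeasure μ] [IsProbabilityMeasure ν]
    (hμ : ∀ᵐ x ∂μ, 0 ≤ x) (hν : ∀ᵐ x ∂ν, 0 ≤ x) :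
    (1 / 2) * ∑' k, |poissonMixture μ k - poissonMixture ν k| ≤ 1 := by
  linarith [tsum_abs_sub_le_add (poissonMixture_nonneg hμ) (poissonMixture_nonneg hν)
    (hasSum_poissonMixture hμ) (hasSum_poissonMixture hν)]

theorem hasSum_sq_poissonMixture_sub_div [IsFiniteMeasure μ] [IsFiniteMeasure ν] (ha : 0 < a)
    (hμ : ∀ᵐ x ∂μ, x ∈ Set.Icc 0 R) (hν : ∀ᵐ x ∂ν, x ∈ Set.Icc 0 R) :
    HasSum (fun k => (poissonMixture μ k - poissonMixture ν k) ^ 2 / poissonPMF a k)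
      (mmdSq (poissonChiSqKernel a) μ ν) := by
  have hbound (k : ℕ) {x : ℝ} (hx : x ∈ Set.Icc 0 R) :
      |poissonPMF x k| ≤ Real.exp R * poissonPMF R k := by
    rw [abs_of_nonneg (poissonPMF_nonneg_s15 hx.1 k)]
    exact poissonPMF_le_exp_mul_poissonPMF hx.1 hx.2 k
  have hmeas (k : ℕ) (ρ : Measure ℝ) : AEStronglyMeasurable (fun x => poissonPMF x k) ρ :=
    (continuous_poissonPMF k).aestronglyMeasurable
  refine hasSum_sq_integral_sub_div_mmdSq (f := fun k x => poissonPMF x k)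
    (fun k => (poissonPMF_pos ha k).le) (fun k => hmeas k μ) (fun k => hmeas k ν)
    (fun k => hμ.mono fun _ => hbound k) (fun k => hν.mono fun _ => hbound k) ?_
    (hasSum_poissonPMF_mul_poissonPMF_div ha.ne')
  convert! (hasSum_poissonPMF_mul_poissonPMF_div ha.ne' R R).summable.mul_left (Real.exp R ^ 2)
    using 2 with k
  ring

theorem hasSum_sq_integral_sub_pow_sub_div [IsFiniteMeasure μ] [IsFiniteMeasure ν] (ha : 0 ≤ a)
    (hμ : ∀ᵐ x ∂μ, |x - a| ≤ M) (hν : ∀ᵐ x ∂ν, |x - a| ≤ M) :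
    HasSum (fun j : ℕ =>
        (∫ x, (x - a) ^ j ∂μ - ∫ x, (x - a) ^ j ∂ν) ^ 2 / (j.factorial * a ^ j))
      (mmdSq (poissonChiSqKernel a) μ ν) := by
  have hbound (j : ℕ) {x : ℝ} (hx : |x - a| ≤ M) : |(x - a) ^ j| ≤ M ^ j := by
    rw [abs_pow]
    gcongr
  exact hasSum_sq_integral_sub_div_mmdSq (fun j => by positivity) (fun j => by fun_prop)
    (fun j => by fun_prop) (fun j => hμ.mono fun _ => hbound j) (fun j => hν.mono fun _ => hbound j)
    (hasSum_pow_mul_pow_div_factorial_mul_pow M M a).summable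
    fun x y => hasSum_pow_mul_pow_div_factorial_mul_pow (x - a) (y - a) a

theorem mmdSq_poissonChiSqKernel_le_tsum [IsProbabilityMeasure μ] [IsProbabilityMeasure ν]
    (ha : 0 ≤ a) (hμ : ∀ᵐ x ∂μ, |x - a| ≤ M) (hν : ∀ᵐ x ∂ν, |x - a| ≤ M) {n : ℕ}
    (hmom : ∀ j < n, ∫ x, (x - a) ^ j ∂μ = ∫ x, (x - a) ^ j ∂ν) :
    mmdSq (poissonChiSqKernel a) μ ν ≤
      4 * ∑' j : ℕ, (M ^ 2 / a) ^ (j + n) / (j + n).factorial := by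
  have hexpand := hasSum_sq_integral_sub_pow_sub_div ha hμ hν
  have hhead : ∑ j ∈ Finset.range n,
      (∫ x, (x - a) ^ j ∂μ - ∫ x, (x - a) ^ j ∂ν) ^ 2 / (j.factorial * a ^ j) = 0 :=
    Finset.sum_eq_zero fun j hj => by simp [hmom j (Finset.mem_range.1 hj)]
  have htail := (hasSum_nat_add_iff' n).2 hexpand
  rw [hhead, sub_zero] at htail
  have hexp : Summable fun j : ℕ => (M ^ 2 / a) ^ (j + n) / (j + n).factorial :=
    (summable_nat_add_iff n).2 (hasSum_pow_div_factorial (M ^ 2 / a)).summable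
  refine hasSum_le (fun j => ?_) htail (hexp.hasSum.mul_left 4)
  calc (∫ x, (x - a) ^ (j + n) ∂μ - ∫ x, (x - a) ^ (j + n) ∂ν) ^ 2 /
        ((j + n).factorial * a ^ (j + n))
      ≤ 4 * (M ^ 2) ^ (j + n) / ((j + n).factorial * a ^ (j + n)) := by
        gcongr
        exact sq_integral_sub_pow_sub_le hμ hν (j + n)
    _ = 4 * ((M ^ 2 / a) ^ (j + n) / (j + n).factorial) := by
        rw [div_pow, div_div, mul_comm (a ^ (j + n)), mul_div_assoc]

theorem mmdSq_poissonChiSqKernel_le_pow [IsProbabilityMeasure μ] [IsProbabilityMeasure ν]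
    (ha : 0 ≤ a) (hμ : ∀ᵐ x ∂μ, |x - a| ≤ M) (hν : ∀ᵐ x ∂ν, |x - a| ≤ M) {n : ℕ} (hn : n ≠ 0)
    (hmom : ∀ j < n, ∫ x, (x - a) ^ j ∂μ = ∫ x, (x - a) ^ j ∂ν) (hMn : M ^ 2 / a ≤ n) :
    mmdSq (poissonChiSqKernel a) μ ν ≤ 4 * (Real.exp 1 * (M ^ 2 / a) / n) ^ n := by
  have hn₀ : (0 : ℝ) < n := by positivity
  calc mmdSq (poissonChiSqKernel a) μ ν
      ≤ 4 * ∑' j : ℕ, (M ^ 2 / a / n * n) ^ (j + n) / (j + n).factorial := by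
        rw [div_mul_cancel₀ _ hn₀.ne']
        exact mmdSq_poissonChiSqKernel_le_tsum ha hμ hν hmom
    _ ≤ 4 * ((M ^ 2 / a / n) ^ n * Real.exp n) := by
        gcongr
        exact tsum_nat_add_mul_pow_div_factorial_le (by positivity) ((div_le_one hn₀).2 hMn)
          hn₀.le n
    _ = 4 * (Real.exp 1 * (M ^ 2 / a) / n) ^ n := by
        rw [← Real.exp_one_pow n, ← mul_pow]
        ring

theorem half_tsum_abs_poissonMixture_sub_le_sqrt_mmdSq [IsFiniteMeasure μ] [IsFiniteMeasure ν]
    (ha : 0 < a) (hμ : ∀ᵐ x ∂μ, x ∈ Set.Icc 0 R) (hν : ∀ᵐ x ∂ν, x ∈ Set.Icc 0 R) :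
    (1 / 2) * ∑' k, |poissonMixture μ k - poissonMixture ν k| ≤
      (1 / 2) * √(mmdSq (poissonChiSqKernel a) μ ν) := by
  gcongr
  simpa only [one_mul] using tsum_abs_le_sqrt_mul_of_hasSum (poissonPMF_pos ha)
    (hasSum_poissonPMF a) (hasSum_sq_poissonMixture_sub_div ha hμ hν)

theorem half_tsum_abs_poissonMixture_sub_le_sqrt_pow [IsProbabilityMeasure μ]
    [IsProbabilityMeasure ν] (ha : 0 < a) (hμ₀ : ∀ᵐ x ∂μ, 0 ≤ x) (hν₀ : ∀ᵐ x ∂ν, 0 ≤ x)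
    (hμ : ∀ᵐ x ∂μ, |x - a| ≤ M) (hν : ∀ᵐ x ∂ν, |x - a| ≤ M) {n : ℕ} (hn : n ≠ 0)
    (hmom : ∀ j < n, ∫ x, (x - a) ^ j ∂μ = ∫ x, (x - a) ^ j ∂ν) :
    (1 / 2) * ∑' k, |poissonMixture μ k - poissonMixture ν k| ≤
      √((Real.exp 1 * (M ^ 2 / a) / n) ^ n) := by
  have hn₀ : (0 : ℝ) < n := by positivity
  rcases le_or_gt (M ^ 2 / a) n with hMn | hnM
  · have hrange {ρ : Measure ℝ} (h₀ : ∀ᵐ x ∂ρ, 0 ≤ x) (h : ∀ᵐ x ∂ρ, |x - a| ≤ M) :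
        ∀ᵐ x ∂ρ, x ∈ Set.Icc 0 (a + M) := by
      filter_upwards [h₀, h] with x hx₀ hx
      exact ⟨hx₀, sub_le_iff_le_add'.1 (abs_le.1 hx).2⟩
    calc (1 / 2) * ∑' k, |poissonMixture μ k - poissonMixture ν k|
        ≤ (1 / 2) * √(mmdSq (poissonChiSqKernel a) μ ν) :=
          half_tsum_abs_poissonMixture_sub_le_sqrt_mmdSq ha (hrange hμ₀ hμ) (hrange hν₀ hν)
      _ ≤ (1 / 2) * √(2 ^ 2 * (Real.exp 1 * (M ^ 2 / a) / n) ^ n) := by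
          gcongr
          linarith [mmdSq_poissonChiSqKernel_le_pow ha.le hμ hν hn hmom hMn]
      _ = √((Real.exp 1 * (M ^ 2 / a) / n) ^ n) := by
          rw [Real.sqrt_mul (sq_nonneg _), Real.sqrt_sq zero_le_two]
          ring
  · have hbase : 1 ≤ Real.exp 1 * (M ^ 2 / a) / n := by
      rw [one_le_div hn₀]
      exact hnM.le.trans (le_mul_of_one_le_left (by positivity) (Real.one_le_exp zero_le_one))
    exact (half_tsum_abs_poissonMixture_sub_le_one hμ₀ hν₀).trans
      (Real.one_le_sqrt.2 (one_le_pow₀ hbase))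

end Poisson

theorem poisson_mixture_tv_bound_general {a M : ℝ} (ha : 0 < a) {L : ℕ} {μ₀ μ₁ : Measure ℝ}
    [IsProbabilityMeasure μ₀] [IsProbabilityMeasure μ₁]
    (hnonneg₀ : ∀ᵐ x ∂μ₀, 0 ≤ x) (hnonneg₁ : ∀ᵐ x ∂μ₁, 0 ≤ x)
    (hsupp₀ : ∀ᵐ x ∂μ₀, x ∈ Set.Icc (a - M) (a + M))
    (hsupp₁ : ∀ᵐ x ∂μ₁, x ∈ Set.Icc (a - M) (a + M))
    (hmom : ∀ j ≤ L, ∫ x, x ^ j ∂μ₀ = ∫ x, x ^ j ∂μ₁) :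
    (1 / 2) * ∑' k, |poissonMixture μ₀ k - poissonMixture μ₁ k| ≤
      (Real.exp (1 / 2) * M / √(a * (L + 1))) ^ (L + 1) := by
  have hdev {x : ℝ} (hx : x ∈ Set.Icc (a - M) (a + M)) : |x - a| ≤ M := by
    rwa [abs_sub_comm, Set.mem_Icc_iff_abs_le]
  have hdev₀ := hsupp₀.mono fun _ => hdev
  have hdev₁ := hsupp₁.mono fun _ => hdev
  have hM : 0 ≤ M := hdev₀.exists.elim fun _ => (abs_nonneg _).trans
  have hcent (j : ℕ) (hj : j < L + 1) : ∫ x, (x - a) ^ j ∂μ₀ = ∫ x, (x - a) ^ j ∂μ₁ :=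
    integral_sub_pow_eq_of_integral_pow_eq (fun i _ => integrable_pow_of_ae_abs_sub_le hdev₀ i)
      (fun i _ => integrable_pow_of_ae_abs_sub_le hdev₁ i) hmom a (Nat.le_of_lt_succ hj)
  have hbase : Real.exp 1 * (M ^ 2 / a) / (L + 1 : ℕ) =
      (Real.exp (1 / 2) * M / √(a * (L + 1))) ^ 2 := by
    rw [div_pow, mul_pow, Real.sq_sqrt (by positivity), ← Real.exp_nat_mul]
    push_cast
    field_simp
  have hbound := half_tsum_abs_poissonMixture_sub_le_sqrt_pow ha hnonneg₀ hnonneg₁ hdev₀ hdev₁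
    L.succ_ne_zero hcent
  rwa [hbase, pow_right_comm, Real.sqrt_sq (by positivity)] at hbound

/-- total variation bound between two Poisson mixtures whose mixing
distributions are supported on `[a-M, a+M]` and share the first `L` moments. -/
theorem poisson_mixture_tv_bound (a M : ℝ) (ha : 0 < a) (hM0 : 0 ≤ M) (hMa : M ≤ a)
    (L : ℕ) (μ₀ μ₁ : Measure ℝ) [IsProbabilityMeasure μ₀] [IsProbabilityMeasure μ₁]
    (hsupp₀ : μ₀ (Set.Icc (a - M) (a + M))ᶜ = 0)
    (hsupp₁ : μ₁ (Set.Icc (a - M) (a + M))ᶜ = 0)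
    (hmom : ∀ j : ℕ, j ≤ L → ∫ x, x ^ j ∂μ₀ = ∫ x, x ^ j ∂μ₁)
    (hL : (2 * Real.exp 1 * M) ^ 2 / a ≤ (L : ℝ) + 1) :
    (1 / 2) * ∑' k : ℕ,
        |(∫ lam, poissonPMF lam k ∂μ₀) - ∫ lam, poissonPMF lam k ∂μ₁| ≤
      2 * (Real.exp 1 * M / Real.sqrt (a * ((L : ℝ) + 1))) ^ (L + 1) := by
  have hnonneg {x : ℝ} (hx : x ∈ Set.Icc (a - M) (a + M)) : 0 ≤ x := (sub_nonneg.2 hMa).trans hx.1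
  calc (1 / 2) * ∑' k : ℕ, |poissonMixture μ₀ k - poissonMixture μ₁ k|
      ≤ (Real.exp (1 / 2) * M / Real.sqrt (a * ((L : ℝ) + 1))) ^ (L + 1) :=
        poisson_mixture_tv_bound_general ha (.mono hsupp₀ fun _ => hnonneg)
          (.mono hsupp₁ fun _ => hnonneg) hsupp₀ hsupp₁ hmom
    _ ≤ (Real.exp 1 * M / Real.sqrt (a * ((L : ℝ) + 1))) ^ (L + 1) := by gcongr; norm_num
    _ ≤ 2 * (Real.exp 1 * M / Real.sqrt (a * ((L : ℝ) + 1))) ^ (L + 1) :=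
        le_mul_of_one_le_left (by positivity) one_le_two
end
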